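/- arXiv:1801.07891 — 3 statements merged into one kernel-verified Lean document; each statement's English description precedes it below -/
import Mathlib

section
/- Let d ≥ 1 and α ∈ (0,1). There exists a constant C ∈ (0,1), depending only on d and α, such that for every open set 𝒬 ⊆ ℝ × ℝ^d × ℝ^d and every g : 𝒬 → ℝ with [g]_{C_ℓ^{2+α}(𝒬)} < ∞, the following holds: at every z₀ = (t₀,x₀,v₀) ∈ 𝒬 the derivative Yg(z₀) := d/ds|_{s=0} g(t₀+s, x₀+s v₀, v₀), the gradient ∇_v g(z₀) and the Hessian D²_v g(z₀) exist, so the kinetic Taylor polynomial T_{z₀}[g] is defined, and moreover C · [g]_{C_{ℓ,0}^{2+α}(𝒬)} ≤ [g]_{C_ℓ^{2+α}(𝒬)} ≤ [g]_{C_{ℓ,0}^{2+α}(𝒬)}. -/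
open Real MeasureTheory
open scoped BigOperators ENNReal

noncomputable section

abbrev E (d : ℕ) := EuclideanSpace ℝ (Fin d)
abbrev Z (d : ℕ) := ℝ × E d × E d

variable {d : ℕ}

/-- The kinetic cylinder `Q_r(z₀)`. -/
def kCyl (r : ℝ) (z₀ : Z d) : Set (Z d) :=
  {z | z₀.1 - r ^ 2 < z.1 ∧ z.1 ≤ z₀.1 ∧
    ‖z.2.1 - z₀.2.1 - (z.1 - z₀.1) • z₀.2.2‖ < r ^ 3 ∧ ‖z.2.2 - z₀.2.2‖ < r}

/-- Partial derivative in the direction `v i`. -/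
def pv (g : Z d → ℝ) (i : Fin d) (z : Z d) : ℝ :=
  deriv (fun s : ℝ => g (z.1, z.2.1, z.2.2 + s • EuclideanSpace.single i (1 : ℝ))) 0

/-- Second partial derivative in `v i`, `v j`. -/
def pvv (g : Z d → ℝ) (i j : Fin d) : Z d → ℝ := pv (pv g j) i

/-- Derivative along the free transport flow:
`Yg(z₀) = d/ds|_{s=0} g(t₀+s, x₀+s v₀, v₀)`. -/
def Yflow (g : Z d → ℝ) (z : Z d) : ℝ :=
  deriv (fun s : ℝ => g (z.1 + s, z.2.1 + s • z.2.2, z.2.2)) 0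

/-- The kinetic Taylor polynomial of `g` at `z₀`, of kinetic degree 2. -/
def kTaylor (g : Z d → ℝ) (z₀ z : Z d) : ℝ :=
  g z₀ + (z.1 - z₀.1) * Yflow g z₀ + (∑ i, pv g i z₀ * (z.2.2 i - z₀.2.2 i))
    + (1 / 2) * ∑ i, ∑ j, pvv g i j z₀ * (z.2.2 i - z₀.2.2 i) * (z.2.2 j - z₀.2.2 j)

/-- Polynomial of kinetic degree at most 2. -/
def kpoly (a b : ℝ) (q : Fin d → ℝ) (M : Matrix (Fin d) (Fin d) ℝ) (z : Z d) : ℝ :=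
  a + b * z.1 + ∑ i, q i * z.2.2 i + (1 / 2) * ∑ i, ∑ j, M i j * z.2.2 i * z.2.2 j

/-- Kinetic Hölder seminorm of order `2 + α` on `Q`, by approximation with polynomials of
kinetic degree at most 2. -/
def kSemi2 (α : ℝ) (Q : Set (Z d)) (g : Z d → ℝ) : ℝ≥0∞ :=
  ⨆ (z₀ ∈ Q) (r : ℝ) (_ : 0 < r) (_ : kCyl r z₀ ⊆ Q),
    (⨅ (a : ℝ) (b : ℝ) (q : Fin d → ℝ) (M : Matrix (Fin d) (Fin d) ℝ),
      ⨆ z ∈ kCyl r z₀, ENNReal.ofReal |g z - kpoly a b q M z|)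
      / ENNReal.ofReal (r ^ (2 + α))

/-- Kinetic Hölder seminorm of order `2 + α` on `Q` defined through the kinetic Taylor
expansion. -/
def kSemiT (α : ℝ) (Q : Set (Z d)) (g : Z d → ℝ) : ℝ≥0∞ :=
  ⨆ (z₀ ∈ Q) (r : ℝ) (_ : 0 < r) (_ : kCyl r z₀ ⊆ Q) (z ∈ kCyl r z₀),
    ENNReal.ofReal (|g z - kTaylor g z₀ z| / r ^ (2 + α))

/-!
A polynomial of kinetic degree at most 2 equals its own kinetic Taylor polynomial, and if it is
bounded by `ε` on `Q_r(z)` then it is at most `6 (S / r)² ε` on the scale `S ≥ r`, in any dimension.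
Hence the approximations of `g` on the cylinders of radius `R 2⁻ᵏ` centred at `z` differ
successively by the terms of a geometric series, and converge to a polynomial which approximates `g`
to order `2 + α` on all the cylinders `Q_r(z)`, `r ≤ R`: the tangent polynomial of `g` at `z`.

The derivatives of `g` at `z₀` exist and are those of its tangent polynomial there. For `∇_v g` this
is immediate from the order of approximation; for `D²_v g`, the gradients of the tangent polynomials
at `z₀` and at `z₀ + (0, 0, w)` differ by `O(|w|^{1+α})`. Since cylinders lie in the past of their
centre, `Yg` requires tangent polynomials centred at later points of the flow line. The tangent
polynomial at `z₀` is therefore `T_{z₀}[g]`, and its order of approximation is the estimate sought.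
-/

section

open Filter Topology Matrix

/-! ### Kinetic cylinders -/

/-- The free transport flow `(t, x, v) ↦ (t + s, x + s v, v)`, along which `Yflow`
differentiates. -/
def freeFlow (s : ℝ) (z : Z d) : Z d := (z.1 + s, z.2.1 + s • z.2.2, z.2.2)

/-- The velocity translation `(t, x, v) ↦ (t, x, v + w)`, along which `pv` differentiates. -/
def velShift (w : E d) (z : Z d) : Z d := (z.1, z.2.1, z.2.2 + w)

@[simp]
lemma freeFlow_zero (z : Z d) : freeFlow 0 z = z := by simp [freeFlow]

@[simp]
lemma velShift_zero (z : Z d) : velShift 0 z = z := by simp [velShift]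

lemma freeFlow_freeFlow (s t : ℝ) (z : Z d) : freeFlow s (freeFlow t z) = freeFlow (t + s) z := by
  simp [freeFlow, add_smul, add_assoc]

lemma velShift_velShift (w w' : E d) (z : Z d) :
    velShift w (velShift w' z) = velShift (w' + w) z := by
  simp [velShift, add_assoc]

lemma tendsto_freeFlow (z : Z d) : Tendsto (fun s : ℝ => freeFlow s z) (𝓝 0) (𝓝 z) :=
  Continuous.tendsto' (by unfold freeFlow; fun_prop) 0 z (freeFlow_zero z)

lemma tendsto_velShift_smul (w : E d) (z : Z d) :
    Tendsto (fun s : ℝ => velShift (s • w) z) (𝓝 0) (𝓝 z) :=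
  Continuous.tendsto' (by unfold velShift; fun_prop) 0 z (by simp)

lemma kCyl_mono {r R : ℝ} (hr : 0 ≤ r) (h : r ≤ R) (z : Z d) : kCyl r z ⊆ kCyl R z := by
  rintro y ⟨ht, ht', hx, hv⟩
  have h2 : r ^ 2 ≤ R ^ 2 := by gcongr
  have h3 : r ^ 3 ≤ R ^ 3 := by gcongr
  exact ⟨by linarith, ht', by linarith, by linarith⟩

lemma freeFlow_mem_kCyl {r s : ℝ} {z : Z d} (hr : 0 < r) (hs : -r ^ 2 < s) (hs' : s ≤ 0) :
    freeFlow s z ∈ kCyl r z := by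
  refine ⟨?_, ?_, ?_, ?_⟩ <;> simp only [freeFlow, add_sub_cancel_left, sub_self, norm_zero]
  · linarith
  · linarith
  · positivity
  · exact hr

lemma velShift_mem_kCyl {r : ℝ} {w : E d} {z : Z d} (hw : ‖w‖ < r) : velShift w z ∈ kCyl r z := by
  have hr : 0 < r := (norm_nonneg w).trans_lt hw
  refine ⟨?_, le_rfl, ?_, ?_⟩ <;> simp [velShift, hr, hw]

lemma self_mem_kCyl {r : ℝ} (hr : 0 < r) (z : Z d) : z ∈ kCyl r z := by
  simpa using velShift_mem_kCyl (w := 0) (z := z) (by simpa using hr)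

lemma norm_smul_single_add_le (i j : Fin d) (s t : ℝ) :
    ‖s • EuclideanSpace.single i (1 : ℝ) + t • EuclideanSpace.single j (1 : ℝ)‖ ≤ |s| + |t| :=
  (norm_add_le _ _).trans (by simp [norm_smul])

lemma exists_eventually_kCyl_subset {Q : Set (Z d)} {z₀ : Z d} (hQ : Q ∈ 𝓝 z₀) :
    ∃ R, 0 < R ∧ ∀ᶠ z in 𝓝 z₀, kCyl R z ⊆ Q := by
  -- `Q_R(z)` is the image of `Q_R(0)` under the Galilean translation by `z`.
  let translate : Z d × Z d → Z d := fun p =>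
    (p.1.1 + p.2.1, p.1.2.1 + p.2.1 • p.1.2.2 + p.2.2.1, p.1.2.2 + p.2.2.2)
  have htranslate : Tendsto translate (𝓝 (z₀, 0)) (𝓝 z₀) :=
    Continuous.tendsto' (by fun_prop) _ _ (by simp [translate])
  have hQ' : ∀ᶠ p in 𝓝 z₀ ×ˢ 𝓝 (0 : Z d), translate p ∈ Q := by
    rw [← nhds_prod_eq]
    exact htranslate hQ
  obtain ⟨U, hU, V, hV, hUV⟩ := eventually_prod_iff.1 hQ'
  obtain ⟨ε, hε, hεV⟩ := Metric.eventually_nhds_iff.1 hV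
  obtain ⟨R, hR, hRε⟩ := exists_between (lt_min one_pos hε)
  obtain ⟨hR1, hRε⟩ := lt_min_iff.1 hRε
  have hR2 : R ^ 2 ≤ R := pow_le_of_le_one hR.le hR1.le two_ne_zero
  have hR3 : R ^ 3 ≤ R := pow_le_of_le_one hR.le hR1.le three_ne_zero
  refine ⟨R, hR, hU.mono fun z hz y hy => ?_⟩
  obtain ⟨ht, ht', hx, hv⟩ := hy
  have hV' : V (y.1 - z.1, y.2.1 - z.2.1 - (y.1 - z.1) • z.2.2, y.2.2 - z.2.2) := by
    refine hεV ?_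
    simp only [dist_zero_right, Prod.norm_def, max_lt_iff, Real.norm_eq_abs, abs_lt]
    exact ⟨⟨by linarith, by linarith⟩, by linarith, by linarith⟩
  simpa [translate] using hUV hz hV'

/-! ### Polynomials of kinetic degree at most 2 -/

lemma kpoly_eq_dotProduct (a b : ℝ) (q : Fin d → ℝ) (M : Matrix (Fin d) (Fin d) ℝ) (z : Z d) :
    kpoly a b q M z
      = a + b * z.1 + q ⬝ᵥ z.2.2.ofLp + 1 / 2 * (z.2.2.ofLp ⬝ᵥ M *ᵥ z.2.2.ofLp) := by
  simp only [kpoly, dotProduct, mulVec, Finset.mul_sum]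
  congr! 4
  ring

lemma kTaylor_eq_dotProduct (g : Z d → ℝ) (z₀ z : Z d) :
    kTaylor g z₀ z
      = g z₀ + (z.1 - z₀.1) * Yflow g z₀ + (fun i => pv g i z₀) ⬝ᵥ (z.2.2 - z₀.2.2).ofLp
        + 1 / 2 * ((z.2.2 - z₀.2.2).ofLp ⬝ᵥ (of fun i j => pvv g i j z₀) *ᵥ
          (z.2.2 - z₀.2.2).ofLp) := by
  simp only [kTaylor, dotProduct, mulVec, Finset.mul_sum, of_apply, PiLp.sub_apply]
  congr! 4
  ring

/-- `kpoly` as a linear map on coefficients. -/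
def kpolyLinear (d : ℕ) :
    (ℝ × ℝ × (Fin d → ℝ) × Matrix (Fin d) (Fin d) ℝ) →ₗ[ℝ] (Z d → ℝ) where
  toFun c := kpoly c.1 c.2.1 c.2.2.1 c.2.2.2
  map_add' c c' := by
    ext z
    simp only [kpoly_eq_dotProduct, Prod.fst_add, Prod.snd_add, Pi.add_apply,
      add_dotProduct, add_mulVec, dotProduct_add]
    ring
  map_smul' k c := by
    ext z
    simp only [kpoly_eq_dotProduct, Prod.smul_fst, Prod.smul_snd, Pi.smul_apply,
      smul_dotProduct, smul_mulVec, dotProduct_smul, smul_eq_mul, RingHom.id_apply]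
    ring

/-- The space of polynomials of kinetic degree at most 2. -/
def kPolySpace (d : ℕ) : Submodule ℝ (Z d → ℝ) := LinearMap.range (kpolyLinear d)

lemma mem_kPolySpace {P : Z d → ℝ} : P ∈ kPolySpace d ↔ ∃ a b q M, kpoly a b q M = P := by
  simp [kPolySpace, kpolyLinear]

lemma kpoly_mem_kPolySpace (a b : ℝ) (q : Fin d → ℝ) (M : Matrix (Fin d) (Fin d) ℝ) :
    kpoly a b q M ∈ kPolySpace d :=
  mem_kPolySpace.2 ⟨a, b, q, M, rfl⟩

lemma isClosed_kPolySpace : IsClosed (kPolySpace d : Set (Z d → ℝ)) :=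
  haveI : FiniteDimensional ℝ (kPolySpace d) :=
    LinearMap.finiteDimensional_range (kpolyLinear d)
  (kPolySpace d).closed_of_finiteDimensional

lemma kpoly_eq_kpoly_add (a b : ℝ) (q : Fin d → ℝ) (M : Matrix (Fin d) (Fin d) ℝ) (z₀ z : Z d) :
    kpoly a b q M z = kpoly a b q M z₀ + (z.1 - z₀.1) * b
      + (q + ((1 / 2 : ℝ) • (M + Mᵀ)) *ᵥ z₀.2.2.ofLp) ⬝ᵥ (z.2.2 - z₀.2.2).ofLp
      + 1 / 2 * ((z.2.2 - z₀.2.2).ofLp ⬝ᵥ M *ᵥ (z.2.2 - z₀.2.2).ofLp) := by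
  obtain ⟨w, hw⟩ : ∃ w, z.2.2 = z₀.2.2 + w := ⟨z.2.2 - z₀.2.2, by abel⟩
  have hcross : (Mᵀ *ᵥ z₀.2.2.ofLp) ⬝ᵥ w.ofLp = z₀.2.2.ofLp ⬝ᵥ M *ᵥ w.ofLp := by
    rw [mulVec_transpose, dotProduct_mulVec]
  have hcomm : (M *ᵥ z₀.2.2.ofLp) ⬝ᵥ w.ofLp = w.ofLp ⬝ᵥ M *ᵥ z₀.2.2.ofLp := dotProduct_comm _ _
  simp only [kpoly_eq_dotProduct, hw, add_sub_cancel_left, WithLp.ofLp_add, dotProduct_add,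
    add_dotProduct, mulVec_add, smul_mulVec, add_mulVec, smul_dotProduct, smul_eq_mul, hcross,
    hcomm]
  ring

lemma kTaylor_mem_kPolySpace (g : Z d → ℝ) (z₀ : Z d) : kTaylor g z₀ ∈ kPolySpace d := by
  set H : Matrix (Fin d) (Fin d) ℝ := of fun i j => pvv g i j z₀
  set q : Fin d → ℝ := (fun i => pv g i z₀) - ((1 / 2 : ℝ) • (H + Hᵀ)) *ᵥ z₀.2.2.ofLp
  have hTaylor : kTaylor g z₀
      = kpoly (g z₀ - kpoly 0 (Yflow g z₀) q H z₀) 0 0 0 + kpoly 0 (Yflow g z₀) q H := by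
    ext z
    rw [Pi.add_apply, kpoly_eq_kpoly_add 0 (Yflow g z₀) q H z₀ z, kTaylor_eq_dotProduct,
      kpoly_eq_dotProduct (g z₀ - _)]
    simp [q, H]
    ring
  exact hTaylor ▸ add_mem (kpoly_mem_kPolySpace _ _ _ _) (kpoly_mem_kPolySpace _ _ _ _)

lemma kpoly_freeFlow (a b : ℝ) (q : Fin d → ℝ) (M : Matrix (Fin d) (Fin d) ℝ) (s : ℝ) (z : Z d) :
    kpoly a b q M (freeFlow s z) = kpoly a b q M z + s * b := by
  rw [kpoly_eq_kpoly_add a b q M z]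
  simp [freeFlow]

lemma kpoly_velShift_single (a b : ℝ) (q : Fin d → ℝ) (M : Matrix (Fin d) (Fin d) ℝ) (i : Fin d)
    (s : ℝ) (z : Z d) :
    kpoly a b q M (velShift (s • EuclideanSpace.single i (1 : ℝ)) z) = kpoly a b q M z
      + s * (q i + (((1 / 2 : ℝ) • (M + Mᵀ)) *ᵥ z.2.2.ofLp) i) + s ^ 2 * (M i i / 2) := by
  rw [kpoly_eq_kpoly_add a b q M z]
  simp [velShift, mulVec_smul]
  ring

lemma hasDerivAt_quadratic_zero (a b c : ℝ) :
    HasDerivAt (fun s : ℝ => a + s * b + s ^ 2 * c) b 0 := by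
  simpa using (((hasDerivAt_id' (0 : ℝ)).mul_const b).const_add a).fun_add
    (((hasDerivAt_id' (0 : ℝ)).fun_pow 2).mul_const c)

lemma hasDerivAt_kpoly_freeFlow (a b : ℝ) (q : Fin d → ℝ) (M : Matrix (Fin d) (Fin d) ℝ)
    (z : Z d) : HasDerivAt (fun s => kpoly a b q M (freeFlow s z)) b 0 := by
  simpa [kpoly_freeFlow] using hasDerivAt_quadratic_zero (kpoly a b q M z) b 0

lemma hasDerivAt_kpoly_velShift (a b : ℝ) (q : Fin d → ℝ) (M : Matrix (Fin d) (Fin d) ℝ)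
    (i : Fin d) (z : Z d) :
    HasDerivAt (fun s : ℝ => kpoly a b q M (velShift (s • EuclideanSpace.single i (1 : ℝ)) z))
      (q i + (((1 / 2 : ℝ) • (M + Mᵀ)) *ᵥ z.2.2.ofLp) i) 0 := by
  simpa only [kpoly_velShift_single] using hasDerivAt_quadratic_zero _ _ _

lemma Yflow_kpoly (a b : ℝ) (q : Fin d → ℝ) (M : Matrix (Fin d) (Fin d) ℝ) (z : Z d) :
    Yflow (kpoly a b q M) z = b :=
  (hasDerivAt_kpoly_freeFlow a b q M z).deriv

lemma pv_kpoly (a b : ℝ) (q : Fin d → ℝ) (M : Matrix (Fin d) (Fin d) ℝ) (i : Fin d) :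
    pv (kpoly a b q M) i = kpoly (q i) 0 (((1 / 2 : ℝ) • (M + Mᵀ)) i) 0 := by
  ext z
  refine (hasDerivAt_kpoly_velShift a b q M i z).deriv.trans ?_
  simp only [kpoly_eq_dotProduct, mulVec, zero_mul, zero_mulVec, dotProduct_zero, mul_zero,
    add_zero]

lemma pvv_kpoly (a b : ℝ) (q : Fin d → ℝ) (M : Matrix (Fin d) (Fin d) ℝ) (i j : Fin d) (z : Z d) :
    pvv (kpoly a b q M) i j z = ((1 / 2 : ℝ) • (M + Mᵀ)) i j := by
  rw [pvv, pv_kpoly, pv_kpoly, kpoly_eq_dotProduct]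
  simp [add_comm, show (0 : Matrix (Fin d) (Fin d) ℝ) i = 0 from rfl]

section

variable {P : Z d → ℝ}

lemma kTaylor_of_mem_kPolySpace (hP : P ∈ kPolySpace d) (z₀ : Z d) : kTaylor P z₀ = P := by
  obtain ⟨a, b, q, M, rfl⟩ := mem_kPolySpace.1 hP
  ext z
  set w := (z.2.2 - z₀.2.2).ofLp with hw
  have hgrad : (fun i => pv (kpoly a b q M) i z₀)
      = q + ((1 / 2 : ℝ) • (M + Mᵀ)) *ᵥ z₀.2.2.ofLp := by
    ext i
    exact (hasDerivAt_kpoly_velShift a b q M i z₀).deriv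
  have hhess : (of fun i j => pvv (kpoly a b q M) i j z₀) = (1 / 2 : ℝ) • (M + Mᵀ) := by
    ext i j
    exact pvv_kpoly a b q M i j z₀
  have hsymm : w ⬝ᵥ Mᵀ *ᵥ w = w ⬝ᵥ M *ᵥ w := by
    rw [mulVec_transpose, dotProduct_comm, dotProduct_mulVec]
  rw [kTaylor_eq_dotProduct, kpoly_eq_kpoly_add a b q M z₀ z, hgrad, hhess, Yflow_kpoly, ← hw]
  simp only [smul_mulVec, add_mulVec, dotProduct_smul, dotProduct_add, smul_eq_mul, hsymm]
  ring

lemma pv_mem_kPolySpace (hP : P ∈ kPolySpace d) (i : Fin d) : pv P i ∈ kPolySpace d := by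
  obtain ⟨a, b, q, M, rfl⟩ := mem_kPolySpace.1 hP
  exact pv_kpoly a b q M i ▸ kpoly_mem_kPolySpace _ _ _ _

lemma hasDerivAt_freeFlow_of_mem_kPolySpace (hP : P ∈ kPolySpace d) (z : Z d) :
    HasDerivAt (fun s => P (freeFlow s z)) (Yflow P z) 0 := by
  obtain ⟨a, b, q, M, rfl⟩ := mem_kPolySpace.1 hP
  exact (hasDerivAt_kpoly_freeFlow a b q M z).differentiableAt.hasDerivAt

lemma hasDerivAt_velShift_of_mem_kPolySpace (hP : P ∈ kPolySpace d) (i : Fin d) (z : Z d) :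
    HasDerivAt (fun s : ℝ => P (velShift (s • EuclideanSpace.single i (1 : ℝ)) z))
      (pv P i z) 0 := by
  obtain ⟨a, b, q, M, rfl⟩ := mem_kPolySpace.1 hP
  exact (hasDerivAt_kpoly_velShift a b q M i z).differentiableAt.hasDerivAt

lemma freeFlow_eq_of_mem_kPolySpace (hP : P ∈ kPolySpace d) (s : ℝ) (z : Z d) :
    P (freeFlow s z) = P z + s * Yflow P z := by
  obtain ⟨a, b, q, M, rfl⟩ := mem_kPolySpace.1 hP
  rw [kpoly_freeFlow, Yflow_kpoly]

lemma velShift_sub_velShift_of_mem_kPolySpace (hP : P ∈ kPolySpace d) (i : Fin d) (s : ℝ)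
    (z : Z d) :
    P (velShift (s • EuclideanSpace.single i (1 : ℝ)) z)
      - P (velShift (-s • EuclideanSpace.single i (1 : ℝ)) z) = 2 * s * pv P i z := by
  obtain ⟨a, b, q, M, rfl⟩ := mem_kPolySpace.1 hP
  have hpv : pv (kpoly a b q M) i z = _ := (hasDerivAt_kpoly_velShift a b q M i z).deriv
  rw [hpv, kpoly_velShift_single, kpoly_velShift_single]
  ring

end

/-! ### Growth of kinetic polynomials and limits of dyadic approximations -/

lemma abs_kpoly_parts_le {a b : ℝ} {q : Fin d → ℝ} {M : Matrix (Fin d) (Fin d) ℝ} {r σ ε : ℝ}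
    {z : Z d} {w : E d} (hε : ∀ y ∈ kCyl r z, |kpoly a b q M y| ≤ ε) (hσ : 0 ≤ σ)
    (hσr : σ < r ^ 2) (hw : ‖w‖ < r) :
    |kpoly a b q M z| ≤ ε ∧ |σ * b| ≤ 2 * ε ∧
      |(q + ((1 / 2 : ℝ) • (M + Mᵀ)) *ᵥ z.2.2.ofLp) ⬝ᵥ w.ofLp| ≤ ε ∧
      |1 / 2 * (w.ofLp ⬝ᵥ M *ᵥ w.ofLp)| ≤ 2 * ε := by
  have hr : 0 < r := (norm_nonneg w).trans_lt hw
  set p := kpoly a b q M z with hp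
  set L := (q + ((1 / 2 : ℝ) • (M + Mᵀ)) *ᵥ z.2.2.ofLp) ⬝ᵥ w.ofLp with hL
  set G := 1 / 2 * (w.ofLp ⬝ᵥ M *ᵥ w.ofLp) with hG
  have hp_le : |p| ≤ ε := hε z (self_mem_kCyl hr z)
  have hflow : |p + -σ * b| ≤ ε := by
    rw [hp, ← kpoly_freeFlow]
    exact hε _ (freeFlow_mem_kCyl hr (by linarith) (by linarith))
  have hplus : |p + L + G| ≤ ε := by
    convert hε _ (velShift_mem_kCyl hw) using 2
    rw [kpoly_eq_kpoly_add a b q M z]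
    simp [velShift, hp, hL, hG]
  have hminus : |p - L + G| ≤ ε := by
    convert hε _ (velShift_mem_kCyl ((norm_neg w).trans_lt hw)) using 2
    rw [kpoly_eq_kpoly_add a b q M z]
    simp [velShift, hp, hL, hG, mulVec_neg, sub_eq_add_neg]
  rw [abs_le] at hp_le hflow hplus hminus
  refine ⟨abs_le.2 hp_le, abs_le.2 ?_, abs_le.2 ?_, abs_le.2 ?_⟩ <;> constructor <;> linarith

lemma abs_le_of_mem_kPolySpace {P : Z d → ℝ} (hP : P ∈ kPolySpace d) {r S ε : ℝ} {z y : Z d}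
    (hr : 0 < r) (hrS : r ≤ S) (hε : ∀ y ∈ kCyl r z, |P y| ≤ ε)
    (ht : |y.1 - z.1| < S ^ 2) (hv : ‖y.2.2 - z.2.2‖ < S) : |P y| ≤ 6 * (S / r) ^ 2 * ε := by
  obtain ⟨a, b, q, M, rfl⟩ := mem_kPolySpace.1 hP
  obtain ⟨c, hc, rfl⟩ : ∃ c, 1 ≤ c ∧ S = c * r :=
    ⟨S / r, (one_le_div hr).2 hrS, (div_mul_cancel₀ S hr.ne').symm⟩
  have hc0 : 0 < c := one_pos.trans_le hc
  obtain ⟨w, hw⟩ : ∃ w, y.2.2 - z.2.2 = c • w :=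
    ⟨c⁻¹ • (y.2.2 - z.2.2), (smul_inv_smul₀ hc0.ne' _).symm⟩
  obtain ⟨τ, hτ⟩ : ∃ τ, y.1 - z.1 = c ^ 2 * τ :=
    ⟨(y.1 - z.1) / c ^ 2, (mul_div_cancel₀ _ (by positivity)).symm⟩
  have hwr : ‖w‖ < r := by
    rw [hw, norm_smul, Real.norm_eq_abs, abs_of_pos hc0] at hv
    exact lt_of_mul_lt_mul_left hv hc0.le
  have hτr : |τ| < r ^ 2 := by
    rw [hτ, abs_mul, abs_of_nonneg (sq_nonneg c), mul_pow] at ht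
    exact lt_of_mul_lt_mul_left ht (by positivity)
  obtain ⟨hp, hB, hL, hG⟩ := abs_kpoly_parts_le hε (abs_nonneg τ) hτr hwr
  rw [abs_mul, abs_abs, ← abs_mul] at hB
  have hε0 : 0 ≤ ε := (abs_nonneg _).trans hp
  have hy : kpoly a b q M y = kpoly a b q M z + c ^ 2 * (τ * b)
      + c * ((q + ((1 / 2 : ℝ) • (M + Mᵀ)) *ᵥ z.2.2.ofLp) ⬝ᵥ w.ofLp)
      + c ^ 2 * (1 / 2 * (w.ofLp ⬝ᵥ M *ᵥ w.ofLp)) := by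
    rw [kpoly_eq_kpoly_add a b q M z, hw, hτ]
    simp only [WithLp.ofLp_smul, dotProduct_smul, smul_dotProduct, mulVec_smul, smul_eq_mul]
    ring
  have hscale : ∀ {n : ℕ} {x δ : ℝ}, |x| ≤ δ → |c ^ n * x| ≤ c ^ n * δ := fun {n x δ} hx => by
    rw [abs_mul, abs_of_pos (pow_pos hc0 n)]
    gcongr
  rw [hy, mul_div_cancel_right₀ c hr.ne']
  calc _ ≤ ε + c ^ 2 * (2 * ε) + c * ε + c ^ 2 * (2 * ε) := by
        refine (abs_add_le _ _).trans (add_le_add ((abs_add_le _ _).trans ?_) (hscale hG))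
        refine add_le_add ((abs_add_le _ _).trans (add_le_add hp (hscale hB))) ?_
        simpa using hscale (n := 1) hL
    _ = (1 + c + 4 * c ^ 2) * ε := by ring
    _ ≤ 6 * c ^ 2 * ε := by gcongr; nlinarith

section

variable {α A R : ℝ} {z : Z d} {P : ℕ → Z d → ℝ}

lemma dyadic_rpow (hR : 0 ≤ R) (j k : ℕ) :
    (R * 2⁻¹ ^ (j + k)) ^ α = (R * 2⁻¹ ^ k) ^ α * (2⁻¹ ^ α) ^ j := by
  rw [add_comm j k, pow_add, ← mul_assoc, Real.mul_rpow (by positivity) (by positivity),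
    Real.rpow_pow_comm (by norm_num)]

lemma abs_sub_succ_le_of_mem_kPolySpace (hR : 0 < R) (hP : ∀ k, P k ∈ kPolySpace d)
    (hA : ∀ k, ∀ y ∈ kCyl (R * 2⁻¹ ^ (k + 1)) z,
      |P k y - P (k + 1) y| ≤ A * (R * 2⁻¹ ^ k) ^ (2 + α))
    {S : ℝ} {y : Z d} (k : ℕ) (hS : R * 2⁻¹ ^ k ≤ S) (ht : |y.1 - z.1| < S ^ 2)
    (hv : ‖y.2.2 - z.2.2‖ < S) (j : ℕ) :
    |P (j + k) y - P (j + 1 + k) y|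
      ≤ 24 * A * S ^ 2 * (R * 2⁻¹ ^ k) ^ α * (2⁻¹ ^ α) ^ j := by
  rw [add_right_comm]
  set ρ := R * 2⁻¹ ^ (j + k) with hρ
  have hρ0 : 0 < ρ := by positivity
  have hρ_succ : R * 2⁻¹ ^ (j + k + 1) = ρ / 2 := by rw [hρ, pow_succ]; ring
  have hρS : ρ / 2 ≤ S := by
    have hpow : (2⁻¹ : ℝ) ^ (j + k) ≤ 2⁻¹ ^ k :=
      pow_le_pow_of_le_one (by norm_num) (by norm_num) (Nat.le_add_left k j)
    linarith [mul_le_mul_of_nonneg_left hpow hR.le]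
  have h := abs_le_of_mem_kPolySpace (sub_mem (hP (j + k)) (hP (j + k + 1))) (half_pos hρ0) hρS
    (fun y hy => hA (j + k) y (hρ_succ ▸ hy)) ht hv
  calc _ ≤ 6 * (S / (ρ / 2)) ^ 2 * (A * ρ ^ (2 + α)) := h
    _ = 24 * A * S ^ 2 * ρ ^ α := by
      rw [Real.rpow_add hρ0, Real.rpow_ofNat]
      field_simp
      ring
    _ = _ := by rw [hρ, dyadic_rpow hR.le]; ring

lemma exists_limit_mem_kPolySpace (hα : 0 < α) (hR : 0 < R) (hP : ∀ k, P k ∈ kPolySpace d)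
    (hA : ∀ k, ∀ y ∈ kCyl (R * 2⁻¹ ^ (k + 1)) z,
      |P k y - P (k + 1) y| ≤ A * (R * 2⁻¹ ^ k) ^ (2 + α)) :
    ∃ P' ∈ kPolySpace d, ∀ k, ∀ y ∈ kCyl (R * 2⁻¹ ^ k) z,
      |P k y - P' y| ≤ 24 / (1 - 2⁻¹ ^ α) * A * (R * 2⁻¹ ^ k) ^ (2 + α) := by
  have hθ : (2⁻¹ : ℝ) ^ α < 1 := Real.rpow_lt_one (by norm_num) (by norm_num) hα
  have hcauchy : ∀ y, CauchySeq fun k => P k y := by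
    intro y
    set S := R + |y.1 - z.1| + ‖y.2.2 - z.2.2‖ + 1
    have ht := abs_nonneg (y.1 - z.1)
    have hv := norm_nonneg (y.2.2 - z.2.2)
    exact cauchySeq_of_le_geometric _ _ hθ
      (abs_sub_succ_le_of_mem_kPolySpace (S := S) hR hP hA 0 (by rw [pow_zero]; linarith)
        (by nlinarith) (by linarith))
  choose P' hP' using fun y => cauchySeq_tendsto_of_complete (hcauchy y)
  refine ⟨P', isClosed_kPolySpace.mem_of_tendsto (tendsto_pi_nhds.2 hP') (.of_forall hP),
    fun k y hy => ?_⟩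
  set ρ := R * 2⁻¹ ^ k with hρ
  have hρ0 : 0 < ρ := by positivity
  obtain ⟨ht, ht', -, hv⟩ := hy
  have htime : |y.1 - z.1| < ρ ^ 2 := abs_lt.2 ⟨by linarith, by linarith [pow_pos hρ0 2]⟩
  have h := dist_le_of_le_geometric_of_tendsto₀ _ _ hθ
    (abs_sub_succ_le_of_mem_kPolySpace hR hP hA k le_rfl htime hv)
    ((hP' y).comp (tendsto_add_atTop_nat k))
  simp only [Function.comp_apply, Nat.zero_add, Real.dist_eq, ← hρ] at h
  refine h.trans_eq ?_
  rw [Real.rpow_add hρ0, Real.rpow_ofNat]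
  ring

end

/-! ### Tangent polynomials -/

/-- `P` approximates `g` to kinetic order `2 + α` at `z₀`, on all cylinders of radius at most `R`
centred at `z₀`. -/
def KTangent (α K R : ℝ) (z₀ : Z d) (g P : Z d → ℝ) : Prop :=
  ∀ r, 0 < r → r ≤ R → ∀ z ∈ kCyl r z₀, |g z - P z| ≤ K * r ^ (2 + α)

/-- The constant by which `kSemi2` controls `kSemiT`. The second factor sums the geometric series
of the differences of dyadic approximations; the first pays for rounding a radius up to a dyadic
one. -/
def kConst (α : ℝ) : ℝ := 2 ^ (2 + α) * (1 + 48 / (1 - 2⁻¹ ^ α))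

lemma one_lt_kConst {α : ℝ} (hα : 0 < α) : 1 < kConst α := by
  have hθ : (2⁻¹ : ℝ) ^ α < 1 := Real.rpow_lt_one (by norm_num) (by norm_num) hα
  have h2 : (1 : ℝ) < 2 ^ (2 + α) := Real.one_lt_rpow (by norm_num) (by linarith)
  have h48 : 0 < 48 / (1 - (2⁻¹ : ℝ) ^ α) := div_pos (by norm_num) (sub_pos.2 hθ)
  exact one_lt_mul_of_lt_of_le h2 (by linarith)

lemma exists_dyadic_near {r R : ℝ} (hr : 0 < r) (hrR : r ≤ R) :
    ∃ k : ℕ, r ≤ R * 2⁻¹ ^ k ∧ R * 2⁻¹ ^ k ≤ 2 * r := by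
  have hR : 0 < R := hr.trans_le hrR
  obtain ⟨k, hk, hk'⟩ := exists_nat_pow_near_of_lt_one (div_pos hr hR) ((div_le_one hR).2 hrR)
    (y := (2⁻¹ : ℝ)) (by norm_num) (by norm_num)
  rw [div_le_iff₀' hR] at hk'
  rw [lt_div_iff₀' hR, pow_succ] at hk
  exact ⟨k, hk', by linarith⟩

/-- `g` is approximable in `Q` by polynomials of kinetic degree at most 2 with constant `N`: up to
a strict inequality, this says that the seminorm `kSemi2 α Q g` is at most `N`. -/
def KPolyApprox (α N : ℝ) (Q : Set (Z d)) (g : Z d → ℝ) : Prop :=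
  ∀ z r, 0 < r → kCyl r z ⊆ Q →
    ∃ P ∈ kPolySpace d, ∀ y ∈ kCyl r z, |g y - P y| ≤ N * r ^ (2 + α)

section

variable {α N R : ℝ} {Q : Set (Z d)} {z₀ : Z d} {g : Z d → ℝ}

lemma abs_sub_le_of_abs_sub_le_half {P P' : Z d → ℝ} {ρ : ℝ} (hα : 0 < α) (hρ : 0 < ρ)
    (hP : ∀ y ∈ kCyl ρ z₀, |g y - P y| ≤ N * ρ ^ (2 + α))
    (hP' : ∀ y ∈ kCyl (ρ / 2) z₀, |g y - P' y| ≤ N * (ρ / 2) ^ (2 + α)) :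
    ∀ y ∈ kCyl (ρ / 2) z₀, |P y - P' y| ≤ 2 * N * ρ ^ (2 + α) := by
  intro y hy
  have hN : 0 ≤ N := nonneg_of_mul_nonneg_left
    ((abs_nonneg _).trans (hP z₀ (self_mem_kCyl hρ z₀))) (by positivity)
  calc |P y - P' y| ≤ |g y - P y| + |g y - P' y| := by
        rw [abs_sub_comm (g y) (P y)]; exact abs_sub_le _ _ _
    _ ≤ N * ρ ^ (2 + α) + N * (ρ / 2) ^ (2 + α) :=
        add_le_add (hP y (kCyl_mono (half_pos hρ).le (half_le_self hρ.le) z₀ hy)) (hP' y hy)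
    _ ≤ N * ρ ^ (2 + α) + N * ρ ^ (2 + α) := by
        gcongr
        exact half_le_self hρ.le
    _ = _ := by ring

lemma KPolyApprox.exists_kTangent (hα : 0 < α) (hR : 0 < R) (hQ : kCyl R z₀ ⊆ Q)
    (hg : KPolyApprox α N Q g) : ∃ P ∈ kPolySpace d, KTangent α (kConst α * N) R z₀ g P := by
  set ρ : ℕ → ℝ := fun k => R * 2⁻¹ ^ k
  have hρ0 : ∀ k, 0 < ρ k := fun k => by positivity
  have hρR : ∀ k, ρ k ≤ R := fun k =>
    mul_le_of_le_one_right hR.le (pow_le_one₀ (by norm_num) (by norm_num))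
  have hρ_succ : ∀ k, ρ (k + 1) = ρ k / 2 := fun k => by simp only [ρ, pow_succ]; ring
  choose P hP hPg using fun k => hg z₀ (ρ k) (hρ0 k) ((kCyl_mono (hρ0 k).le (hρR k) z₀).trans hQ)
  obtain ⟨P', hP', hlim⟩ := exists_limit_mem_kPolySpace hα hR hP fun k => by
    have hsucc := hPg (k + 1)
    rw [hρ_succ] at hsucc
    rw [show R * 2⁻¹ ^ (k + 1) = ρ k / 2 from hρ_succ k]
    exact abs_sub_le_of_abs_sub_le_half hα (hρ0 k) (hPg k) hsucc
  refine ⟨P', hP', fun r hr hrR z hz => ?_⟩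
  obtain ⟨k, hrk, hkr⟩ := exists_dyadic_near hr hrR
  have hz' : z ∈ kCyl (ρ k) z₀ := kCyl_mono hr.le hrk z₀ hz
  have hN : 0 ≤ N := nonneg_of_mul_nonneg_left ((abs_nonneg _).trans (hPg k z hz'))
    (Real.rpow_pos_of_pos (hρ0 k) _)
  have hθ : (2⁻¹ : ℝ) ^ α < 1 := Real.rpow_lt_one (by norm_num) (by norm_num) hα
  have hC : 0 ≤ 48 / (1 - (2⁻¹ : ℝ) ^ α) := div_nonneg (by norm_num) (sub_nonneg.2 hθ.le)
  calc |g z - P' z| ≤ |g z - P k z| + |P k z - P' z| := abs_sub_le _ _ _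
    _ ≤ N * ρ k ^ (2 + α) + 24 / (1 - 2⁻¹ ^ α) * (2 * N) * ρ k ^ (2 + α) :=
        add_le_add (hPg k z hz') (hlim k z hz')
    _ = (1 + 48 / (1 - 2⁻¹ ^ α)) * N * ρ k ^ (2 + α) := by ring
    _ ≤ (1 + 48 / (1 - 2⁻¹ ^ α)) * N * (2 * r) ^ (2 + α) :=
        mul_le_mul_of_nonneg_left (Real.rpow_le_rpow (hρ0 k).le hkr (by linarith))
          (mul_nonneg (add_nonneg zero_le_one hC) hN)
    _ = kConst α * N * r ^ (2 + α) := by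
        rw [Real.mul_rpow (by norm_num) hr.le, kConst]; ring

end

/-! ### Derivatives at a point with a tangent polynomial -/

lemma hasDerivAt_of_abs_sub_le_rpow {f p : ℝ → ℝ} {a C γ : ℝ} (hγ : 1 < γ)
    (hp : HasDerivAt p a 0) (h0 : f 0 = p 0)
    (hfp : ∀ᶠ s in 𝓝[≠] 0, |f s - p s| ≤ C * |s| ^ γ) : HasDerivAt f a 0 := by
  have hlim : Tendsto (fun s : ℝ => |s| ^ (γ - 1)) (𝓝 0) (𝓝 0) := by
    have hcont : Continuous fun s : ℝ => |s| ^ (γ - 1) :=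
      continuous_abs.rpow_const fun _ => Or.inr (by linarith)
    exact hcont.tendsto' 0 0 (by simp [Real.zero_rpow (sub_pos.2 hγ).ne'])
  have hdiff : HasDerivAt (fun s => f s - p s) 0 0 := by
    rw [hasDerivAt_iff_tendsto_slope_zero]
    refine squeeze_zero_norm' ?_
      (by simpa using (hlim.mono_left nhdsWithin_le_nhds).const_mul C)
    filter_upwards [hfp, self_mem_nhdsWithin] with s hs hs0
    have hs_pos : 0 < |s| := abs_pos.2 hs0
    rw [zero_add, h0, sub_self, sub_zero, norm_smul, norm_inv, Real.norm_eq_abs, Real.norm_eq_abs,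
      inv_mul_le_iff₀ hs_pos, Real.rpow_sub_one hs_pos.ne']
    exact hs.trans_eq (by field_simp)
  simpa using hp.fun_add hdiff

section

variable {α K R : ℝ} {z z₀ : Z d} {g P P' : Z d → ℝ}

lemma KTangent.mono {R' : ℝ} (h : KTangent α K R z g P) (hR : R' ≤ R) : KTangent α K R' z g P :=
  fun r hr hr' => h r hr (hr'.trans hR)

lemma KTangent.apply_self (hα : 0 < α) (hR : 0 < R) (h : KTangent α K R z g P) : g z = P z := by
  have hlim : Tendsto (fun r : ℝ => K * r ^ (2 + α)) (𝓝[>] 0) (𝓝 0) := by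
    have hcont : Continuous fun r : ℝ => K * r ^ (2 + α) :=
      continuous_const.mul (continuous_id.rpow_const fun _ => Or.inr (by linarith))
    exact (hcont.tendsto' 0 0 (by simp [Real.zero_rpow (show 2 + α ≠ 0 by linarith)])).mono_left
      nhdsWithin_le_nhds
  have hle : |g z - P z| ≤ 0 := by
    refine ge_of_tendsto hlim ?_
    filter_upwards [Ioc_mem_nhdsGT hR] with r hr
    exact h r hr.1 hr.2 z (self_mem_kCyl hr.1 z)
  exact sub_eq_zero.1 (abs_nonpos_iff.1 hle)

lemma KTangent.abs_sub_le {z' y : Z d} (h : KTangent α K R z g P)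
    (h' : KTangent α K R z' g P') {r : ℝ} (hr : 0 < r) (hrR : r ≤ R) (hy : y ∈ kCyl r z)
    (hy' : y ∈ kCyl r z') : |P' y - P y| ≤ 2 * (K * r ^ (2 + α)) := by
  have hP := abs_le.1 (h r hr hrR y hy)
  have hP' := abs_le.1 (h' r hr hrR y hy')
  exact abs_le.2 ⟨by linarith, by linarith⟩

lemma KTangent.hasDerivAt_velShift (hα : 0 < α) (hR : 0 < R) (hP : P ∈ kPolySpace d)
    (h : KTangent α K R z g P) (i : Fin d) :
    HasDerivAt (fun s : ℝ => g (velShift (s • EuclideanSpace.single i (1 : ℝ)) z))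
      (pv P i z) 0 := by
  refine hasDerivAt_of_abs_sub_le_rpow (C := K * 2 ^ (2 + α)) (γ := 2 + α) (by linarith)
    (hasDerivAt_velShift_of_mem_kPolySpace hP i z) (by simpa using h.apply_self hα hR) ?_
  have hsmall : ∀ᶠ s : ℝ in 𝓝 0, 2 * |s| < R :=
    (Continuous.tendsto' (by fun_prop) 0 0 (by simp)).eventually_lt_const hR
  filter_upwards [hsmall.filter_mono nhdsWithin_le_nhds, self_mem_nhdsWithin] with s hs hs0
  have hs_pos : 0 < |s| := abs_pos.2 hs0
  have hmem : velShift (s • EuclideanSpace.single i (1 : ℝ)) z ∈ kCyl (2 * |s|) z :=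
    velShift_mem_kCyl (by simpa [norm_smul] using (by linarith : |s| < 2 * |s|))
  refine (h _ (by linarith) hs.le _ hmem).trans_eq ?_
  rw [Real.mul_rpow zero_le_two hs_pos.le, mul_assoc]

lemma KTangent.pv_eq (hα : 0 < α) (hR : 0 < R) (hP : P ∈ kPolySpace d)
    (h : KTangent α K R z g P) (i : Fin d) : pv g i z = pv P i z :=
  (h.hasDerivAt_velShift hα hR hP i).deriv

lemma KTangent.abs_pv_sub_le {i j : Fin d} {s : ℝ} (hs0 : s ≠ 0) (hsR : 3 * |s| ≤ R)
    (hP : P ∈ kPolySpace d) (h : KTangent α K R z g P) (hP' : P' ∈ kPolySpace d)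
    (h' : KTangent α K R (velShift (s • EuclideanSpace.single i (1 : ℝ)) z) g P') :
    |pv P' j (velShift (s • EuclideanSpace.single i (1 : ℝ)) z)
      - pv P j (velShift (s • EuclideanSpace.single i (1 : ℝ)) z)|
      ≤ 2 * K * 3 ^ (2 + α) * |s| ^ (1 + α) := by
  set z' := velShift (s • EuclideanSpace.single i (1 : ℝ)) z with hz'
  have hs_pos : 0 < |s| := abs_pos.2 hs0
  have hclose : ∀ t : ℝ, |t| = |s| →
      |(P' - P) (velShift (t • EuclideanSpace.single j (1 : ℝ)) z')|
        ≤ 2 * (K * (3 * |s|) ^ (2 + α)) := by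
    intro t ht
    refine h.abs_sub_le h' (by linarith) hsR ?_ (velShift_mem_kCyl ?_)
    · rw [hz', velShift_velShift]
      exact velShift_mem_kCyl ((norm_smul_single_add_le i j s t).trans_lt (by linarith))
    · simpa [norm_smul] using (by linarith : |t| < 3 * |s|)
  -- A central difference over `z' ± s eⱼ` recovers the gradient of a quadratic exactly.
  have hcentral := velShift_sub_velShift_of_mem_kPolySpace (sub_mem hP' hP) j s z'
  have hpv : pv (P' - P) j z' = pv P' j z' - pv P j z' :=
    ((hasDerivAt_velShift_of_mem_kPolySpace hP' j z').sub
      (hasDerivAt_velShift_of_mem_kPolySpace hP j z')).deriv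
  have hbound : 2 * |s| * |pv P' j z' - pv P j z'| ≤ 4 * (K * (3 * |s|) ^ (2 + α)) := by
    rw [← hpv, ← abs_two, ← abs_mul, ← abs_mul, ← hcentral, abs_two]
    refine (abs_sub _ _).trans ?_
    linarith [hclose s rfl, hclose (-s) (abs_neg s)]
  refine le_of_mul_le_mul_left (hbound.trans_eq ?_) (by positivity : 0 < 2 * |s|)
  rw [Real.mul_rpow (by norm_num) hs_pos.le, show 2 + α = 1 + α + 1 by ring,
    Real.rpow_add_one hs_pos.ne']
  ring

lemma KTangent.abs_sub_freeFlow_le_of_neg (h : KTangent α K R z g P) {s : ℝ} (hs : s < 0)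
    (hsR : 2 * √|s| ≤ R) :
    |g (freeFlow s z) - P (freeFlow s z)| ≤ K * (2 * √|s|) ^ (2 + α) := by
  have hs_pos : 0 < |s| := abs_pos.2 hs.ne
  refine h _ (by positivity) hsR _ (freeFlow_mem_kCyl (by positivity) ?_ hs.le)
  rw [mul_pow, Real.sq_sqrt hs_pos.le, abs_of_neg hs]
  linarith

-- Cylinders lie in the past of their centre, so the value at a later point is reached from its own
-- tangent, compared with `P` at two earlier points and extrapolated along the flow.
lemma KTangent.abs_sub_freeFlow_le_of_pos (hα : 0 < α) (hP : P ∈ kPolySpace d)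
    (h : KTangent α K R z g P) {s : ℝ} (hs : 0 < s) (hsR : 2 * √|s| ≤ R)
    (hP' : P' ∈ kPolySpace d) (h' : KTangent α K R (freeFlow s z) g P') :
    |g (freeFlow s z) - P (freeFlow s z)| ≤ 6 * (K * (2 * √|s|) ^ (2 + α)) := by
  have hr : 0 < 2 * √|s| := mul_pos two_pos (Real.sqrt_pos.2 (abs_pos.2 hs.ne'))
  have hr_sq : (2 * √|s|) ^ 2 = 4 * s := by
    rw [mul_pow, Real.sq_sqrt (abs_nonneg s), abs_of_pos hs]
    norm_num
  have hpast : ∀ t : ℝ, -s ≤ t → t ≤ 0 →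
      |(P' - P) (freeFlow t z)| ≤ 2 * (K * (2 * √|s|) ^ (2 + α)) := by
    intro t hst ht
    refine h.abs_sub_le h' hr hsR (freeFlow_mem_kCyl hr (by linarith) ht) ?_
    rw [show freeFlow t z = freeFlow (t - s) (freeFlow s z) by simp [freeFlow_freeFlow]]
    exact freeFlow_mem_kCyl hr (by linarith) (by linarith)
  have hflow := freeFlow_eq_of_mem_kPolySpace (sub_mem hP' hP) s z
  have hflow_neg := freeFlow_eq_of_mem_kPolySpace (sub_mem hP' hP) (-s) z
  have hextrapolate : (P' - P) (freeFlow s z) = 2 * (P' - P) z - (P' - P) (freeFlow (-s) z) := by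
    linarith
  have h0 := hpast 0 (by linarith) le_rfl
  have h1 := hpast (-s) le_rfl (by linarith)
  rw [freeFlow_zero] at h0
  rw [h'.apply_self hα (hr.trans_le hsR), ← Pi.sub_apply, hextrapolate]
  rw [abs_le] at h0 h1 ⊢
  exact ⟨by linarith, by linarith⟩

section

variable (hα : 0 < α) (hR : 0 < R) (hP : P ∈ kPolySpace d) (h : KTangent α K R z₀ g P)
  (hT : ∀ᶠ z in 𝓝 z₀, ∃ P ∈ kPolySpace d, KTangent α K R z g P)

include hα hR hP h hT

lemma KTangent.hasDerivAt_pv (i j : Fin d) :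
    HasDerivAt (fun s : ℝ => pv g j (velShift (s • EuclideanSpace.single i (1 : ℝ)) z₀))
      (pvv P i j z₀) 0 := by
  refine hasDerivAt_of_abs_sub_le_rpow (C := 2 * K * 3 ^ (2 + α)) (γ := 1 + α) (by linarith)
    (hasDerivAt_velShift_of_mem_kPolySpace (pv_mem_kPolySpace hP j) i z₀)
    (by simpa using h.pv_eq hα hR hP j) ?_
  have hsmall : ∀ᶠ s : ℝ in 𝓝 0, 3 * |s| < R :=
    (Continuous.tendsto' (by fun_prop) 0 0 (by simp)).eventually_lt_const hR
  have htangent := (tendsto_velShift_smul (EuclideanSpace.single i 1) z₀).eventually hT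
  filter_upwards [hsmall.filter_mono nhdsWithin_le_nhds, self_mem_nhdsWithin,
    htangent.filter_mono nhdsWithin_le_nhds] with s hs hs0 ⟨P', hP', h'⟩
  rw [h'.pv_eq hα hR hP']
  exact h.abs_pv_sub_le hs0 hs.le hP hP' h'

lemma KTangent.hasDerivAt_freeFlow :
    HasDerivAt (fun s => g (freeFlow s z₀)) (Yflow P z₀) 0 := by
  refine hasDerivAt_of_abs_sub_le_rpow (C := 6 * K * 2 ^ (2 + α)) (γ := 1 + α / 2) (by linarith)
    (hasDerivAt_freeFlow_of_mem_kPolySpace hP z₀) (by simpa using h.apply_self hα hR) ?_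
  have hsmall : ∀ᶠ s : ℝ in 𝓝 0, 2 * √|s| < R :=
    (Continuous.tendsto' (by fun_prop) 0 0 (by simp)).eventually_lt_const hR
  have htangent := (tendsto_freeFlow z₀).eventually hT
  filter_upwards [hsmall.filter_mono nhdsWithin_le_nhds, self_mem_nhdsWithin,
    htangent.filter_mono nhdsWithin_le_nhds] with s hs hs0 ⟨P', hP', h'⟩
  have hrpow : (2 * √|s|) ^ (2 + α) = 2 ^ (2 + α) * |s| ^ (1 + α / 2) := by
    rw [Real.mul_rpow zero_le_two (Real.sqrt_nonneg _), Real.sqrt_eq_rpow,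
      ← Real.rpow_mul (abs_nonneg s)]
    ring_nf
  rw [mul_assoc, mul_assoc, ← hrpow]
  rcases lt_or_gt_of_ne hs0 with hs_neg | hs_pos
  · have hle := h.abs_sub_freeFlow_le_of_neg hs_neg hs.le
    linarith [(abs_nonneg _).trans hle]
  · exact h.abs_sub_freeFlow_le_of_pos hα hP hs_pos hs.le hP' h'

lemma KTangent.kTaylor_eq : kTaylor g z₀ = P := by
  ext z
  have hY : Yflow g z₀ = Yflow P z₀ := (h.hasDerivAt_freeFlow hα hR hP hT).deriv
  have hpvv : ∀ i j, pvv g i j z₀ = pvv P i j z₀ := fun i j =>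
    (h.hasDerivAt_pv hα hR hP hT i j).deriv
  rw [← congrFun (kTaylor_of_mem_kPolySpace hP z₀) z]
  simp only [kTaylor, h.apply_self hα hR, hY, h.pv_eq hα hR hP, hpvv]

end

end

/-! ### Comparison of the seminorms -/

section

variable {α N : ℝ} {Q : Set (Z d)} {z₀ : Z d} {g : Z d → ℝ}

lemma kPolyApprox_of_kSemi2_lt (hN : 0 ≤ N) (h : kSemi2 α Q g < ENNReal.ofReal N) :
    KPolyApprox α N Q g := by
  intro z r hr hrQ
  have hrα : 0 < r ^ (2 + α) := Real.rpow_pos_of_pos hr _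
  have hz : (⨅ (a : ℝ) (b : ℝ) (q : Fin d → ℝ) (M : Matrix (Fin d) (Fin d) ℝ),
      ⨆ y ∈ kCyl r z, ENNReal.ofReal |g y - kpoly a b q M y|)
      / ENNReal.ofReal (r ^ (2 + α)) < ENNReal.ofReal N := by
    refine lt_of_le_of_lt ?_ h
    exact le_iSup₂_of_le z (hrQ (self_mem_kCyl hr z)) <| le_iSup_of_le r <|
      le_iSup₂_of_le hr hrQ le_rfl
  rw [ENNReal.div_lt_iff (.inl (by simpa using hrα)) (.inl ENNReal.ofReal_ne_top),
    ← ENNReal.ofReal_mul hN] at hz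
  simp only [iInf_lt_iff] at hz
  obtain ⟨a, b, q, M, hsup⟩ := hz
  refine ⟨kpoly a b q M, kpoly_mem_kPolySpace a b q M, fun y hy => ?_⟩
  exact (ENNReal.ofReal_le_ofReal_iff (by positivity)).1
    ((le_iSup₂ (f := fun y _ => ENNReal.ofReal |g y - kpoly a b q M y|) y hy).trans hsup.le)

lemma KPolyApprox.exists_eventually_kTangent (hα : 0 < α) (hQ : IsOpen Q) (hz₀ : z₀ ∈ Q)
    (hg : KPolyApprox α N Q g) :
    ∃ R, 0 < R ∧ ∀ᶠ z in 𝓝 z₀, ∃ P ∈ kPolySpace d, KTangent α (kConst α * N) R z g P := by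
  obtain ⟨R, hR, hsub⟩ := exists_eventually_kCyl_subset (hQ.mem_nhds hz₀)
  exact ⟨R, hR, hsub.mono fun z hz => hg.exists_kTangent hα hR hz⟩

lemma KPolyApprox.differentiableAt (hα : 0 < α) (hQ : IsOpen Q) (hz₀ : z₀ ∈ Q)
    (hg : KPolyApprox α N Q g) :
    DifferentiableAt ℝ (fun s => g (freeFlow s z₀)) 0 ∧
      (∀ i, DifferentiableAt ℝ
        (fun s : ℝ => g (velShift (s • EuclideanSpace.single i (1 : ℝ)) z₀)) 0) ∧
      ∀ i j, DifferentiableAt ℝ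
        (fun s : ℝ => pv g j (velShift (s • EuclideanSpace.single i (1 : ℝ)) z₀)) 0 := by
  obtain ⟨R, hR, hT⟩ := hg.exists_eventually_kTangent hα hQ hz₀
  obtain ⟨P, hP, h⟩ := hT.self_of_nhds
  exact ⟨(h.hasDerivAt_freeFlow hα hR hP hT).differentiableAt,
    fun i => (h.hasDerivAt_velShift hα hR hP i).differentiableAt,
    fun i j => (h.hasDerivAt_pv hα hR hP hT i j).differentiableAt⟩

lemma KPolyApprox.abs_sub_kTaylor_le (hα : 0 < α) (hQ : IsOpen Q) (hg : KPolyApprox α N Q g)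
    {r : ℝ} (hr : 0 < r) (hrQ : kCyl r z₀ ⊆ Q) {z : Z d} (hz : z ∈ kCyl r z₀) :
    |g z - kTaylor g z₀ z| ≤ kConst α * N * r ^ (2 + α) := by
  obtain ⟨P, hP, h⟩ := hg.exists_kTangent hα hr hrQ
  obtain ⟨R, hR, hT⟩ := hg.exists_eventually_kTangent hα hQ (hrQ (self_mem_kCyl hr z₀))
  have hT' : ∀ᶠ z in 𝓝 z₀, ∃ P ∈ kPolySpace d, KTangent α (kConst α * N) (min r R) z g P :=
    hT.mono fun z ⟨P, hP, h⟩ => ⟨P, hP, h.mono (min_le_right r R)⟩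
  rw [(h.mono (min_le_left r R)).kTaylor_eq hα (lt_min hr hR) hP hT']
  exact h r hr le_rfl z hz

lemma kSemi2_le_kSemiT (α : ℝ) (Q : Set (Z d)) (g : Z d → ℝ) : kSemi2 α Q g ≤ kSemiT α Q g := by
  refine iSup₂_le fun z₀ hz₀ => iSup_le fun r => iSup₂_le fun hr hrQ => ?_
  have hrα : 0 < r ^ (2 + α) := Real.rpow_pos_of_pos hr _
  obtain ⟨a, b, q, M, hTaylor⟩ := mem_kPolySpace.1 (kTaylor_mem_kPolySpace g z₀)
  refine ENNReal.div_le_of_le_mul <| iInf_le_of_le a <| iInf_le_of_le b <| iInf_le_of_le q <|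
    iInf_le_of_le M <| iSup₂_le fun z hz => ?_
  rw [hTaylor, ← ENNReal.div_le_iff (by simpa using hrα) ENNReal.ofReal_ne_top,
    ← ENNReal.ofReal_div_of_pos hrα]
  exact le_iSup₂_of_le z₀ hz₀ <| le_iSup_of_le r <| le_iSup₂_of_le hr hrQ <|
    le_iSup₂_of_le z hz le_rfl

lemma kSemiT_le_mul_kSemi2 (hα : 0 < α) (hQ : IsOpen Q) (g : Z d → ℝ) :
    kSemiT α Q g ≤ ENNReal.ofReal (kConst α) * kSemi2 α Q g := by
  have hK : 0 < kConst α := one_pos.trans (one_lt_kConst hα)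
  rcases eq_or_ne (kSemi2 α Q g) ⊤ with htop | hg
  · simp [htop, ENNReal.mul_top, hK]
  have hlt : ∀ N, (kSemi2 α Q g).toReal < N → kSemiT α Q g ≤ ENNReal.ofReal (kConst α * N) := by
    intro N hN
    have hN0 : 0 ≤ N := ENNReal.toReal_nonneg.trans hN.le
    have happrox := kPolyApprox_of_kSemi2_lt hN0 ((ENNReal.lt_ofReal_iff_toReal_lt hg).2 hN)
    refine iSup₂_le fun z₀ _ => iSup_le fun r => iSup₂_le fun hr hrQ => iSup₂_le fun z hz => ?_
    refine ENNReal.ofReal_le_ofReal ((div_le_iff₀ (by positivity)).2 ?_)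
    exact happrox.abs_sub_kTaylor_le hα hQ hr hrQ hz
  have hlim : Tendsto (fun N => ENNReal.ofReal (kConst α * N)) (𝓝[>] (kSemi2 α Q g).toReal)
      (𝓝 (ENNReal.ofReal (kConst α * (kSemi2 α Q g).toReal))) :=
    ((ENNReal.continuous_ofReal.comp (continuous_const_mul _)).tendsto _).mono_left
      nhdsWithin_le_nhds
  refine (ge_of_tendsto hlim (eventually_mem_nhdsWithin.mono hlt)).trans_eq ?_
  rw [ENNReal.ofReal_mul hK.le, ENNReal.ofReal_toReal hg]

end

end

theorem kinetic_taylor_seminorm_equivalence_general (α : ℝ) (hα : 0 < α) :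
    ∃ C : ℝ, 0 < C ∧ C < 1 ∧
      ∀ (d : ℕ) (Q : Set (Z d)), IsOpen Q → ∀ g : Z d → ℝ, kSemi2 α Q g < ⊤ →
        (∀ z₀ ∈ Q,
          DifferentiableAt ℝ (fun s : ℝ => g (z₀.1 + s, z₀.2.1 + s • z₀.2.2, z₀.2.2)) 0 ∧
          (∀ i, DifferentiableAt ℝ
            (fun s : ℝ => g (z₀.1, z₀.2.1, z₀.2.2 + s • EuclideanSpace.single i (1 : ℝ))) 0) ∧
          (∀ i j, DifferentiableAt ℝ
            (fun s : ℝ => pv g j (z₀.1, z₀.2.1, z₀.2.2 + s • EuclideanSpace.single i (1 : ℝ))) 0)) ∧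
        ENNReal.ofReal C * kSemiT α Q g ≤ kSemi2 α Q g ∧
        kSemi2 α Q g ≤ kSemiT α Q g := by
  have hK : 1 < kConst α := one_lt_kConst hα
  refine ⟨(kConst α)⁻¹, by positivity, inv_lt_one_of_one_lt₀ hK, fun d Q hQ g hg =>
    ⟨fun z₀ hz₀ => ?_, ?_, kSemi2_le_kSemiT α Q g⟩⟩
  · have hlt : kSemi2 α Q g < ENNReal.ofReal ((kSemi2 α Q g).toReal + 1) :=
      (ENNReal.lt_ofReal_iff_toReal_lt hg.ne).2 (lt_add_one _)
    exact (kPolyApprox_of_kSemi2_lt (by positivity) hlt).differentiableAt hα hQ hz₀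
  · rw [ENNReal.ofReal_inv_of_pos (by positivity), mul_comm, ← div_eq_mul_inv]
    exact ENNReal.div_le_of_le_mul' (kSemiT_le_mul_kSemi2 hα hQ g)

/-- If `[g]_{C_ℓ^{2+α}(𝒬)} < ∞` then at every point of `𝒬` the flow derivative, the
velocity gradient and the velocity Hessian of `g` exist, and the seminorms defined via
polynomial approximation and via the kinetic Taylor expansion are comparable:
`C [g]_{C_{ℓ,0}^{2+α}} ≤ [g]_{C_ℓ^{2+α}} ≤ [g]_{C_{ℓ,0}^{2+α}}` with `C ∈ (0,1)`. -/
theorem kinetic_taylor_seminorm_equivalence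
    (d : ℕ) (hd : 1 ≤ d) (α : ℝ) (hα0 : 0 < α) (hα1 : α < 1) :
    ∃ C : ℝ, 0 < C ∧ C < 1 ∧
      ∀ (Q : Set (Z d)), IsOpen Q → ∀ g : Z d → ℝ, kSemi2 α Q g < ⊤ →
        (∀ z₀ ∈ Q,
          DifferentiableAt ℝ (fun s : ℝ => g (z₀.1 + s, z₀.2.1 + s • z₀.2.2, z₀.2.2)) 0 ∧
          (∀ i, DifferentiableAt ℝ
            (fun s : ℝ => g (z₀.1, z₀.2.1, z₀.2.2 + s • EuclideanSpace.single i (1 : ℝ))) 0) ∧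
          (∀ i j, DifferentiableAt ℝ
            (fun s : ℝ => pv g j (z₀.1, z₀.2.1, z₀.2.2 + s • EuclideanSpace.single i (1 : ℝ))) 0)) ∧
        ENNReal.ofReal C * kSemiT α Q g ≤ kSemi2 α Q g ∧
        kSemi2 α Q g ≤ kSemiT α Q g := by
  obtain ⟨C, hC0, hC1, h⟩ := kinetic_taylor_seminorm_equivalence_general α hα0
  exact ⟨C, hC0, hC1, h d⟩
end
end

section
/- Let d ≥ 1. There exists a constant C depending only on d such that the following holds. Let U be an open set containing the closed cylinder [−1,0] × B̄₁ × B̄₁, let S : U → ℝ be continuously differentiable with S, ∂_{x_i} S and ∂_{v_i} S bounded on Q₁ for every i, and let g : U → ℝ be three times continuously differentiable and satisfy (∂_t + v·∇_x) g = Δ_v g + S at every point of U. Then for every i ∈ {1,…,d}: |∂_{x_i} g(0,0,0)| + |∂_{v_i} g(0,0,0)| ≤ C (‖g‖_{L^∞(Q₁)} + ‖S‖_{L^∞(Q₁)} + ‖∂_{x_i} S‖_{L^∞(Q₁)} + ‖∂_{v_i} S‖_{L^∞(Q₁)}). -/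
open Real MeasureTheory
open scoped BigOperators ENNReal

noncomputable section

variable {d : ℕ}

/-- Partial derivative in time. -/
def pt (g : Z d → ℝ) (z : Z d) : ℝ := deriv (fun s => g (s, z.2.1, z.2.2)) z.1

/-- Partial derivative in the direction `x i`. -/
def px (g : Z d → ℝ) (i : Fin d) (z : Z d) : ℝ :=
  deriv (fun s : ℝ => g (z.1, z.2.1 + s • EuclideanSpace.single i (1 : ℝ), z.2.2)) 0

/-- Transport derivative `∂_t g + v ⋅ ∇_x g`. -/
def Yop (g : Z d → ℝ) (z : Z d) : ℝ := pt g z + ∑ i, z.2.2 i * px g i z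

/-- Euclidean norm of the velocity gradient `∇_v g`. -/
def gradvNorm (g : Z d → ℝ) (z : Z d) : ℝ := Real.sqrt (∑ i, (pv g i z) ^ 2)

/-- (Frobenius) norm of the velocity Hessian `D²_v g`. -/
def hessvNorm (g : Z d → ℝ) (z : Z d) : ℝ := Real.sqrt (∑ i, ∑ j, (pvv g i j z) ^ 2)

/-- `g` is `C¹` in `(t,x)` and `C²` in `v` on `Q`, with continuous partial derivatives. -/
structure KinReg (g : Z d → ℝ) (Q : Set (Z d)) : Prop where
  cont : ContinuousOn g Q
  dt : ∀ z ∈ Q, DifferentiableAt ℝ (fun s => g (s, z.2.1, z.2.2)) z.1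
  dx : ∀ z ∈ Q, ∀ i, DifferentiableAt ℝ
    (fun s : ℝ => g (z.1, z.2.1 + s • EuclideanSpace.single i (1 : ℝ), z.2.2)) 0
  dv : ∀ z ∈ Q, ∀ i, DifferentiableAt ℝ
    (fun s : ℝ => g (z.1, z.2.1, z.2.2 + s • EuclideanSpace.single i (1 : ℝ))) 0
  dvv : ∀ z ∈ Q, ∀ i j, DifferentiableAt ℝ
    (fun s : ℝ => pv g j (z.1, z.2.1, z.2.2 + s • EuclideanSpace.single i (1 : ℝ))) 0
  ptc : ContinuousOn (pt g) Q
  pxc : ∀ i, ContinuousOn (px g i) Q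
  pvc : ∀ i, ContinuousOn (pv g i) Q
  pvvc : ∀ i j, ContinuousOn (pvv g i j) Q

/-- Sup norm (in `ℝ≥0∞`) of `h` over the set `Q`. -/
def supAbs (Q : Set (Z d)) (h : Z d → ℝ) : ℝ≥0∞ := ⨆ z ∈ Q, ENNReal.ofReal |h z|

/-- Kinetic Hölder seminorm of exponent `β` on `Q`. -/
def kHolder (β : ℝ) (Q : Set (Z d)) (h : Z d → ℝ) : ℝ≥0∞ :=
  ⨆ (z₀ ∈ Q) (r : ℝ) (_ : 0 < r) (_ : kCyl r z₀ ⊆ Q) (z ∈ kCyl r z₀),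
    ENNReal.ofReal (|h z - h z₀| / r ^ β)

/-- The origin of the kinetic phase space. -/
def zOrigin (d : ℕ) : Z d := ((0 : ℝ), (0 : E d), (0 : E d))

/-
Bernstein's method. With `L = ∂_t + v ⋅ ∇_x - Δ_v` and a cutoff `φ`, apply the maximum principle to
`A g² + (φ ∂_v g)² + 2 ε² φ⁴ ∂_x g ∂_v g + ε³ (φ³ ∂_x g)²`, whose last three terms form a positive
definite quadratic form. Although `L` has no diffusion in `x`, it satisfies `L ∂_v = ∂_v L - ∂_x`,
so `L` applied to the cross term produces `-2 ε² φ⁴ (∂_x g)²`, which absorbs the error terms in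
`∂_x g`; those in `∂_v g` are absorbed by `L (A g²) = 2 A g L g - 2 A |∇_v g|²` for `A` large.
-/

open Filter Topology

section LineDeriv

variable {𝕜 F G : Type*} [NontriviallyNormedField 𝕜] [NormedAddCommGroup F] [NormedSpace 𝕜 F]
  [NormedAddCommGroup G] [NormedSpace 𝕜 G]

lemma lineDeriv_add {f h : F → G} {x v : F} (hf : LineDifferentiableAt 𝕜 f x v)
    (hh : LineDifferentiableAt 𝕜 h x v) :
    lineDeriv 𝕜 (f + h) x v = lineDeriv 𝕜 f x v + lineDeriv 𝕜 h x v :=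
  (HasDerivAt.add hf.hasLineDerivAt hh.hasLineDerivAt).deriv

lemma lineDeriv_mul {f h : F → 𝕜} {x v : F} (hf : LineDifferentiableAt 𝕜 f x v)
    (hh : LineDifferentiableAt 𝕜 h x v) :
    lineDeriv 𝕜 (f * h) x v = lineDeriv 𝕜 f x v * h x + f x * lineDeriv 𝕜 h x v := by
  refine (HasDerivAt.mul hf.hasLineDerivAt hh.hasLineDerivAt).deriv.trans ?_
  simp

lemma lineDeriv_lineDeriv_eq_deriv_deriv (f : F → G) (x v : F) :
    lineDeriv 𝕜 (fun y ↦ lineDeriv 𝕜 f y v) x v = deriv (deriv fun t : 𝕜 ↦ f (x + t • v)) 0 := by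
  have h (s : 𝕜) : lineDeriv 𝕜 f (x + s • v) v = deriv (fun t : 𝕜 ↦ f (x + t • v)) s := by
    simpa only [lineDeriv, add_assoc, add_smul, add_zero] using
      deriv_comp_const_add (fun t : 𝕜 ↦ f (x + t • v)) s 0
  rw [lineDeriv, funext h]

end LineDeriv

section LineDerivContDiff

variable {𝕜 F G : Type*} [RCLike 𝕜] [NormedAddCommGroup F] [NormedSpace 𝕜 F]
  [NormedAddCommGroup G] [NormedSpace 𝕜 G] {f : F → G} {x : F}

lemma eventuallyEq_lineDeriv_fderiv_apply (hf : ContDiffAt 𝕜 1 f x) (v : F → F) :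
    (fun y ↦ lineDeriv 𝕜 f y (v y)) =ᶠ[𝓝 x] fun y ↦ fderiv 𝕜 f y (v y) := by
  filter_upwards [hf.eventually (by simp)] with y hy
  exact (hy.differentiableAt one_ne_zero).lineDeriv_eq_fderiv

lemma contDiffAt_lineDeriv {m n : WithTop ℕ∞} (hf : ContDiffAt 𝕜 n f x) (hmn : m + 1 ≤ n)
    (v : F) :
    ContDiffAt 𝕜 m (fun y ↦ lineDeriv 𝕜 f y v) x :=
  ((hf.fderiv_right hmn).clm_apply contDiffAt_const).congr_of_eventuallyEq
    (eventuallyEq_lineDeriv_fderiv_apply (hf.of_le (le_add_self.trans hmn)) fun _ ↦ v)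

lemma lineDeriv_lineDeriv_eq_fderiv_fderiv (hf : ContDiffAt 𝕜 2 f x) {w : F → F}
    (hw : DifferentiableAt 𝕜 w x) (v : F) :
    lineDeriv 𝕜 (fun y ↦ lineDeriv 𝕜 f y (w y)) x v =
      fderiv 𝕜 (fderiv 𝕜 f) x v (w x) + fderiv 𝕜 f x (fderiv 𝕜 w x v) := by
  have hf' : DifferentiableAt 𝕜 (fderiv 𝕜 f) x :=
    (hf.fderiv_right (m := 1) (by norm_num)).differentiableAt one_ne_zero
  rw [(eventuallyEq_lineDeriv_fderiv_apply (hf.of_le (by norm_num)) w).lineDeriv_eq,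
    (hf'.clm_apply hw).lineDeriv_eq_fderiv, fderiv_clm_apply hf' hw]
  simp [add_comm]

lemma lineDeriv_lineDeriv_comm_of_field (hf : ContDiffAt 𝕜 2 f x) {w : F → F}
    (hw : DifferentiableAt 𝕜 w x) (v : F) :
    lineDeriv 𝕜 (fun y ↦ lineDeriv 𝕜 f y (w y)) x v =
      lineDeriv 𝕜 (fun y ↦ lineDeriv 𝕜 f y v) x (w x) + lineDeriv 𝕜 f x (fderiv 𝕜 w x v) := by
  rw [lineDeriv_lineDeriv_eq_fderiv_fderiv hf hw,
    lineDeriv_lineDeriv_eq_fderiv_fderiv hf (differentiableAt_const v),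
    (hf.isSymmSndFDerivAt (by simp)).eq v (w x),
    (hf.differentiableAt two_ne_zero).lineDeriv_eq_fderiv]
  simp

lemma lineDeriv_comm (hf : ContDiffAt 𝕜 2 f x) (v w : F) :
    lineDeriv 𝕜 (fun y ↦ lineDeriv 𝕜 f y w) x v =
      lineDeriv 𝕜 (fun y ↦ lineDeriv 𝕜 f y v) x w := by
  simpa [lineDeriv_zero] using lineDeriv_lineDeriv_comm_of_field hf (differentiableAt_const w) v

end LineDerivContDiff

lemma deriv_deriv_nonpos_of_isLocalMax {f : ℝ → ℝ} {x : ℝ} (hmax : IsLocalMax f x)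
    (hf : ContinuousAt f x) : deriv (deriv f) x ≤ 0 := by
  by_contra! hpos
  have hmin : IsLocalMin f x := isLocalMin_of_deriv_deriv_pos hpos hmax.deriv_eq_zero hf
  have hconst : f =ᶠ[𝓝 x] fun _ ↦ f x := by
    filter_upwards [hmax, hmin] with s hs hs' using le_antisymm hs hs'
  simp [hconst.deriv.deriv_eq] at hpos

section KolmogorovOperator

/-- The unit vector of phase space in the direction `x i`. -/
def xDir (i : Fin d) : Z d := (0, EuclideanSpace.single i 1, 0)

/-- The unit vector of phase space in the direction `v i`. -/
def vDir (i : Fin d) : Z d := (0, 0, EuclideanSpace.single i 1)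

/-- The vector field `∂_t + v ⋅ ∇_x` of free transport. -/
def transportField (z : Z d) : Z d := (1, z.2.2, 0)

/-- The Kolmogorov operator `∂_t + v ⋅ ∇_x - Δ_v`, whose subsolutions obey a maximum principle. -/
def kolmogorovOp (f : Z d → ℝ) (z : Z d) : ℝ := Yop f z - ∑ i, pvv f i i z

variable {f h : Z d → ℝ} {z : Z d}

lemma px_eq_lineDeriv (f : Z d → ℝ) (i : Fin d) : px f i = fun z ↦ lineDeriv ℝ f z (xDir i) := by
  funext z
  simp [px, lineDeriv, xDir, Prod.add_def]

lemma pv_eq_lineDeriv (f : Z d → ℝ) (i : Fin d) : pv f i = fun z ↦ lineDeriv ℝ f z (vDir i) := by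
  funext z
  simp [pv, lineDeriv, vDir, Prod.add_def]

lemma Yop_eq_lineDeriv (hf : DifferentiableAt ℝ f z) :
    Yop f z = lineDeriv ℝ f z (transportField z) := by
  have hpt : pt f z = fderiv ℝ f z (1, 0, 0) :=
    (hf.hasFDerivAt.comp_hasDerivAt z.1 ((hasDerivAt_id _).prodMk
      ((hasDerivAt_const _ z.2.1).prodMk (hasDerivAt_const _ z.2.2)))).deriv
  have hpx (i : Fin d) : px f i z = fderiv ℝ f z (xDir i) := by
    simp only [px_eq_lineDeriv, hf.lineDeriv_eq_fderiv]
  have hv : z.2.2 = ∑ i, z.2.2 i • EuclideanSpace.single i (1 : ℝ) := by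
    ext j
    simp [Pi.single_apply]
  have hfield : transportField z = (1, 0, 0) + ∑ i, z.2.2 i • xDir i := by
    refine Prod.ext ?_ (Prod.ext ?_ ?_)
    · simp [transportField, xDir, Prod.fst_sum]
    · simpa [transportField, xDir, Prod.fst_sum, Prod.snd_sum] using hv
    · simp [transportField, xDir, Prod.snd_sum]
  simp only [Yop, hpt, hpx, hf.lineDeriv_eq_fderiv, hfield, map_add, map_sum, map_smul, smul_eq_mul]

lemma px_congr (hfh : f =ᶠ[𝓝 z] h) (i : Fin d) : px f i z = px h i z := by
  simp only [px_eq_lineDeriv, hfh.lineDeriv_eq]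

lemma pv_congr (hfh : f =ᶠ[𝓝 z] h) (i : Fin d) : pv f i z = pv h i z := by
  simp only [pv_eq_lineDeriv, hfh.lineDeriv_eq]

lemma contDiffAt_pv {m n : WithTop ℕ∞} (hf : ContDiffAt ℝ n f z) (hmn : m + 1 ≤ n) (i : Fin d) :
    ContDiffAt ℝ m (pv f i) z := by
  simpa only [pv_eq_lineDeriv] using contDiffAt_lineDeriv hf hmn (vDir i)

lemma contDiffAt_px {m n : WithTop ℕ∞} (hf : ContDiffAt ℝ n f z) (hmn : m + 1 ≤ n) (i : Fin d) :
    ContDiffAt ℝ m (px f i) z := by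
  simpa only [px_eq_lineDeriv] using contDiffAt_lineDeriv hf hmn (xDir i)

lemma pv_add (hf : DifferentiableAt ℝ f z) (hh : DifferentiableAt ℝ h z) (i : Fin d) :
    pv (f + h) i z = pv f i z + pv h i z := by
  simpa only [pv_eq_lineDeriv] using lineDeriv_add hf.lineDifferentiableAt hh.lineDifferentiableAt

lemma pv_mul (hf : DifferentiableAt ℝ f z) (hh : DifferentiableAt ℝ h z) (i : Fin d) :
    pv (f * h) i z = pv f i z * h z + f z * pv h i z := by
  simpa only [pv_eq_lineDeriv] using lineDeriv_mul hf.lineDifferentiableAt hh.lineDifferentiableAt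

lemma pvv_add (hf : ContDiffAt ℝ 2 f z) (hh : ContDiffAt ℝ 2 h z) (i j : Fin d) :
    pvv (f + h) i j z = pvv f i j z + pvv h i j z := by
  have hpv : pv (f + h) j =ᶠ[𝓝 z] pv f j + pv h j := by
    filter_upwards [hf.eventually (by simp), hh.eventually (by simp)] with y hfy hhy
    exact pv_add (hfy.differentiableAt two_ne_zero) (hhy.differentiableAt two_ne_zero) j
  have hdf := (contDiffAt_pv (m := 1) hf (by norm_num) j).differentiableAt one_ne_zero
  have hdh := (contDiffAt_pv (m := 1) hh (by norm_num) j).differentiableAt one_ne_zero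
  rw [pvv, pv_congr hpv, pv_add hdf hdh, pvv, pvv]

lemma pvv_mul (hf : ContDiffAt ℝ 2 f z) (hh : ContDiffAt ℝ 2 h z) (i j : Fin d) :
    pvv (f * h) i j z =
      pvv f i j z * h z + pv f j z * pv h i z + pv f i z * pv h j z + f z * pvv h i j z := by
  have hpv : pv (f * h) j =ᶠ[𝓝 z] pv f j * h + f * pv h j := by
    filter_upwards [hf.eventually (by simp), hh.eventually (by simp)] with y hfy hhy
    exact pv_mul (hfy.differentiableAt two_ne_zero) (hhy.differentiableAt two_ne_zero) j
  have hdf := hf.differentiableAt two_ne_zero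
  have hdh := hh.differentiableAt two_ne_zero
  have hdf' := (contDiffAt_pv (m := 1) hf (by norm_num) j).differentiableAt one_ne_zero
  have hdh' := (contDiffAt_pv (m := 1) hh (by norm_num) j).differentiableAt one_ne_zero
  rw [pvv, pv_congr hpv, pv_add (hdf'.mul hdh) (hdf.mul hdh'), pv_mul hdf' hdh, pv_mul hdf hdh',
    pvv, pvv]
  ring

lemma kolmogorovOp_add (hf : ContDiffAt ℝ 2 f z) (hh : ContDiffAt ℝ 2 h z) :
    kolmogorovOp (f + h) z = kolmogorovOp f z + kolmogorovOp h z := by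
  have hdf := hf.differentiableAt two_ne_zero
  have hdh := hh.differentiableAt two_ne_zero
  simp only [kolmogorovOp, pvv_add hf hh, Finset.sum_add_distrib, Yop_eq_lineDeriv hdf,
    Yop_eq_lineDeriv hdh, Yop_eq_lineDeriv (hdf.add hdh),
    lineDeriv_add hdf.lineDifferentiableAt hdh.lineDifferentiableAt]
  ring

lemma kolmogorovOp_mul (hf : ContDiffAt ℝ 2 f z) (hh : ContDiffAt ℝ 2 h z) :
    kolmogorovOp (f * h) z =
      kolmogorovOp f z * h z + f z * kolmogorovOp h z - 2 * ∑ j, pv f j z * pv h j z := by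
  have hdf := hf.differentiableAt two_ne_zero
  have hdh := hh.differentiableAt two_ne_zero
  simp only [kolmogorovOp, pvv_mul hf hh, Finset.sum_add_distrib, ← Finset.sum_mul,
    ← Finset.mul_sum, Yop_eq_lineDeriv hdf, Yop_eq_lineDeriv hdh, Yop_eq_lineDeriv (hdf.mul hdh),
    lineDeriv_mul hdf.lineDifferentiableAt hdh.lineDifferentiableAt]
  ring

lemma kolmogorovOp_const (c : ℝ) (z : Z d) : kolmogorovOp (fun _ ↦ c) z = 0 := by
  simp [kolmogorovOp, Yop, pt, px, pvv, pv]

lemma kolmogorovOp_fst (z : Z d) : kolmogorovOp Prod.fst z = 1 := by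
  simp [kolmogorovOp, Yop, pt, px, pvv, pv]

lemma pv_const (c : ℝ) (i : Fin d) (z : Z d) : pv (fun _ ↦ c) i z = 0 := by
  simp [pv]

lemma kolmogorovOp_const_smul (c : ℝ) (hf : ContDiffAt ℝ 2 f z) :
    kolmogorovOp (c • f) z = c * kolmogorovOp f z := by
  have hmul : c • f = (fun _ ↦ c) * f := rfl
  simp [hmul, kolmogorovOp_mul contDiffAt_const hf, kolmogorovOp_const, pv_const]

lemma lineDeriv_pv (hf : ContDiffAt ℝ 2 f z) (i : Fin d) (a : Z d) :
    lineDeriv ℝ (pv f i) z a = pv (fun y ↦ lineDeriv ℝ f y a) i z := by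
  simpa only [pv_eq_lineDeriv] using lineDeriv_comm hf a (vDir i)

lemma lineDeriv_pvv (hf : ContDiffAt ℝ 3 f z) (i j : Fin d) (a : Z d) :
    lineDeriv ℝ (pvv f i j) z a = pvv (fun y ↦ lineDeriv ℝ f y a) i j z := by
  have hcomm : (fun y ↦ lineDeriv ℝ (pv f j) y a) =ᶠ[𝓝 z] pv (fun y ↦ lineDeriv ℝ f y a) j := by
    filter_upwards [(hf.of_le (m := 2) (by norm_num)).eventually (by simp)] with y hy
    exact lineDeriv_pv hy j a
  rw [pvv, pvv, lineDeriv_pv (contDiffAt_pv hf (by norm_num) j), pv_congr hcomm]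

lemma differentiable_transportField : Differentiable ℝ (transportField (d := d)) := by
  unfold transportField
  fun_prop

lemma fderiv_transportField_apply (z a : Z d) :
    fderiv ℝ transportField z a = (0, a.2.2, 0) := by
  rw [← (differentiable_transportField z).lineDeriv_eq_fderiv]
  refine HasDerivAt.deriv ?_
  have hv : HasDerivAt (fun t : ℝ ↦ (z + t • a).2.2) a.2.2 0 := by
    simpa using ((hasDerivAt_id (0 : ℝ)).smul_const a.2.2).const_add z.2.2
  exact (hasDerivAt_const _ _).prodMk (hv.prodMk (hasDerivAt_const _ _))

lemma eventuallyEq_Yop_lineDeriv (hf : ContDiffAt ℝ 1 f z) :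
    Yop f =ᶠ[𝓝 z] fun y ↦ lineDeriv ℝ f y (transportField y) := by
  filter_upwards [hf.eventually (by simp)] with y hy
  exact Yop_eq_lineDeriv (hy.differentiableAt one_ne_zero)

lemma differentiableAt_Yop (hf : ContDiffAt ℝ 2 f z) : DifferentiableAt ℝ (Yop f) z := by
  have hf1 : ContDiffAt ℝ 1 f z := hf.of_le (by norm_num)
  have hf' : DifferentiableAt ℝ (fderiv ℝ f) z :=
    (hf.fderiv_right (m := 1) (by norm_num)).differentiableAt one_ne_zero
  exact (hf'.clm_apply (differentiable_transportField z)).congr_of_eventuallyEq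
    ((eventuallyEq_Yop_lineDeriv hf1).trans (eventuallyEq_lineDeriv_fderiv_apply hf1 _))

lemma lineDeriv_Yop (hf : ContDiffAt ℝ 2 f z) (a : Z d) :
    lineDeriv ℝ (Yop f) z a =
      Yop (fun y ↦ lineDeriv ℝ f y a) z + lineDeriv ℝ f z (0, a.2.2, 0) := by
  rw [(eventuallyEq_Yop_lineDeriv (hf.of_le (by norm_num))).lineDeriv_eq,
    lineDeriv_lineDeriv_comm_of_field hf (differentiable_transportField z),
    fderiv_transportField_apply, Yop_eq_lineDeriv]
  exact (contDiffAt_lineDeriv (m := 1) hf (by norm_num) a).differentiableAt one_ne_zero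

lemma kolmogorovOp_lineDeriv (hf : ContDiffAt ℝ 3 f z) (a : Z d) :
    kolmogorovOp (fun y ↦ lineDeriv ℝ f y a) z =
      lineDeriv ℝ (kolmogorovOp f) z a - lineDeriv ℝ f z (0, a.2.2, 0) := by
  have hf2 : ContDiffAt ℝ 2 f z := hf.of_le (by norm_num)
  have hpvv (i : Fin d) : LineDifferentiableAt ℝ (pvv f i i) z a :=
    ((contDiffAt_pv (m := 1) (contDiffAt_pv (m := 2) hf (by norm_num) i) (by norm_num)
      i).differentiableAt one_ne_zero).lineDifferentiableAt
  have hL : HasLineDerivAt ℝ (kolmogorovOp f)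
      (lineDeriv ℝ (Yop f) z a - ∑ i, lineDeriv ℝ (pvv f i i) z a) z a :=
    HasDerivAt.sub (differentiableAt_Yop hf2).lineDifferentiableAt.hasLineDerivAt
      (HasDerivAt.fun_sum fun i _ ↦ (hpvv i).hasLineDerivAt)
  simp only [hL.lineDeriv, lineDeriv_Yop hf2, lineDeriv_pvv hf, kolmogorovOp]
  ring

lemma kolmogorovOp_px (hf : ContDiffAt ℝ 3 f z) (i : Fin d) :
    kolmogorovOp (px f i) z = px (kolmogorovOp f) i z := by
  simp only [px_eq_lineDeriv, kolmogorovOp_lineDeriv hf]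
  simp [xDir, lineDeriv, deriv_const]

lemma kolmogorovOp_pv (hf : ContDiffAt ℝ 3 f z) (i : Fin d) :
    kolmogorovOp (pv f i) z = pv (kolmogorovOp f) i z - px f i z := by
  simp only [pv_eq_lineDeriv, px_eq_lineDeriv, kolmogorovOp_lineDeriv hf]
  rfl

end KolmogorovOperator

section MaximumPrinciple

variable {f : Z d → ℝ} {z : Z d}

lemma pvv_nonpos_of_isLocalMaxOn (hf : ContinuousAt f z)
    (hmax : IsLocalMaxOn f {y | y.1 ≤ z.1} z) (i : Fin d) : pvv f i i z ≤ 0 := by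
  have hline : Tendsto (fun s : ℝ ↦ z + s • vDir i) (𝓝 0) (𝓝[{y | y.1 ≤ z.1}] z) := by
    refine tendsto_nhdsWithin_iff.2 ⟨?_, .of_forall fun s ↦ by simp [vDir]⟩
    have : Continuous fun s : ℝ ↦ z + s • vDir i := by fun_prop
    simpa using this.tendsto 0
  have hlocal : IsLocalMax (fun s : ℝ ↦ f (z + s • vDir i)) 0 := by
    simpa [IsLocalMax, IsMaxFilter] using hline.eventually hmax
  have hcont : ContinuousAt (fun s : ℝ ↦ f (z + s • vDir i)) 0 :=
    ContinuousAt.comp (g := f) (by simpa using hf) (by fun_prop)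
  simpa only [pvv, pv_eq_lineDeriv, lineDeriv_lineDeriv_eq_deriv_deriv] using
    deriv_deriv_nonpos_of_isLocalMax hlocal hcont

lemma Yop_nonneg_of_isLocalMaxOn (hf : DifferentiableAt ℝ f z)
    (hmax : IsLocalMaxOn f {y | y.1 ≤ z.1} z) : 0 ≤ Yop f z := by
  have hcone : -transportField z ∈ posTangentConeAt {y : Z d | y.1 ≤ z.1} z := by
    refine mem_posTangentConeAt_of_segment_subset
      (Convex.segment_subset ?_ (le_refl z.1) (by simp [transportField]))
    exact (convex_Iic z.1).linear_preimage (LinearMap.fst ℝ ℝ (E d × E d))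
  have := hmax.hasFDerivWithinAt_nonpos hf.hasFDerivAt.hasFDerivWithinAt hcone
  rwa [map_neg, neg_nonpos, ← hf.lineDeriv_eq_fderiv, ← Yop_eq_lineDeriv hf] at this

lemma kolmogorovOp_nonneg_of_isLocalMaxOn (hf : DifferentiableAt ℝ f z)
    (hmax : IsLocalMaxOn f {y | y.1 ≤ z.1} z) : 0 ≤ kolmogorovOp f z :=
  sub_nonneg.2 <| (Finset.sum_nonpos fun i _ ↦
    pvv_nonpos_of_isLocalMaxOn hf.continuousAt hmax i).trans (Yop_nonneg_of_isLocalMaxOn hf hmax)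

lemma le_of_kolmogorovOp_neg {a b m : ℝ} {Ω : Set (E d × E d)} (hΩ : IsOpen Ω)
    (hΩc : IsCompact (closure Ω)) (hcont : ContinuousOn f (Set.Icc a b ×ˢ closure Ω))
    (hf : ∀ z ∈ Set.Ioc a b ×ˢ Ω, DifferentiableAt ℝ f z)
    (hop : ∀ z ∈ Set.Ioc a b ×ˢ Ω, kolmogorovOp f z < 0)
    (hbdry : ∀ z ∈ (Set.Icc a b ×ˢ closure Ω) \ (Set.Ioc a b ×ˢ Ω), f z ≤ m)
    (hz : z ∈ Set.Icc a b ×ˢ closure Ω) : f z ≤ m := by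
  obtain ⟨y, hy, hmax⟩ := (isCompact_Icc.prod hΩc).exists_isMaxOn ⟨z, hz⟩ hcont
  suffices hyint : y ∉ Set.Ioc a b ×ˢ Ω from (hmax hz).trans (hbdry y ⟨hy, hyint⟩)
  intro hyint
  have hlocal : IsLocalMaxOn f {w | w.1 ≤ y.1} y := by
    have hlate : ∀ᶠ w in 𝓝 y, a < w.1 := continuousAt_fst.eventually_const_lt hyint.1.1
    have hspace : ∀ᶠ w in 𝓝 y, w.2 ∈ Ω := continuousAt_snd.eventually (hΩ.mem_nhds hyint.2)
    filter_upwards [nhdsWithin_le_nhds hlate, nhdsWithin_le_nhds hspace, self_mem_nhdsWithin]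
      with w hwa hwΩ (hwy : w.1 ≤ y.1)
    exact hmax ⟨⟨hwa.le, hwy.trans hyint.1.2⟩, subset_closure hwΩ⟩
  exact (kolmogorovOp_nonneg_of_isLocalMaxOn (hf y hyint) hlocal).not_gt (hop y hyint)

theorem le_add_mul_of_kolmogorovOp_le {a b K m : ℝ} {Ω : Set (E d × E d)} (hΩ : IsOpen Ω)
    (hΩc : IsCompact (closure Ω)) (hK : 0 ≤ K) (hcont : ContinuousOn f (Set.Icc a b ×ˢ closure Ω))
    (hf : ∀ z ∈ Set.Ioc a b ×ˢ Ω, ContDiffAt ℝ 2 f z)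
    (hop : ∀ z ∈ Set.Ioc a b ×ˢ Ω, kolmogorovOp f z ≤ K)
    (hbdry : ∀ z ∈ (Set.Icc a b ×ˢ closure Ω) \ (Set.Ioc a b ×ˢ Ω), f z ≤ m)
    (hz : z ∈ Set.Icc a b ×ˢ closure Ω) : f z ≤ m + K * (z.1 - a) := by
  suffices hstrict : ∀ K' > K, f z ≤ m + K' * (z.1 - a) by
    have hlim : Tendsto (fun K' ↦ m + K' * (z.1 - a)) (𝓝[>] K) (𝓝 (m + K * (z.1 - a))) :=
      (Continuous.tendsto (by fun_prop) K).mono_left nhdsWithin_le_nhds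
    exact ge_of_tendsto hlim (eventually_nhdsWithin_of_forall hstrict)
  intro K' hK'
  have hfst (y : Z d) : ContDiffAt ℝ 2 (Prod.fst : Z d → ℝ) y := contDiff_fst.contDiffAt
  have hsmul (y : Z d) : ContDiffAt ℝ 2 ((-K') • (Prod.fst : Z d → ℝ)) y :=
    contDiffAt_const.smul (hfst y)
  have hle : (f + (-K') • Prod.fst : Z d → ℝ) z ≤ m - K' * a := by
    refine le_of_kolmogorovOp_neg hΩ hΩc (hcont.add (by fun_prop))
      (fun y hy ↦ ((hf y hy).add (hsmul y)).differentiableAt two_ne_zero) (fun y hy ↦ ?_)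
      (fun y hy ↦ ?_) hz
    · rw [kolmogorovOp_add (hf y hy) (hsmul y), kolmogorovOp_const_smul _ (hfst y),
        kolmogorovOp_fst]
      linarith [hop y hy]
    · have htime : K' * a ≤ K' * y.1 := mul_le_mul_of_nonneg_left hy.1.1.1 (hK.trans hK'.le)
      simp only [Pi.add_apply, Pi.smul_apply, smul_eq_mul]
      linarith [hbdry y hy]
  simp only [Pi.add_apply, Pi.smul_apply, smul_eq_mul] at hle
  linarith

end MaximumPrinciple

section Cutoff

/-- A cutoff function equal to `1` at the origin and vanishing on the parabolic boundary of the
unit kinetic cylinder. -/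
def cutoff (z : Z d) : ℝ := (1 + z.1) * (1 - ‖z.2.1‖ ^ 2) * (1 - ‖z.2.2‖ ^ 2)

lemma contDiff_cutoff {n : WithTop ℕ∞} : ContDiff ℝ n (cutoff (d := d)) :=
  ((contDiff_const.add contDiff_fst).mul (contDiff_const.sub (contDiff_snd.fst.norm_sq ℝ))).mul
    (contDiff_const.sub (contDiff_snd.snd.norm_sq ℝ))

lemma cutoff_zOrigin : cutoff (zOrigin d) = 1 := by simp [cutoff, zOrigin]

lemma hasDerivAt_norm_sq_add_smul_single (u : E d) (i : Fin d) :
    HasDerivAt (fun s : ℝ ↦ ‖u + s • EuclideanSpace.single i (1 : ℝ)‖ ^ 2) (2 * u i) 0 := by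
  have hline : HasDerivAt (fun s : ℝ ↦ u + s • EuclideanSpace.single i (1 : ℝ))
      (EuclideanSpace.single i 1) 0 := by
    simpa using ((hasDerivAt_id (0 : ℝ)).smul_const (EuclideanSpace.single i (1 : ℝ))).const_add u
  simpa [EuclideanSpace.inner_single_right] using hline.norm_sq

lemma pt_cutoff (z : Z d) : pt cutoff z = (1 - ‖z.2.1‖ ^ 2) * (1 - ‖z.2.2‖ ^ 2) := by
  simp [pt, cutoff]

lemma px_cutoff (i : Fin d) (z : Z d) :
    px cutoff i z = (1 + z.1) * (-(2 * z.2.1 i)) * (1 - ‖z.2.2‖ ^ 2) :=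
  ((((hasDerivAt_norm_sq_add_smul_single z.2.1 i).const_sub 1).const_mul (1 + z.1)).mul_const
    (1 - ‖z.2.2‖ ^ 2)).deriv

lemma pv_cutoff (i : Fin d) (z : Z d) :
    pv cutoff i z = (1 + z.1) * (1 - ‖z.2.1‖ ^ 2) * (-(2 * z.2.2 i)) :=
  (((hasDerivAt_norm_sq_add_smul_single z.2.2 i).const_sub 1).const_mul
    ((1 + z.1) * (1 - ‖z.2.1‖ ^ 2))).deriv

lemma pvv_cutoff (i : Fin d) (z : Z d) :
    pvv cutoff i i z = -2 * ((1 + z.1) * (1 - ‖z.2.1‖ ^ 2)) := by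
  rw [pvv, pv]
  simp only [pv_cutoff, PiLp.add_apply, PiLp.smul_apply, PiLp.single_eq_same, smul_eq_mul, mul_one,
    mul_neg, deriv.fun_neg', deriv_const_mul_field', deriv_const_add_id']
  ring

lemma kolmogorovOp_cutoff (z : Z d) :
    kolmogorovOp cutoff z = (1 - ‖z.2.1‖ ^ 2) * (1 - ‖z.2.2‖ ^ 2)
      - 2 * inner ℝ z.2.1 z.2.2 * ((1 + z.1) * (1 - ‖z.2.2‖ ^ 2))
      + 2 * d * ((1 + z.1) * (1 - ‖z.2.1‖ ^ 2)) := by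
  have htransport : ∑ i, z.2.2 i * px cutoff i z =
      -(2 * inner ℝ z.2.1 z.2.2 * ((1 + z.1) * (1 - ‖z.2.2‖ ^ 2))) := by
    simp only [px_cutoff, PiLp.inner_apply, Finset.mul_sum, Finset.sum_mul,
      ← Finset.sum_neg_distrib]
    refine Finset.sum_congr rfl fun i _ ↦ ?_
    simp only [RCLike.inner_apply, conj_trivial]
    ring
  simp only [kolmogorovOp, Yop, pt_cutoff, htransport, pvv_cutoff, Finset.sum_const,
    Finset.card_univ, Fintype.card_fin, nsmul_eq_mul]
  ring

lemma sum_sq_pv_cutoff (z : Z d) :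
    ∑ j, pv cutoff j z ^ 2 = 4 * ((1 + z.1) * (1 - ‖z.2.1‖ ^ 2)) ^ 2 * ‖z.2.2‖ ^ 2 := by
  rw [EuclideanSpace.real_norm_sq_eq z.2.2, Finset.mul_sum]
  refine Finset.sum_congr rfl fun j _ ↦ ?_
  rw [pv_cutoff]
  ring

variable {z : Z d}

/-- The closure of the unit kinetic cylinder `kCyl 1 (zOrigin d)`, written as a product. -/
def closedUnitCyl (d : ℕ) : Set (Z d) :=
  Set.Icc (-1) 0 ×ˢ Metric.closedBall 0 1 ×ˢ Metric.closedBall 0 1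

lemma kCyl_one_zOrigin :
    kCyl 1 (zOrigin d) = Set.Ioc (-1) 0 ×ˢ Metric.ball 0 1 ×ˢ Metric.ball 0 1 := by
  ext z
  simp [kCyl, zOrigin, and_assoc]

lemma closure_kCyl_one_zOrigin : closure (kCyl 1 (zOrigin d)) = closedUnitCyl d := by
  rw [kCyl_one_zOrigin, closure_prod_eq, closure_prod_eq, closure_Ioc (by norm_num),
    closure_ball _ one_ne_zero, closedUnitCyl]

lemma kCyl_one_subset_closedUnitCyl : kCyl 1 (zOrigin d) ⊆ closedUnitCyl d :=
  closure_kCyl_one_zOrigin ▸ subset_closure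

lemma cutoff_factors_mem_Icc (hz : z ∈ closedUnitCyl d) :
    1 + z.1 ∈ Set.Icc 0 1 ∧ 1 - ‖z.2.1‖ ^ 2 ∈ Set.Icc 0 1 ∧ 1 - ‖z.2.2‖ ^ 2 ∈ Set.Icc 0 1 := by
  obtain ⟨⟨ht, ht'⟩, hx, hv⟩ := hz
  rw [mem_closedBall_zero_iff] at hx hv
  have hx2 := pow_le_one₀ (n := 2) (norm_nonneg _) hx
  have hv2 := pow_le_one₀ (n := 2) (norm_nonneg _) hv
  refine ⟨⟨?_, ?_⟩, ⟨?_, ?_⟩, ⟨?_, ?_⟩⟩ <;> linarith [sq_nonneg ‖z.2.1‖, sq_nonneg ‖z.2.2‖]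

lemma cutoff_mem_Icc (hz : z ∈ closedUnitCyl d) : cutoff z ∈ Set.Icc 0 1 := by
  obtain ⟨ht, hx, hv⟩ := cutoff_factors_mem_Icc hz
  exact unitInterval.mul_mem (unitInterval.mul_mem ht hx) hv

lemma cutoff_eq_zero (hz : z ∈ closedUnitCyl d \ kCyl 1 (zOrigin d)) : cutoff z = 0 := by
  obtain ⟨⟨⟨ht, ht'⟩, hx, hv⟩, hout⟩ := hz
  rw [mem_closedBall_zero_iff] at hx hv
  contrapose! hout
  rw [cutoff, mul_ne_zero_iff, mul_ne_zero_iff] at hout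
  obtain ⟨⟨ht0, hx0⟩, hv0⟩ := hout
  rw [kCyl_one_zOrigin, Set.mem_prod, Set.mem_prod, mem_ball_zero_iff, mem_ball_zero_iff]
  refine ⟨⟨ht.lt_of_ne fun h ↦ ht0 ?_, ht'⟩, hx.lt_of_ne fun h ↦ hx0 ?_,
    hv.lt_of_ne fun h ↦ hv0 ?_⟩
  · rw [← h, add_neg_cancel]
  all_goals rw [h, one_pow, sub_self]

lemma sum_sq_pv_cutoff_le (hz : z ∈ closedUnitCyl d) : ∑ j, pv cutoff j z ^ 2 ≤ 4 := by
  obtain ⟨ht, hx, hv⟩ := cutoff_factors_mem_Icc hz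
  have htx := unitInterval.mul_mem ht hx
  rw [sum_sq_pv_cutoff, mul_assoc]
  exact mul_le_of_le_one_right (by norm_num)
    (mul_le_one₀ (pow_le_one₀ htx.1 htx.2) (sq_nonneg _) (sub_nonneg.1 hv.1))

lemma abs_kolmogorovOp_cutoff_le (hz : z ∈ closedUnitCyl d) :
    |kolmogorovOp cutoff z| ≤ 2 * d + 3 := by
  obtain ⟨ht, hx, hv⟩ := cutoff_factors_mem_Icc hz
  have hinner : |inner ℝ z.2.1 z.2.2| ≤ 1 := (abs_real_inner_le_norm _ _).trans <|
    mul_le_one₀ (mem_closedBall_zero_iff.1 hz.2.1) (norm_nonneg _)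
      (mem_closedBall_zero_iff.1 hz.2.2)
  have htv := unitInterval.mul_mem ht hv
  have htx := unitInterval.mul_mem ht hx
  have hxv := unitInterval.mul_mem hx hv
  have hcross : |2 * inner ℝ z.2.1 z.2.2 * ((1 + z.1) * (1 - ‖z.2.2‖ ^ 2))| ≤ 2 := by
    rw [abs_mul, abs_mul, abs_two, abs_of_nonneg htv.1]
    nlinarith [mul_le_one₀ hinner htv.1 htv.2]
  rw [kolmogorovOp_cutoff, abs_le]
  rw [abs_le] at hcross
  have hd : 0 ≤ 2 * d * ((1 + z.1) * (1 - ‖z.2.1‖ ^ 2)) := mul_nonneg (by positivity) htx.1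
  have hd' : 2 * d * ((1 + z.1) * (1 - ‖z.2.1‖ ^ 2)) ≤ 2 * d :=
    mul_le_of_le_one_right (by positivity) htx.2
  constructor <;> linarith [hxv.1, hxv.2, hcross.1, hcross.2]

end Cutoff

section QuadraticInequalities

variable {ε B A M q r : ℝ}

lemma half_mul_sq_add_sq_le_quadForm (hε : 0 ≤ ε) (hε' : 4 * ε ≤ 1) (p q : ℝ) :
    ε ^ 3 / 2 * (p ^ 2 + q ^ 2) ≤ q ^ 2 + 2 * ε ^ 2 * (p * q) + ε ^ 3 * p ^ 2 := by
  have hcoeff : 0 ≤ (1 - 4 * ε) + ε * (2 - ε ^ 2 / 2) :=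
    add_nonneg (by linarith) (mul_nonneg hε (by nlinarith))
  have : 0 ≤ ε / 2 * (ε * p + 2 * q) ^ 2 := by positivity
  linarith [mul_nonneg hcoeff (sq_nonneg q)]

-- For `F = ε³ P² + 2 ε² P Q + Q²` with `P = φ³ p` and `Q = φ q`, the role of `m`, `n`, `u`, `w` is
-- played by `φ ∂ⱼq`, `φ³ ∂ⱼp`, `q ∂ⱼφ`, `φ² p ∂ⱼφ`: the first bracket is the gradient part of
-- `Δ_v F`, while the other two products come from the derivatives that fall on the cutoff.
lemma gradient_terms_le (hε : 0 ≤ ε) (hε' : 16 * ε ≤ 1) (m n u w : ℝ) :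
    -2 * ((m + u) ^ 2 + 2 * ε ^ 2 * ((m + u) * (n + 3 * w)) + ε ^ 3 * (n + 3 * w) ^ 2)
      - 4 * (u + ε ^ 2 * w) * m - 12 * (ε ^ 2 * u + ε ^ 3 * w) * (n + w)
      ≤ 31 * u ^ 2 + 123 * ε ^ 3 * w ^ 2 := by
  have hsq : 0 ≤ (m + 4 * u) ^ 2 + (m + 4 * ε ^ 2 * n) ^ 2 / 2 + (m + 16 * ε ^ 2 * w) ^ 2 / 2
      + ε / 2 * (ε * n + 16 * u) ^ 2 + ε ^ 3 * (n + 12 * w) ^ 2 + ε * (ε * w + 12 * u) ^ 2 := by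
    positivity
  have hsmall : 0 ≤ (1 - 16 * ε) * (ε ^ 3 * n ^ 2 / 2 + 8 * ε ^ 3 * w ^ 2 + 17 * u ^ 2) :=
    mul_nonneg (by linarith) (by positivity)
  linarith

lemma sum_gradient_terms_le {ι : Type*} (s : Finset ι) (hε : 0 ≤ ε) (hε' : 16 * ε ≤ 1)
    (φ p q : ℝ) (dφ dp dq : ι → ℝ) :
    -2 * (∑ j ∈ s, (dφ j * q + φ * dq j) ^ 2
        + 2 * ε ^ 2 * ∑ j ∈ s, (3 * φ ^ 2 * dφ j * p + φ ^ 3 * dp j) * (dφ j * q + φ * dq j)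
        + ε ^ 3 * ∑ j ∈ s, (3 * φ ^ 2 * dφ j * p + φ ^ 3 * dp j) ^ 2)
      - 4 * (q + ε ^ 2 * (φ ^ 2 * p)) * (φ * ∑ j ∈ s, dφ j * dq j)
      - 12 * (ε ^ 2 * q + ε ^ 3 * (φ ^ 2 * p))
        * (φ ^ 3 * ∑ j ∈ s, dφ j * dp j + φ ^ 2 * p * ∑ j ∈ s, dφ j ^ 2)
      ≤ (31 * q ^ 2 + 123 * ε ^ 3 * (φ ^ 2 * p) ^ 2) * ∑ j ∈ s, dφ j ^ 2 := by
  simp only [Finset.mul_sum, ← Finset.sum_add_distrib, ← Finset.sum_sub_distrib]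
  refine Finset.sum_le_sum fun j _ ↦ ?_
  linarith [gradient_terms_le hε hε' (φ * dq j) (φ ^ 3 * dp j) (dφ j * q) (dφ j * (φ ^ 2 * p))]

lemma two_mul_mul_le_of_abs_le {x y k : ℝ} (hk : 0 < k) (hy : |y| ≤ M) :
    2 * (x * y) ≤ k * x ^ 2 + M ^ 2 / k := by
  have hyM : y ^ 2 / k ≤ M ^ 2 / k := by
    gcongr ?_ / k
    exact sq_le_sq.2 (hy.trans (le_abs_self M))
  have hsq : k * x ^ 2 + y ^ 2 / k - 2 * (x * y) = k * (x - y / k) ^ 2 := by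
    field_simp
    ring
  have : 0 ≤ k * (x - y / k) ^ 2 := by positivity
  linarith

lemma source_terms_le {σ τ : ℝ} (hε : 0 ≤ ε) (hε1 : ε ≤ 1) (hσ : |σ| ≤ M) (hτ : |τ| ≤ M)
    (q r : ℝ) :
    2 * (q + ε ^ 2 * r) * σ + 2 * (ε ^ 2 * q + ε ^ 3 * r) * τ ≤
      2 * q ^ 2 + ε ^ 2 * r ^ 2 / 2 + 10 * M ^ 2 := by
  have hε2 : ε ^ 2 ≤ 1 := pow_le_one₀ hε hε1
  have hq {y : ℝ} (hy : |y| ≤ M) : 2 * (q * y) ≤ q ^ 2 + M ^ 2 := by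
    simpa using two_mul_mul_le_of_abs_le (x := q) one_pos hy
  have hr {y : ℝ} (hy : |y| ≤ M) : 2 * (r * y) ≤ r ^ 2 / 4 + 4 * M ^ 2 :=
    (two_mul_mul_le_of_abs_le (k := 1 / 4) (by norm_num) hy).trans_eq (by ring)
  have hrτ : ε * (2 * (r * τ)) ≤ r ^ 2 / 4 + 4 * M ^ 2 :=
    (mul_le_mul_of_nonneg_left (hr hτ) hε).trans (mul_le_of_le_one_left (by positivity) hε1)
  calc _ = 2 * (q * σ) + ε ^ 2 * (2 * (r * σ)) + ε ^ 2 * (2 * (q * τ))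
        + ε ^ 2 * (ε * (2 * (r * τ))) := by ring
    _ ≤ (q ^ 2 + M ^ 2) + ε ^ 2 * (r ^ 2 / 4 + 4 * M ^ 2) + ε ^ 2 * (q ^ 2 + M ^ 2)
        + ε ^ 2 * (r ^ 2 / 4 + 4 * M ^ 2) := by
      gcongr
      exacts [hq hσ, hr hσ, hq hτ]
    _ = q ^ 2 + M ^ 2 + ε ^ 2 * r ^ 2 / 2 + ε ^ 2 * (q ^ 2 + 9 * M ^ 2) := by ring
    _ ≤ q ^ 2 + M ^ 2 + ε ^ 2 * r ^ 2 / 2 + 1 * (q ^ 2 + 9 * M ^ 2) := by gcongr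
    _ = 2 * q ^ 2 + ε ^ 2 * r ^ 2 / 2 + 10 * M ^ 2 := by ring

lemma cutoff_terms_le {l : ℝ} (hε : 0 < ε) (hB : 1 ≤ B) (hεB : 160 * ε * B ≤ 1) (hl : |l| ≤ B)
    (q r : ℝ) :
    2 * (q + ε ^ 2 * r) * (l * q - r) + 2 * (ε ^ 2 * q + ε ^ 3 * r) * (3 * l * r)
      + (31 * q ^ 2 + 123 * ε ^ 3 * r ^ 2) * B ≤
      (97 * B ^ 2 + 4 / ε ^ 2) * q ^ 2 - ε ^ 2 * r ^ 2 / 2 := by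
  have hε2 : ε ^ 2 ≤ 1 := pow_le_one₀ hε.le (by nlinarith)
  have hlB : l ≤ B := (le_abs_self l).trans hl
  have hqr : 2 * (q * -r) ≤ 4 / ε ^ 2 * q ^ 2 + ε ^ 2 * r ^ 2 / 4 := by
    refine (two_mul_mul_le_of_abs_le (k := 4 / ε ^ 2) (by positivity) (abs_neg r).le).trans_eq ?_
    rw [sq_abs]
    field_simp
  have hlqr : 8 * (r * (l * q)) ≤ r ^ 2 / 4 + 64 * (B * |q|) ^ 2 := by
    have hlq : |l * q| ≤ B * |q| := by rw [abs_mul]; gcongr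
    linarith [two_mul_mul_le_of_abs_le (x := r) (k := 1 / 16) (by norm_num) hlq]
  have hεr : ε ^ 3 * r ^ 2 * B ≤ ε ^ 2 * r ^ 2 / 160 := by
    linarith [mul_le_mul_of_nonneg_left hεB (show 0 ≤ ε ^ 2 * r ^ 2 / 160 by positivity)]
  have hBq : q ^ 2 * B ≤ q ^ 2 * B ^ 2 := by
    gcongr
    exact le_self_pow₀ hB two_ne_zero
  calc _ = 2 * (q * -r) + ε ^ 2 * (8 * (r * (l * q))) + 2 * (q ^ 2 * l)
        + 6 * (ε ^ 3 * r ^ 2 * l) + 123 * (ε ^ 3 * r ^ 2 * B) + 31 * (q ^ 2 * B)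
        - 2 * (ε ^ 2 * r ^ 2) := by ring
    _ ≤ (4 / ε ^ 2 * q ^ 2 + ε ^ 2 * r ^ 2 / 4) + ε ^ 2 * (r ^ 2 / 4 + 64 * (B * |q|) ^ 2)
        + 2 * (q ^ 2 * B) + 6 * (ε ^ 3 * r ^ 2 * B) + 123 * (ε ^ 3 * r ^ 2 * B)
        + 31 * (q ^ 2 * B) - 2 * (ε ^ 2 * r ^ 2) := by gcongr
    _ = 4 / ε ^ 2 * q ^ 2 + ε ^ 2 * (64 * (B * |q|) ^ 2) + 129 * (ε ^ 3 * r ^ 2 * B)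
        + 33 * (q ^ 2 * B) - 3 / 2 * (ε ^ 2 * r ^ 2) := by ring
    _ ≤ 4 / ε ^ 2 * q ^ 2 + 1 * (64 * (B * |q|) ^ 2) + 129 * (ε ^ 2 * r ^ 2 / 160)
        + 33 * (q ^ 2 * B ^ 2) - 3 / 2 * (ε ^ 2 * r ^ 2) := by gcongr
    _ ≤ (97 * B ^ 2 + 4 / ε ^ 2) * q ^ 2 - ε ^ 2 * r ^ 2 / 2 := by
      rw [mul_pow, sq_abs]
      linarith [mul_nonneg (sq_nonneg ε) (sq_nonneg r)]

-- Used with `q = ∂_v g`, `r = φ² ∂_x g`, `l = φ Lφ`, `σ = φ² ∂_v(Lg)` and `τ = φ⁴ ∂_x(Lg)`.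
lemma lower_order_terms_le {σ τ l : ℝ} (hε : 0 < ε) (hB : 1 ≤ B) (hεB : 160 * ε * B ≤ 1)
    (hA : 50 * B ^ 2 + 2 / ε ^ 2 ≤ A) (hσ : |σ| ≤ M) (hτ : |τ| ≤ M) (hl : |l| ≤ B) (q r : ℝ) :
    2 * (q + ε ^ 2 * r) * (l * q + σ - r) + 2 * (ε ^ 2 * q + ε ^ 3 * r) * (3 * l * r + τ)
      + (31 * q ^ 2 + 123 * ε ^ 3 * r ^ 2) * B ≤ 2 * A * q ^ 2 + 10 * M ^ 2 := by
  have hsource := source_terms_le hε.le (by nlinarith) hσ hτ q r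
  have hcutoff := cutoff_terms_le hε hB hεB hl q r
  have hq : q ^ 2 ≤ B ^ 2 * q ^ 2 := le_mul_of_one_le_left (sq_nonneg q) (one_le_pow₀ hB)
  have hAq := mul_le_mul_of_nonneg_right hA (sq_nonneg q)
  have hεq : 4 / ε ^ 2 * q ^ 2 = 2 * (2 / ε ^ 2 * q ^ 2) := by ring
  linarith [sq_nonneg q]

end QuadraticInequalities

section Bernstein

variable {f h φ g : Z d → ℝ} {z : Z d} {ε : ℝ}

lemma pv_pow (hf : DifferentiableAt ℝ f z) (n : ℕ) (j : Fin d) :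
    pv (f ^ n) j z = n * f z ^ (n - 1) * pv f j z := by
  simp only [pv_eq_lineDeriv]
  refine (HasDerivAt.pow hf.lineDifferentiableAt.hasLineDerivAt n).deriv.trans ?_
  simp

lemma kolmogorovOp_pow (hf : ContDiffAt ℝ 2 f z) (n : ℕ) :
    kolmogorovOp (f ^ n) z = n * f z ^ (n - 1) * kolmogorovOp f z
      - n * (n - 1) * f z ^ (n - 2) * ∑ j, pv f j z ^ 2 := by
  induction n with
  | zero =>
    have hone : kolmogorovOp (1 : Z d → ℝ) z = 0 := kolmogorovOp_const 1 z
    simp [hone]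
  | succ n ih =>
    have hfn : ContDiffAt ℝ 2 (f ^ n) z := hf.pow n
    have hpv (j : Fin d) : pv (f ^ n) j z * pv f j z = n * f z ^ (n - 1) * pv f j z ^ 2 := by
      rw [pv_pow (hf.differentiableAt two_ne_zero)]
      ring
    rw [pow_succ, kolmogorovOp_mul hfn hf, ih, Finset.sum_congr rfl fun j _ ↦ hpv j,
      ← Finset.mul_sum]
    rcases n with _ | _ | n <;> simp <;> ring

lemma kolmogorovOp_const_smul_mul (c : ℝ) (hf : ContDiffAt ℝ 2 f z) (hh : ContDiffAt ℝ 2 h z) :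
    kolmogorovOp (c • (f * h)) z =
      c * (kolmogorovOp f z * h z + f z * kolmogorovOp h z - 2 * ∑ j, pv f j z * pv h j z) := by
  have hfh : ContDiffAt ℝ 2 (f * h) z := hf.mul hh
  rw [kolmogorovOp_const_smul c hfh, kolmogorovOp_mul hf hh]

lemma contDiffAt_quadForm {n : WithTop ℕ∞} (a b c : ℝ) (hf : ContDiffAt ℝ n f z)
    (hh : ContDiffAt ℝ n h z) :
    ContDiffAt ℝ n (a • (f * f) + b • (f * h) + c • (h * h)) z :=
  ((contDiffAt_const.smul (hf.mul hf)).add (contDiffAt_const.smul (hf.mul hh))).add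
    (contDiffAt_const.smul (hh.mul hh))

lemma kolmogorovOp_quadForm (a b c : ℝ) (hf : ContDiffAt ℝ 2 f z) (hh : ContDiffAt ℝ 2 h z) :
    kolmogorovOp (a • (f * f) + b • (f * h) + c • (h * h)) z =
      (2 * a * f z + b * h z) * kolmogorovOp f z + (b * f z + 2 * c * h z) * kolmogorovOp h z
      - 2 * (a * ∑ j, pv f j z ^ 2 + b * ∑ j, pv f j z * pv h j z + c * ∑ j, pv h j z ^ 2) := by
  have hff : ContDiffAt ℝ 2 (a • (f * f)) z := contDiffAt_const.smul (hf.mul hf)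
  have hfh : ContDiffAt ℝ 2 (b • (f * h)) z := contDiffAt_const.smul (hf.mul hh)
  have hhh : ContDiffAt ℝ 2 (c • (h * h)) z := contDiffAt_const.smul (hh.mul hh)
  have hsum : ContDiffAt ℝ 2 (a • (f * f) + b • (f * h)) z := hff.add hfh
  simp only [kolmogorovOp_add hsum hhh, kolmogorovOp_add hff hfh, kolmogorovOp_const_smul_mul, hf,
    hh, pow_two]
  ring

/-- The auxiliary function of Bernstein's method for the derivatives of `g` in the directions `x i`
and `v i`, localised by `φ`. The powers of `φ` follow the kinetic scaling, in which `x` has degree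
three and `v` has degree one; those of `ε` make the quadratic form in the derivatives positive
definite. -/
def bernsteinFun (A ε : ℝ) (φ g : Z d → ℝ) (i : Fin d) : Z d → ℝ :=
  A • (g * g) + (ε ^ 3 • ((φ ^ 3 * px g i) * (φ ^ 3 * px g i))
    + (2 * ε ^ 2) • ((φ ^ 3 * px g i) * (φ * pv g i))
    + (1 : ℝ) • ((φ * pv g i) * (φ * pv g i)))

lemma bernsteinFun_apply (A ε : ℝ) (φ g : Z d → ℝ) (i : Fin d) (z : Z d) :
    bernsteinFun A ε φ g i z = A * g z ^ 2 + (ε ^ 3 * (φ z ^ 3 * px g i z) ^ 2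
      + 2 * ε ^ 2 * ((φ z ^ 3 * px g i z) * (φ z * pv g i z)) + (φ z * pv g i z) ^ 2) := by
  simp [bernsteinFun, pow_two]

lemma contDiffAt_bernsteinFun (A ε : ℝ) (hφ : ContDiffAt ℝ 2 φ z) (hg : ContDiffAt ℝ 3 g z)
    (i : Fin d) : ContDiffAt ℝ 2 (bernsteinFun A ε φ g i) z := by
  have hg2 : ContDiffAt ℝ 2 g z := hg.of_le (by norm_num)
  have hq : ContDiffAt ℝ 2 (φ * pv g i) z := hφ.mul (contDiffAt_pv hg (by norm_num) i)
  have hp : ContDiffAt ℝ 2 (φ ^ 3 * px g i) z := (hφ.pow 3).mul (contDiffAt_px hg (by norm_num) i)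
  exact (contDiffAt_const.smul (hg2.mul hg2)).add (contDiffAt_quadForm _ _ _ hp hq)

lemma kolmogorovOp_bernsteinFun_le (hε : 0 ≤ ε) (hε' : 16 * ε ≤ 1) (hφ : ContDiffAt ℝ 2 φ z)
    (hg : ContDiffAt ℝ 3 g z) (A : ℝ) (i : Fin d) :
    kolmogorovOp (bernsteinFun A ε φ g i) z ≤
      2 * A * (g z * kolmogorovOp g z - ∑ j, pv g j z ^ 2)
      + 2 * (pv g i z + ε ^ 2 * (φ z ^ 2 * px g i z)) * (φ z * kolmogorovOp φ z * pv g i z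
        + φ z ^ 2 * pv (kolmogorovOp g) i z - φ z ^ 2 * px g i z)
      + 2 * (ε ^ 2 * pv g i z + ε ^ 3 * (φ z ^ 2 * px g i z)) * (3 * (φ z * kolmogorovOp φ z)
        * (φ z ^ 2 * px g i z) + φ z ^ 4 * px (kolmogorovOp g) i z)
      + (31 * pv g i z ^ 2 + 123 * ε ^ 3 * (φ z ^ 2 * px g i z) ^ 2) * ∑ j, pv φ j z ^ 2 := by
  have hg2 : ContDiffAt ℝ 2 g z := hg.of_le (by norm_num)
  have hq : ContDiffAt ℝ 2 (pv g i) z := contDiffAt_pv hg (by norm_num) i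
  have hp : ContDiffAt ℝ 2 (px g i) z := contDiffAt_px hg (by norm_num) i
  have hφ3 : ContDiffAt ℝ 2 (φ ^ 3) z := hφ.pow 3
  have hQ : ContDiffAt ℝ 2 (φ * pv g i) z := hφ.mul hq
  have hP : ContDiffAt ℝ 2 (φ ^ 3 * px g i) z := hφ3.mul hp
  have hG : ContDiffAt ℝ 2 (A • (g * g)) z := contDiffAt_const.smul (hg2.mul hg2)
  have hdφ := hφ.differentiableAt two_ne_zero
  have hpvφ3 (j : Fin d) : pv (φ ^ 3) j z = 3 * φ z ^ 2 * pv φ j z := pv_pow hdφ 3 j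
  have hpvQ (j : Fin d) := pv_mul hdφ (hq.differentiableAt two_ne_zero) j
  have hpvP (j : Fin d) := pv_mul (hφ3.differentiableAt two_ne_zero)
    (hp.differentiableAt two_ne_zero) j
  have hcross : ∑ j, 3 * φ z ^ 2 * pv φ j z * pv (px g i) j z =
      3 * φ z ^ 2 * ∑ j, pv φ j z * pv (px g i) j z := by
    simp only [Finset.mul_sum, mul_assoc]
  have hopφ3 : kolmogorovOp (φ ^ 3) z =
      3 * φ z ^ 2 * kolmogorovOp φ z - 6 * φ z * ∑ j, pv φ j z ^ 2 := by
    rw [kolmogorovOp_pow hφ]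
    norm_num
  rw [bernsteinFun, kolmogorovOp_add hG (contDiffAt_quadForm _ _ _ hP hQ),
    kolmogorovOp_const_smul_mul A hg2 hg2, kolmogorovOp_quadForm _ _ _ hP hQ,
    kolmogorovOp_mul hφ hq, kolmogorovOp_mul hφ3 hp, hopφ3, kolmogorovOp_pv hg, kolmogorovOp_px hg]
  simp only [hpvQ, hpvP, hpvφ3, hcross, Pi.mul_apply, Pi.pow_apply, ← pow_two]
  linarith [sum_gradient_terms_le Finset.univ hε hε' (φ z) (px g i z) (pv g i z)
    (fun j ↦ pv φ j z) (fun j ↦ pv (px g i) j z) (fun j ↦ pv (pv g i) j z)]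

end Bernstein

section GradientBound

variable {φ g : Z d → ℝ} {z : Z d} {ε A B M : ℝ}

lemma kolmogorovOp_bernsteinFun_le_const (hε : 0 < ε) (hB : 1 ≤ B) (hεB : 160 * ε * B ≤ 1)
    (hA : 50 * B ^ 2 + 2 / ε ^ 2 ≤ A) (hφ : ContDiffAt ℝ 2 φ z) (hφ01 : φ z ∈ Set.Icc 0 1)
    (hopφ : |kolmogorovOp φ z| ≤ B) (hpvφ : ∑ j, pv φ j z ^ 2 ≤ B) (hg : ContDiffAt ℝ 3 g z)
    (hgM : |g z| ≤ M) (hopM : |kolmogorovOp g z| ≤ M) (i : Fin d)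
    (hpxM : |px (kolmogorovOp g) i z| ≤ M) (hpvM : |pv (kolmogorovOp g) i z| ≤ M) :
    kolmogorovOp (bernsteinFun A ε φ g i) z ≤ (2 * A + 10) * M ^ 2 := by
  have hcut {y K : ℝ} (n : ℕ) (hy : |y| ≤ K) : |φ z ^ n * y| ≤ K := by
    rw [abs_mul, abs_of_nonneg (pow_nonneg hφ01.1 n)]
    exact (mul_le_of_le_one_left (abs_nonneg y) (pow_le_one₀ hφ01.1 hφ01.2)).trans hy
  have hl : |φ z * kolmogorovOp φ z| ≤ B := by simpa using hcut 1 hopφ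
  have hA0 : 0 ≤ A := le_trans (by positivity) hA
  have henergy : g z * kolmogorovOp g z - ∑ j, pv g j z ^ 2 ≤ M ^ 2 - pv g i z ^ 2 := by
    refine sub_le_sub ?_ (Finset.single_le_sum (f := fun j ↦ pv g j z ^ 2)
      (fun j _ ↦ sq_nonneg _) (Finset.mem_univ i))
    rw [pow_two]
    exact (le_abs_self _).trans <| (abs_mul _ _).trans_le <|
      mul_le_mul hgM hopM (abs_nonneg _) ((abs_nonneg _).trans hgM)
  have hweight : 0 ≤ 31 * pv g i z ^ 2 + 123 * ε ^ 3 * (φ z ^ 2 * px g i z) ^ 2 := by positivity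
  have hlower := lower_order_terms_le hε hB hεB hA (hcut 2 hpvM) (hcut 4 hpxM) hl (pv g i z)
    (φ z ^ 2 * px g i z)
  linarith [kolmogorovOp_bernsteinFun_le hε.le (by nlinarith) hφ hg A i,
    mul_le_mul_of_nonneg_left henergy (show 0 ≤ 2 * A by positivity),
    mul_le_mul_of_nonneg_left hpvφ hweight]

lemma kolmogorovOp_bernsteinFun_cutoff_le (hε : 0 < ε) (hεd : 160 * ε * (2 * d + 4) ≤ 1)
    (hA : 50 * (2 * d + 4) ^ 2 + 2 / ε ^ 2 ≤ A) (hz : z ∈ closedUnitCyl d)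
    (hg : ContDiffAt ℝ 3 g z) (hgM : |g z| ≤ M) (hopM : |kolmogorovOp g z| ≤ M) (i : Fin d)
    (hpxM : |px (kolmogorovOp g) i z| ≤ M) (hpvM : |pv (kolmogorovOp g) i z| ≤ M) :
    kolmogorovOp (bernsteinFun A ε cutoff g i) z ≤ (2 * A + 10) * M ^ 2 := by
  have : (0 : ℝ) ≤ d := d.cast_nonneg
  exact kolmogorovOp_bernsteinFun_le_const hε (by linarith) hεd hA contDiff_cutoff.contDiffAt
    (cutoff_mem_Icc hz) ((abs_kolmogorovOp_cutoff_le hz).trans (by linarith))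
    ((sum_sq_pv_cutoff_le hz).trans (by linarith)) hg hgM hopM i hpxM hpvM

lemma abs_le_of_mem_closedUnitCyl (hg : ContinuousOn g (closedUnitCyl d))
    (hgM : ∀ z ∈ kCyl 1 (zOrigin d), |g z| ≤ M) (hz : z ∈ closedUnitCyl d) : |g z| ≤ M := by
  rw [← closure_kCyl_one_zOrigin] at hg hz
  exact le_on_closure hgM hg.abs continuousOn_const hz

lemma le_add_of_kolmogorovOp_le_on_kCyl {f : Z d → ℝ} {K m : ℝ} (hK : 0 ≤ K)
    (hf : ∀ z ∈ closedUnitCyl d, ContDiffAt ℝ 2 f z)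
    (hop : ∀ z ∈ kCyl 1 (zOrigin d), kolmogorovOp f z ≤ K)
    (hbdry : ∀ z ∈ closedUnitCyl d \ kCyl 1 (zOrigin d), f z ≤ m) : f (zOrigin d) ≤ m + K := by
  have hsub := kCyl_one_subset_closedUnitCyl (d := d)
  have hmem : zOrigin d ∈ closedUnitCyl d := hsub (by simp [kCyl])
  have hΩ : closure (Metric.ball (0 : E d) 1 ×ˢ Metric.ball (0 : E d) 1) =
      Metric.closedBall 0 1 ×ˢ Metric.closedBall 0 1 := by
    rw [closure_prod_eq, closure_ball _ one_ne_zero]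
  have hcpt : IsCompact (closure (Metric.ball (0 : E d) 1 ×ˢ Metric.ball (0 : E d) 1)) :=
    hΩ ▸ (isCompact_closedBall _ _).prod (isCompact_closedBall _ _)
  have hf' (z : Z d) (hz : z ∈ kCyl 1 (zOrigin d)) := hf z (hsub hz)
  rw [kCyl_one_zOrigin] at hop hf'
  rw [closedUnitCyl, ← hΩ] at hf hmem hbdry
  rw [kCyl_one_zOrigin] at hbdry
  simpa [zOrigin] using le_add_mul_of_kolmogorovOp_le (Metric.isOpen_ball.prod Metric.isOpen_ball)
    hcpt hK (fun z hz ↦ (hf z hz).continuousAt.continuousWithinAt) hf' hop hbdry hmem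

lemma bernsteinFun_zOrigin_le (hε : 0 < ε) (hεd : 160 * ε * (2 * d + 4) ≤ 1)
    (hA : 50 * (2 * d + 4) ^ 2 + 2 / ε ^ 2 ≤ A) (hg : ∀ z ∈ closedUnitCyl d, ContDiffAt ℝ 3 g z)
    (hgM : ∀ z ∈ kCyl 1 (zOrigin d), |g z| ≤ M)
    (hopM : ∀ z ∈ kCyl 1 (zOrigin d), |kolmogorovOp g z| ≤ M) (i : Fin d)
    (hpxM : ∀ z ∈ kCyl 1 (zOrigin d), |px (kolmogorovOp g) i z| ≤ M)
    (hpvM : ∀ z ∈ kCyl 1 (zOrigin d), |pv (kolmogorovOp g) i z| ≤ M) :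
    bernsteinFun A ε cutoff g i (zOrigin d) ≤ (3 * A + 10) * M ^ 2 := by
  have hA0 : 0 ≤ A := le_trans (by positivity) hA
  have hsub := kCyl_one_subset_closedUnitCyl (d := d)
  have hcont : ContinuousOn g (closedUnitCyl d) :=
    fun z hz ↦ (hg z hz).continuousAt.continuousWithinAt
  have hbdry (z : Z d) (hz : z ∈ closedUnitCyl d \ kCyl 1 (zOrigin d)) :
      bernsteinFun A ε cutoff g i z ≤ A * M ^ 2 := by
    have hgz := (abs_le_of_mem_closedUnitCyl hcont hgM hz.1).trans (le_abs_self M)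
    simpa [bernsteinFun_apply, cutoff_eq_zero hz] using
      mul_le_mul_of_nonneg_left (sq_le_sq.2 hgz) hA0
  calc bernsteinFun A ε cutoff g i (zOrigin d) ≤ A * M ^ 2 + (2 * A + 10) * M ^ 2 :=
        le_add_of_kolmogorovOp_le_on_kCyl (by positivity)
          (fun z hz ↦ contDiffAt_bernsteinFun A ε contDiff_cutoff.contDiffAt (hg z hz) i)
          (fun z hz ↦ kolmogorovOp_bernsteinFun_cutoff_le hε hεd hA (hsub hz) (hg z (hsub hz))
            (hgM z hz) (hopM z hz) i (hpxM z hz) (hpvM z hz)) hbdry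
    _ = (3 * A + 10) * M ^ 2 := by ring

theorem exists_abs_px_add_abs_pv_le (d : ℕ) :
    ∃ C : ℝ, 0 < C ∧ ∀ (g : Z d → ℝ) (M : ℝ) (i : Fin d),
      (∀ z ∈ closedUnitCyl d, ContDiffAt ℝ 3 g z) →
      (∀ z ∈ kCyl 1 (zOrigin d), |g z| ≤ M) →
      (∀ z ∈ kCyl 1 (zOrigin d), |kolmogorovOp g z| ≤ M) →
      (∀ z ∈ kCyl 1 (zOrigin d), |px (kolmogorovOp g) i z| ≤ M) →
      (∀ z ∈ kCyl 1 (zOrigin d), |pv (kolmogorovOp g) i z| ≤ M) →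
      |px g i (zOrigin d)| + |pv g i (zOrigin d)| ≤ C * M := by
  obtain ⟨ε, hε, hεd⟩ : ∃ ε : ℝ, 0 < ε ∧ 160 * ε * (2 * d + 4) ≤ 1 :=
    ⟨1 / (160 * (2 * d + 4)), by positivity, by field_simp; rfl⟩
  obtain ⟨A, hA⟩ : ∃ A : ℝ, 50 * (2 * d + 4) ^ 2 + 2 / ε ^ 2 ≤ A := ⟨_, le_rfl⟩
  have hA0 : 0 ≤ A := le_trans (by positivity) hA
  refine ⟨√(4 * (3 * A + 10) / ε ^ 3), by positivity, fun g M i hg hgM hopM hpxM hpvM ↦ ?_⟩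
  have hM : 0 ≤ M := (abs_nonneg _).trans (hgM (zOrigin d) (by simp [kCyl]))
  have hε4 : 4 * ε ≤ 1 := by nlinarith [(d.cast_nonneg : (0 : ℝ) ≤ d)]
  have hF := bernsteinFun_zOrigin_le hε hεd hA hg hgM hopM i hpxM hpvM
  have hform := half_mul_sq_add_sq_le_quadForm hε.le hε4 (px g i (zOrigin d)) (pv g i (zOrigin d))
  rw [bernsteinFun_apply, cutoff_zOrigin] at hF
  rw [← Real.sqrt_sq hM, ← Real.sqrt_mul (by positivity)]
  refine Real.le_sqrt_of_sq_le ?_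
  rw [div_mul_eq_mul_div, le_div_iff₀ (by positivity)]
  have hsq := add_sq_le (a := |px g i (zOrigin d)|) (b := |pv g i (zOrigin d)|)
  rw [sq_abs, sq_abs] at hsq
  linarith [mul_le_mul_of_nonneg_right hsq (pow_pos hε 3).le,
    mul_nonneg hA0 (sq_nonneg (g (zOrigin d)))]

lemma abs_le_toReal_of_supAbs_le {Q : Set (Z d)} {h : Z d → ℝ} {T : ℝ≥0∞} (hT : T ≠ ⊤)
    (hle : supAbs Q h ≤ T) (z : Z d) (hz : z ∈ Q) : |h z| ≤ T.toReal :=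
  (ENNReal.ofReal_le_iff_le_toReal hT).1 <|
    (le_iSup₂ (f := fun z (_ : z ∈ Q) ↦ ENNReal.ofReal |h z|) z hz).trans hle

lemma supAbs_congr {Q : Set (Z d)} {f h : Z d → ℝ} (hfh : Set.EqOn f h Q) :
    supAbs Q f = supAbs Q h :=
  biSup_congr fun z hz ↦ by rw [hfh hz]

theorem exists_ofReal_abs_px_add_abs_pv_le (d : ℕ) :
    ∃ C : ℝ, 0 < C ∧ ∀ (g : Z d → ℝ) (i : Fin d),
      (∀ z ∈ closedUnitCyl d, ContDiffAt ℝ 3 g z) →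
      ENNReal.ofReal (|px g i (zOrigin d)| + |pv g i (zOrigin d)|) ≤ ENNReal.ofReal C *
        (supAbs (kCyl 1 (zOrigin d)) g + supAbs (kCyl 1 (zOrigin d)) (kolmogorovOp g)
          + supAbs (kCyl 1 (zOrigin d)) (px (kolmogorovOp g) i)
          + supAbs (kCyl 1 (zOrigin d)) (pv (kolmogorovOp g) i)) := by
  obtain ⟨C, hC, hbound⟩ := exists_abs_px_add_abs_pv_le d
  refine ⟨C, hC, fun g i hg ↦ ?_⟩
  set T : ℝ≥0∞ := _ + _ + _ + _
  obtain hT | hT := eq_or_ne T ⊤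
  · simp [hT, ENNReal.mul_top, hC]
  rw [← ENNReal.ofReal_toReal hT, ← ENNReal.ofReal_mul hC.le]
  exact ENNReal.ofReal_le_ofReal <| hbound g T.toReal i hg
    (abs_le_toReal_of_supAbs_le hT ((le_self_add.trans le_self_add).trans le_self_add))
    (abs_le_toReal_of_supAbs_le hT ((le_add_self.trans le_self_add).trans le_self_add))
    (abs_le_toReal_of_supAbs_le hT (le_add_self.trans le_self_add))
    (abs_le_toReal_of_supAbs_le hT le_add_self)

end GradientBound

/-- **Gradient bound for the Kolmogorov equation**: if `(∂_t + v·∇_x) g = Δ_v g + S` on a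
neighbourhood of the closed unit kinetic cylinder, with `S` continuously differentiable
(with bounded derivatives on `Q₁`) and `g` of class `C³`, then
`|∂_{xᵢ} g(0)| + |∂_{vᵢ} g(0)| ≤ C (‖g‖_{L^∞(Q₁)} + ‖S‖_{L^∞(Q₁)} + ‖∂_{xᵢ}S‖_{L^∞(Q₁)}
+ ‖∂_{vᵢ}S‖_{L^∞(Q₁)})`, with `C = C(d)`. -/
theorem kolmogorov_gradient_bound (d : ℕ) (hd : 1 ≤ d) :
    ∃ C : ℝ, 0 < C ∧
      ∀ (U : Set (Z d)), IsOpen U →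
        (Set.Icc (-1 : ℝ) 0 ×ˢ Metric.closedBall (0 : E d) 1 ×ˢ
            Metric.closedBall (0 : E d) 1) ⊆ U →
        ∀ (S g : Z d → ℝ),
          ContDiffOn ℝ 1 S U →
          supAbs (kCyl 1 (zOrigin d)) S < ⊤ →
          (∀ i, supAbs (kCyl 1 (zOrigin d)) (px S i) < ⊤) →
          (∀ i, supAbs (kCyl 1 (zOrigin d)) (pv S i) < ⊤) →
          ContDiffOn ℝ 3 g U →
          (∀ z ∈ U, Yop g z = (∑ i, pvv g i i z) + S z) →
          ∀ i : Fin d,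
            ENNReal.ofReal (|px g i (zOrigin d)| + |pv g i (zOrigin d)|)
              ≤ ENNReal.ofReal C *
                (supAbs (kCyl 1 (zOrigin d)) g + supAbs (kCyl 1 (zOrigin d)) S
                  + supAbs (kCyl 1 (zOrigin d)) (px S i)
                  + supAbs (kCyl 1 (zOrigin d)) (pv S i)) := by
  obtain ⟨C, hC, hbound⟩ := exists_ofReal_abs_px_add_abs_pv_le d
  refine ⟨C, hC, fun U hU hQU S g _ _ _ _ hg heq i ↦ ?_⟩
  have hsub : kCyl 1 (zOrigin d) ⊆ U := kCyl_one_subset_closedUnitCyl.trans hQU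
  have hop : Set.EqOn (kolmogorovOp g) S U := fun z hz ↦ sub_eq_iff_eq_add'.2 (heq z hz)
  have hnhds (z : Z d) (hz : z ∈ kCyl 1 (zOrigin d)) : kolmogorovOp g =ᶠ[𝓝 z] S :=
    hop.eventuallyEq_of_mem (hU.mem_nhds (hsub hz))
  rw [← supAbs_congr (hop.mono hsub), ← supAbs_congr fun z hz ↦ px_congr (hnhds z hz) i,
    ← supAbs_congr fun z hz ↦ pv_congr (hnhds z hz) i]
  exact hbound g i fun z hz ↦ hg.contDiffAt (hU.mem_nhds (hQU hz))
end
end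

section
/- Let d ≥ 1, r > 0, n ∈ ℕ and multi-indices a, b ∈ ℕ^d. There exists a constant C depending only on d, n, a and b such that every function g which is infinitely differentiable on an open set containing the closure of Q_r := (−r²,0] × B_{r³} × B_r and satisfies (∂_t + v·∇_x) g = Δ_v g at every point of that open set obeys |∂_t^n ∂_x^a ∂_v^b g(0,0,0)| ≤ C ‖g‖_{L^∞(Q_r)} / r^{2n + 3|a| + |b|}. -/
open Real MeasureTheory
open scoped BigOperators ENNReal

noncomputable section

variable {d : ℕ}

/-- Iterated time derivative `∂_t^n`. -/
def ptIter (n : ℕ) (g : Z d → ℝ) : Z d → ℝ := (fun h => pt h)^[n] g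

/-- Iterated space derivative `∂_x^a` for a multi-index `a`. -/
def pxMulti (a : Fin d → ℕ) (g : Z d → ℝ) : Z d → ℝ :=
  ((List.ofFn fun i : Fin d => (fun h => px h i)^[a i]).foldr (· ∘ ·) id) g

/-- Iterated velocity derivative `∂_v^b` for a multi-index `b`. -/
def pvMulti (b : Fin d → ℕ) (g : Z d → ℝ) : Z d → ℝ :=
  ((List.ofFn fun i : Fin d => (fun h => pv h i)^[b i]).foldr (· ∘ ·) id) g

/-! Write `L = ∂_t + v · ∇_x - Δ_v`. For a solution `g` the functions `∂_{x_i} g` are solutions and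
`L ∂_{v_i} g = -∂_{x_i} g`, so Bernstein's method applies: with `α = χ ∂_{v_i} g`,
`β = χ³ ∂_{x_i} g` and a sufficiently flat cutoff `χ`, `L (101 g² + 8 α² + (α + β)²)` is negative
wherever `∂_{v_i} g` or `χ ∂_{x_i} g` is nonzero, and the maximum principle bounds `∂_{v_i} g` and
`∂_{x_i} g` on a smaller box by the supremum of `|g|`.

These estimates can be iterated along operators which commute with `L`: the derivatives `∂_t` and
`∂_{x_i}`, and the Galilean fields `G_i = ∂_{v_i} + t ∂_{x_i}`. The equation itself gives
`∂_t = ∑ i, (∂_{v_i} G_i - t ∂_{v_i} ∂_{x_i} - v_i ∂_{x_i})` on solutions, hence a bound on `∂_t g`.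
At `t = 0` the field `G_i` agrees with `∂_{v_i}`, so all derivatives at the origin are controlled.
The power of `r` comes from the invariance of the equation under `(t, x, v) ↦ (r² t, r³ x, r v)`. -/

namespace Kinetic

section DirectionalDerivative

variable {F : Type*} [NormedAddCommGroup F] [NormedSpace ℝ F]
  {f h : F → ℝ} {U : Set F} {e e' z : F}

/-- Scalar functions of class `C^∞` on a set. -/
abbrev SmoothOn (f : F → ℝ) (U : Set F) : Prop := ContDiffOn ℝ (⊤ : ℕ∞) f U

/-- The derivative of `f` in the direction `e`, as a function of the base point. It is a line
derivative rather than a value of `fderiv`, so that `pt`, `px` and `pv` are instances of it even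
where `f` is not differentiable. -/
def dirDeriv (e : F) (f : F → ℝ) : F → ℝ := fun z => lineDeriv ℝ f z e

lemma dirDeriv_eq_fderiv (hf : DifferentiableAt ℝ f z) : dirDeriv e f z = fderiv ℝ f z e :=
  hf.lineDeriv_eq_fderiv

lemma dirDeriv_eqOn (hU : IsOpen U) (hfh : Set.EqOn f h U) :
    Set.EqOn (dirDeriv e f) (dirDeriv e h) U := fun _ hz =>
  (hfh.eventuallyEq_of_mem (hU.mem_nhds hz)).lineDeriv_eq

lemma dirDeriv_smul_left (c : ℝ) : dirDeriv (c • e) f = c • dirDeriv e f :=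
  funext fun _ => lineDeriv_smul

lemma dirDeriv_smul (c : ℝ) : dirDeriv e (c • f) = c • dirDeriv e f := by
  funext z
  simp only [dirDeriv, lineDeriv, Pi.smul_apply, smul_eq_mul, deriv_const_mul_field]

lemma dirDeriv_comp_linearMap {G L : Type*} [NormedAddCommGroup G] [NormedSpace ℝ G]
    [FunLike L G F] [LinearMapClass L ℝ G F] (T : L) (e : G) :
    dirDeriv e (f ∘ T) = dirDeriv (T e) f ∘ T := by
  funext z
  simp only [dirDeriv, lineDeriv, Function.comp_apply, map_add, map_smul]

lemma dirDeriv_add (hf : DifferentiableAt ℝ f z) (hh : DifferentiableAt ℝ h z) :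
    dirDeriv e (f + h) z = dirDeriv e f z + dirDeriv e h z := by
  rw [dirDeriv_eq_fderiv hf, dirDeriv_eq_fderiv hh, dirDeriv_eq_fderiv (hf.add hh),
    fderiv_add hf hh, add_apply]

lemma dirDeriv_mul (hf : DifferentiableAt ℝ f z) (hh : DifferentiableAt ℝ h z) :
    dirDeriv e (f * h) z = f z * dirDeriv e h z + h z * dirDeriv e f z := by
  rw [dirDeriv_eq_fderiv hf, dirDeriv_eq_fderiv hh, dirDeriv_eq_fderiv (hf.mul hh),
    fderiv_mul hf hh]
  rfl

lemma dirDeriv_sum {ι : Type*} {s : Finset ι} {f : ι → F → ℝ}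
    (hf : ∀ i ∈ s, DifferentiableAt ℝ (f i) z) :
    dirDeriv e (∑ i ∈ s, f i) z = ∑ i ∈ s, dirDeriv e (f i) z := by
  rw [dirDeriv_eq_fderiv (DifferentiableAt.sum hf), fderiv_sum hf, sum_apply]
  exact Finset.sum_congr rfl fun i hi => (dirDeriv_eq_fderiv (hf i hi)).symm

lemma SmoothOn.differentiableAt (hf : SmoothOn f U) (hU : IsOpen U) (hz : z ∈ U) :
    DifferentiableAt ℝ f z :=
  (hf.contDiffAt (hU.mem_nhds hz)).differentiableAt (by simp)

lemma SmoothOn.add (hf : SmoothOn f U) (hh : SmoothOn h U) : SmoothOn (f + h) U :=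
  ContDiffOn.add hf hh

lemma SmoothOn.mul (hf : SmoothOn f U) (hh : SmoothOn h U) : SmoothOn (f * h) U :=
  ContDiffOn.mul hf hh

lemma SmoothOn.pow (hf : SmoothOn f U) (n : ℕ) : SmoothOn (f ^ n) U :=
  ContDiffOn.pow hf n

lemma SmoothOn.fderiv (hf : SmoothOn f U) (hU : IsOpen U) :
    ContDiffOn ℝ (⊤ : ℕ∞) (fderiv ℝ f) U :=
  hf.fderiv_of_isOpen hU (by norm_cast)

lemma SmoothOn.dirDeriv (hf : SmoothOn f U) (hU : IsOpen U) (e : F) :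
    SmoothOn (dirDeriv e f) U :=
  ((hf.fderiv hU).clm_apply contDiffOn_const).congr fun _ hz =>
    dirDeriv_eq_fderiv (hf.differentiableAt hU hz)

lemma dirDeriv_dirDeriv_eq_fderiv_fderiv (hU : IsOpen U) (hf : SmoothOn f U) (hz : z ∈ U) :
    dirDeriv e (dirDeriv e' f) z = fderiv ℝ (fderiv ℝ f) z e e' := by
  have hf' : DifferentiableAt ℝ (fderiv ℝ f) z :=
    ((hf.fderiv hU).contDiffAt (hU.mem_nhds hz)).differentiableAt (by simp)
  rw [dirDeriv_eqOn hU (fun y hy => dirDeriv_eq_fderiv (hf.differentiableAt hU hy)) hz,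
    dirDeriv_eq_fderiv (hf'.clm_apply (differentiableAt_const e')),
    fderiv_clm_apply hf' (differentiableAt_const e')]
  simp

lemma dirDeriv_comm (hU : IsOpen U) (hf : SmoothOn f U) :
    Set.EqOn (dirDeriv e (dirDeriv e' f)) (dirDeriv e' (dirDeriv e f)) U := fun z hz => by
  have hsymm : IsSymmSndFDerivAt ℝ f z :=
    (hf.contDiffAt (hU.mem_nhds hz)).isSymmSndFDerivAt (by
      rw [minSmoothness_of_isRCLikeNormedField]
      exact WithTop.coe_le_coe.2 (le_top : (2 : ℕ∞) ≤ ⊤))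
  rw [dirDeriv_dirDeriv_eq_fderiv_fderiv hU hf hz, dirDeriv_dirDeriv_eq_fderiv_fderiv hU hf hz,
    hsymm e e']

lemma dirDeriv_dirDeriv_add (hU : IsOpen U) (hf : SmoothOn f U) (hh : SmoothOn h U) (hz : z ∈ U) :
    dirDeriv e (dirDeriv e' (f + h)) z
      = dirDeriv e (dirDeriv e' f) z + dirDeriv e (dirDeriv e' h) z := by
  have hadd : Set.EqOn (dirDeriv e' (f + h)) (dirDeriv e' f + dirDeriv e' h) U := fun y hy =>
    dirDeriv_add (hf.differentiableAt hU hy) (hh.differentiableAt hU hy)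
  rw [dirDeriv_eqOn hU hadd hz, dirDeriv_add ((hf.dirDeriv hU e').differentiableAt hU hz)
    ((hh.dirDeriv hU e').differentiableAt hU hz)]

lemma dirDeriv_dirDeriv_mul (hU : IsOpen U) (hf : SmoothOn f U) (hh : SmoothOn h U) (hz : z ∈ U) :
    dirDeriv e (dirDeriv e' (f * h)) z
      = f z * dirDeriv e (dirDeriv e' h) z + dirDeriv e f z * dirDeriv e' h z
        + dirDeriv e h z * dirDeriv e' f z + h z * dirDeriv e (dirDeriv e' f) z := by
  have hmul : Set.EqOn (dirDeriv e' (f * h)) (f * dirDeriv e' h + h * dirDeriv e' f) U :=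
    fun y hy => dirDeriv_mul (hf.differentiableAt hU hy) (hh.differentiableAt hU hy)
  have hfz := hf.differentiableAt hU hz
  have hhz := hh.differentiableAt hU hz
  have hfz' := (hf.dirDeriv hU e').differentiableAt hU hz
  have hhz' := (hh.dirDeriv hU e').differentiableAt hU hz
  rw [dirDeriv_eqOn hU hmul hz, dirDeriv_add (hfz.mul hhz') (hhz.mul hfz'),
    dirDeriv_mul hfz hhz', dirDeriv_mul hhz hfz']
  ring

lemma deriv_deriv_nonpos_of_isLocalMax {φ : ℝ → ℝ} {a : ℝ} (hmax : IsLocalMax φ a)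
    (hφ : ContinuousAt φ a) : deriv (deriv φ) a ≤ 0 := by
  by_contra! hpos
  have hmin : IsLocalMin φ a := isLocalMin_of_deriv_deriv_pos hpos hmax.deriv_eq_zero hφ
  have hconst : φ =ᶠ[nhds a] fun _ => φ a := by
    filter_upwards [hmax, hmin] with y using le_antisymm
  simp [hconst.deriv.deriv_eq] at hpos

lemma dirDeriv_dirDeriv_nonpos_of_isLocalMax (hU : IsOpen U) (hf : SmoothOn f U) (hz : z ∈ U)
    (hmax : IsLocalMax (fun s : ℝ => f (z + s • e)) 0) : dirDeriv e (dirDeriv e f) z ≤ 0 := by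
  have hline : Continuous fun s : ℝ => z + s • e := by fun_prop
  have hnear : ∀ᶠ s : ℝ in nhds 0, z + s • e ∈ U :=
    hline.continuousAt.eventually_mem (by simpa using hU.mem_nhds hz)
  have hderiv : deriv (fun s : ℝ => f (z + s • e)) =ᶠ[nhds 0]
      fun s => dirDeriv e f (z + s • e) := by
    filter_upwards [hnear] with s hs
    have := (hf.differentiableAt hU hs).hasFDerivAt.comp_hasDerivAt s
      (((hasDerivAt_id s).smul_const e).const_add z)
    rw [dirDeriv_eq_fderiv (hf.differentiableAt hU hs)]
    simpa [Function.comp_def] using this.deriv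
  have hcont : ContinuousAt (fun s : ℝ => f (z + s • e)) 0 :=
    ContinuousAt.comp (f := fun s : ℝ => z + s • e)
      (by simpa using (hf.differentiableAt hU hz).continuousAt) hline.continuousAt
  rw [dirDeriv, lineDeriv, ← hderiv.deriv_eq]
  exact deriv_deriv_nonpos_of_isLocalMax hmax hcont

/-- The iterated directional derivative `D_{e₁} ⋯ D_{eₖ} f` along a list `[e₁, …, eₖ]`. -/
def iterDirDeriv (l : List F) (f : F → ℝ) : F → ℝ := l.foldr dirDeriv f

lemma SmoothOn.iterDirDeriv (hf : SmoothOn f U) (hU : IsOpen U) (l : List F) :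
    SmoothOn (iterDirDeriv l f) U := by
  induction l with
  | nil => exact hf
  | cons e l ih => exact SmoothOn.dirDeriv ih hU e

lemma iterDirDeriv_append (l l' : List F) :
    iterDirDeriv (l ++ l') f = iterDirDeriv l (iterDirDeriv l' f) :=
  List.foldr_append

lemma iterDirDeriv_perm {l l' : List F} (hl : l.Perm l') (hU : IsOpen U) (hf : SmoothOn f U) :
    Set.EqOn (iterDirDeriv l f) (iterDirDeriv l' f) U := by
  induction hl with
  | nil => exact fun _ _ => rfl
  | cons e _ ih => exact dirDeriv_eqOn hU ih
  | swap e e' l => exact dirDeriv_comm hU (hf.iterDirDeriv hU l)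
  | trans _ _ ih ih' => exact ih.trans ih'

lemma iterDirDeriv_smul_comp_of_eigenvectors {L : Type*} [FunLike L F F]
    [LinearMapClass L ℝ F F] {c : ℝ} {l : List F} (T : L) (hl : ∀ e ∈ l, T e = c • e) (a : ℝ) :
    iterDirDeriv l (a • (f ∘ T)) = (a * c ^ l.length) • (iterDirDeriv l f ∘ T) := by
  induction l with
  | nil => simp [iterDirDeriv]
  | cons e l ih =>
    rw [List.forall_mem_cons] at hl
    change dirDeriv e (iterDirDeriv l (a • (f ∘ T))) = _
    rw [ih hl.2, dirDeriv_smul, dirDeriv_comp_linearMap, hl.1, dirDeriv_smul_left, List.length_cons,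
      pow_succ, ← mul_assoc, mul_smul _ c]
    rfl

end DirectionalDerivative

section KolmogorovOperator

variable {f h : Z d → ℝ} {U : Set (Z d)} {z : Z d}

/-- The unit vector in the direction of time. -/
def unitT : Z d := (1, 0, 0)

/-- The unit vector in the direction of `x i`. -/
def unitX (i : Fin d) : Z d := (0, EuclideanSpace.single i 1, 0)

/-- The unit vector in the direction of `v i`. -/
def unitV (i : Fin d) : Z d := (0, 0, EuclideanSpace.single i 1)

/-- The free transport derivative `∂_t + v · ∇_x`, as a directional derivative. -/
def transport (f : Z d → ℝ) : Z d → ℝ := fun z => dirDeriv (1, z.2.2, 0) f z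

/-- The Laplacian `Δ_v` in the velocity variable. -/
def velocityLaplacian (f : Z d → ℝ) : Z d → ℝ :=
  ∑ i, dirDeriv (unitV i) (dirDeriv (unitV i) f)

/-- The gradient `∇_v` in the velocity variable. -/
def velocityGradient (f : Z d → ℝ) (z : Z d) : E d :=
  WithLp.toLp 2 fun i => dirDeriv (unitV i) f z

/-- The Kolmogorov operator `L = ∂_t + v · ∇_x - Δ_v`. -/
def kolmogorovOp (f : Z d → ℝ) : Z d → ℝ := transport f - velocityLaplacian f

lemma kolmogorovOp_apply (f : Z d → ℝ) (z : Z d) :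
    kolmogorovOp f z
      = dirDeriv (1, z.2.2, 0) f z - ∑ i, dirDeriv (unitV i) (dirDeriv (unitV i) f) z := by
  simp only [kolmogorovOp, velocityLaplacian, Pi.sub_apply, Finset.sum_apply, transport]

lemma inner_velocityGradient (f h : Z d → ℝ) (z : Z d) :
    inner ℝ (velocityGradient f z) (velocityGradient h z)
      = ∑ i, dirDeriv (unitV i) f z * dirDeriv (unitV i) h z :=
  Finset.sum_congr rfl fun _ _ => mul_comm _ _

lemma kolmogorovOp_smul (c : ℝ) (f : Z d → ℝ) : kolmogorovOp (c • f) = c • kolmogorovOp f := by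
  funext z
  simp only [kolmogorovOp_apply, dirDeriv_smul, Pi.smul_apply, smul_eq_mul, mul_sub,
    Finset.mul_sum]

lemma kolmogorovOp_add (hU : IsOpen U) (hf : SmoothOn f U) (hh : SmoothOn h U) (hz : z ∈ U) :
    kolmogorovOp (f + h) z = kolmogorovOp f z + kolmogorovOp h z := by
  simp only [kolmogorovOp_apply, dirDeriv_dirDeriv_add hU hf hh hz,
    dirDeriv_add (hf.differentiableAt hU hz) (hh.differentiableAt hU hz),
    Finset.sum_add_distrib]
  ring

lemma kolmogorovOp_mul (hU : IsOpen U) (hf : SmoothOn f U) (hh : SmoothOn h U) (hz : z ∈ U) :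
    kolmogorovOp (f * h) z = f z * kolmogorovOp h z + h z * kolmogorovOp f z
      - 2 * inner ℝ (velocityGradient f z) (velocityGradient h z) := by
  simp only [kolmogorovOp_apply, dirDeriv_dirDeriv_mul hU hf hh hz,
    dirDeriv_mul (hf.differentiableAt hU hz) (hh.differentiableAt hU hz),
    inner_velocityGradient, Finset.sum_add_distrib, ← Finset.mul_sum,
    mul_comm (dirDeriv _ h z) (dirDeriv _ f z)]
  ring

lemma velocityGradient_smul (c : ℝ) (f : Z d → ℝ) (z : Z d) :
    velocityGradient (c • f) z = c • velocityGradient f z := by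
  ext i
  exact congrFun (dirDeriv_smul c) z

lemma velocityGradient_add (hf : DifferentiableAt ℝ f z) (hh : DifferentiableAt ℝ h z) :
    velocityGradient (f + h) z = velocityGradient f z + velocityGradient h z := by
  ext i
  exact dirDeriv_add hf hh

lemma velocityGradient_mul (hf : DifferentiableAt ℝ f z) (hh : DifferentiableAt ℝ h z) :
    velocityGradient (f * h) z = f z • velocityGradient h z + h z • velocityGradient f z := by
  ext i
  exact dirDeriv_mul hf hh

lemma transport_eq_fderiv (hf : DifferentiableAt ℝ f z) :
    transport f z = fderiv ℝ f z (1, z.2.2, 0) :=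
  dirDeriv_eq_fderiv hf

lemma transport_eq_sum (hf : DifferentiableAt ℝ f z) :
    transport f z = dirDeriv unitT f z + ∑ i, z.2.2 i * dirDeriv (unitX i) f z := by
  have hv : ((1, z.2.2, 0) : Z d) = unitT + ∑ i, z.2.2 i • unitX i := by
    refine Prod.ext ?_ (Prod.ext ?_ ?_)
    · simp [unitT, unitX, Prod.fst_sum]
    · ext j
      simp [unitT, unitX, Prod.fst_sum, Prod.snd_sum, Pi.single_apply]
    · simp [unitT, unitX, Prod.snd_sum]
  simp only [transport_eq_fderiv hf, hv, dirDeriv_eq_fderiv hf, map_add, map_sum, map_smul,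
    smul_eq_mul]

lemma SmoothOn.transport (hf : SmoothOn f U) (hU : IsOpen U) : SmoothOn (transport f) U :=
  ((hf.fderiv hU).clm_apply (by fun_prop)).congr fun _ hz =>
    transport_eq_fderiv (hf.differentiableAt hU hz)

lemma SmoothOn.velocityLaplacian (hf : SmoothOn f U) (hU : IsOpen U) :
    SmoothOn (velocityLaplacian f) U :=
  ContDiffOn.sum (fun i _ => (hf.dirDeriv hU (unitV i)).dirDeriv hU (unitV i)) |>.congr
    fun _ _ => Finset.sum_apply ..

lemma SmoothOn.kolmogorovOp (hf : SmoothOn f U) (hU : IsOpen U) : SmoothOn (kolmogorovOp f) U :=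
  ContDiffOn.sub (hf.transport hU) (hf.velocityLaplacian hU)

lemma transport_dirDeriv (hU : IsOpen U) (hf : SmoothOn f U) (hz : z ∈ U) (e : Z d) :
    transport (dirDeriv e f) z
      = dirDeriv e (transport f) z - dirDeriv (0, e.2.2, 0) f z := by
  have hfield : HasFDerivAt (fun y : Z d => ((1, y.2.2, 0) : Z d))
      ((0 : Z d →L[ℝ] ℝ).prod (((ContinuousLinearMap.snd ℝ (E d) (E d)).comp
        (ContinuousLinearMap.snd ℝ ℝ (E d × E d))).prod 0)) z :=
    (hasFDerivAt_const _ _).prodMk ((hasFDerivAt_snd.comp z hasFDerivAt_snd).prodMk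
      (hasFDerivAt_const _ _))
  have hf' : DifferentiableAt ℝ (fderiv ℝ f) z :=
    ((hf.fderiv hU).contDiffAt (hU.mem_nhds hz)).differentiableAt (by simp)
  have htransport : dirDeriv e (transport f) z
      = fderiv ℝ (fderiv ℝ f) z e (1, z.2.2, 0) + fderiv ℝ f z (0, e.2.2, 0) := by
    rw [dirDeriv_eqOn hU (fun y hy => transport_eq_fderiv (hf.differentiableAt hU hy)) hz,
      dirDeriv_eq_fderiv (hf'.clm_apply hfield.differentiableAt),
      fderiv_clm_apply hf' hfield.differentiableAt, hfield.fderiv]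
    simp [add_comm]
  rw [htransport, ← dirDeriv_dirDeriv_eq_fderiv_fderiv hU hf hz, ← dirDeriv_comm hU hf hz,
    dirDeriv_eq_fderiv (hf.differentiableAt hU hz), add_sub_cancel_right, transport]

lemma velocityLaplacian_dirDeriv (hU : IsOpen U) (hf : SmoothOn f U) (hz : z ∈ U) (e : Z d) :
    velocityLaplacian (dirDeriv e f) z = dirDeriv e (velocityLaplacian f) z := by
  have hsmooth (i : Fin d) : SmoothOn (dirDeriv (unitV i) (dirDeriv (unitV i) f)) U :=
    (hf.dirDeriv hU _).dirDeriv hU _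
  rw [velocityLaplacian, velocityLaplacian,
    dirDeriv_sum fun i _ => (hsmooth i).differentiableAt hU hz, Finset.sum_apply]
  refine Finset.sum_congr rfl fun i _ => ?_
  rw [dirDeriv_eqOn hU (dirDeriv_comm hU hf) hz, dirDeriv_comm hU (hf.dirDeriv hU _) hz]

lemma kolmogorovOp_dirDeriv (hU : IsOpen U) (hf : SmoothOn f U) (hz : z ∈ U) (e : Z d) :
    kolmogorovOp (dirDeriv e f) z
      = dirDeriv e (kolmogorovOp f) z - dirDeriv (0, e.2.2, 0) f z := by
  have hsub : kolmogorovOp f = transport f + (-1 : ℝ) • velocityLaplacian f := by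
    rw [neg_one_smul, ← sub_eq_add_neg, kolmogorovOp]
  have hlap := (hf.velocityLaplacian hU).differentiableAt hU hz
  rw [hsub, dirDeriv_add ((hf.transport hU).differentiableAt hU hz) (hlap.const_smul _),
    dirDeriv_smul, kolmogorovOp, Pi.sub_apply, transport_dirDeriv hU hf hz,
    velocityLaplacian_dirDeriv hU hf hz, Pi.smul_apply, smul_eq_mul]
  ring

end KolmogorovOperator

section Solutions

variable {g : Z d → ℝ} {U : Set (Z d)} {z : Z d}

/-- Smooth solutions of the Kolmogorov equation `(∂_t + v · ∇_x) g = Δ_v g` on an open set. -/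
structure IsKolmogorovSolution (g : Z d → ℝ) (U : Set (Z d)) : Prop where
  isOpen : IsOpen U
  smooth : SmoothOn g U
  eq_zero : Set.EqOn (kolmogorovOp g) 0 U

lemma IsKolmogorovSolution.kolmogorovOp_dirDeriv (hg : IsKolmogorovSolution g U) (hz : z ∈ U)
    (e : Z d) : kolmogorovOp (dirDeriv e g) z = -dirDeriv (0, e.2.2, 0) g z := by
  rw [Kinetic.kolmogorovOp_dirDeriv hg.isOpen hg.smooth hz, dirDeriv_eqOn hg.isOpen hg.eq_zero hz]
  simp [dirDeriv, lineDeriv]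

lemma IsKolmogorovSolution.dirDeriv (hg : IsKolmogorovSolution g U) {e : Z d} (he : e.2.2 = 0) :
    IsKolmogorovSolution (dirDeriv e g) U where
  isOpen := hg.isOpen
  smooth := hg.smooth.dirDeriv hg.isOpen e
  eq_zero z hz := by
    rw [hg.kolmogorovOp_dirDeriv hz, he]
    simp [Kinetic.dirDeriv, lineDeriv]

/-- The generator `∂_{v_i} + t ∂_{x_i}` of the Galilean transformations. -/
def galilean (i : Fin d) (f : Z d → ℝ) : Z d → ℝ :=
  dirDeriv (unitV i) f + Prod.fst * dirDeriv (unitX i) f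

lemma dirDeriv_fst (e z : Z d) : dirDeriv e Prod.fst z = e.1 :=
  (dirDeriv_eq_fderiv differentiableAt_fst).trans (by rw [fderiv_fst]; rfl)

lemma kolmogorovOp_fst : kolmogorovOp (Prod.fst : Z d → ℝ) = 1 := by
  funext z
  simp [kolmogorovOp_apply, dirDeriv, lineDeriv]

lemma IsKolmogorovSolution.galilean (hg : IsKolmogorovSolution g U) (i : Fin d) :
    IsKolmogorovSolution (galilean i g) U := by
  have hfst : SmoothOn (Prod.fst : Z d → ℝ) U := contDiff_fst.contDiffOn
  have hv := hg.smooth.dirDeriv hg.isOpen (unitV i)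
  have hx : IsKolmogorovSolution (Kinetic.dirDeriv (unitX i) g) U := hg.dirDeriv rfl
  have hmul : SmoothOn (Prod.fst * Kinetic.dirDeriv (unitX i) g) U := hfst.mul hx.smooth
  refine ⟨hg.isOpen, hv.add hmul, fun z hz => ?_⟩
  have horth : inner ℝ (velocityGradient Prod.fst z)
      (velocityGradient (Kinetic.dirDeriv (unitX i) g) z) = 0 := by
    simp [inner_velocityGradient, dirDeriv_fst, unitV]
  rw [Kinetic.galilean, kolmogorovOp_add hg.isOpen hv hmul hz,
    kolmogorovOp_mul hg.isOpen hfst hx.smooth hz, hg.kolmogorovOp_dirDeriv hz,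
    hx.eq_zero hz, kolmogorovOp_fst, horth]
  simp [unitX, unitV]

end Solutions

section MaximumPrinciple

open Set Metric

variable {f : Z d → ℝ} {U : Set (Z d)} {z : Z d} {ρ R : ℝ}

lemma transport_nonneg_of_isLocalMaxOn (hf : DifferentiableAt ℝ f z)
    (hmax : IsLocalMaxOn f {y | y.1 ≤ z.1} z) : 0 ≤ transport f z := by
  have hconvex : Convex ℝ {y : Z d | y.1 ≤ z.1} :=
    convex_halfSpace_le (LinearMap.fst ℝ ℝ (E d × E d)).isLinear _
  have hpast : -((1, z.2.2, 0) : Z d) ∈ posTangentConeAt {y | y.1 ≤ z.1} z :=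
    mem_posTangentConeAt_of_segment_subset (hconvex.segment_subset (by simp) (by simp))
  have hle := hmax.hasFDerivWithinAt_nonpos hf.hasFDerivAt.hasFDerivWithinAt hpast
  rw [map_neg, ← transport_eq_fderiv hf] at hle
  exact neg_nonpos.1 hle

lemma kolmogorovOp_nonneg_of_isLocalMaxOn (hU : IsOpen U) (hf : SmoothOn f U) (hz : z ∈ U)
    (hmax : IsLocalMaxOn f {y | y.1 ≤ z.1} z) : 0 ≤ kolmogorovOp f z := by
  have hline (i : Fin d) : IsLocalMax (fun s : ℝ => f (z + s • unitV i)) 0 := by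
    have hcont : Continuous fun s : ℝ => z + s • (unitV i : Z d) := by fun_prop
    have htendsto : Filter.Tendsto (fun s : ℝ => z + s • (unitV i : Z d)) (nhds 0)
        (nhdsWithin z {y | y.1 ≤ z.1}) :=
      tendsto_nhdsWithin_iff.2
        ⟨by simpa using hcont.tendsto 0, Filter.Eventually.of_forall fun s => by simp [unitV]⟩
    filter_upwards [htendsto.eventually hmax] with s hs
    simpa using hs
  have hlap : velocityLaplacian f z ≤ 0 := by
    rw [velocityLaplacian, Finset.sum_apply]
    exact Finset.sum_nonpos fun i _ => dirDeriv_dirDeriv_nonpos_of_isLocalMax hU hf hz (hline i)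
  have htransport := transport_nonneg_of_isLocalMaxOn (hf.differentiableAt hU hz) hmax
  rw [kolmogorovOp, Pi.sub_apply]
  linarith

/-- The closed box `-R ≤ t ≤ 0`, `|x| ≤ R`, `|v| ≤ R`. It replaces the kinetic cylinders, whose
scaling only matters in the last step. -/
def kineticBox (d : ℕ) (R : ℝ) : Set (Z d) := Icc (-R) 0 ×ˢ closedBall 0 R ×ˢ closedBall 0 R

/-- The open set `-R < t`, `|x| < R`, `|v| < R`, which removes the parabolic boundary from
`kineticBox d R`. -/
def innerRegion (d : ℕ) (R : ℝ) : Set (Z d) := Ioi (-R) ×ˢ ball 0 R ×ˢ ball 0 R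

lemma mem_kineticBox : z ∈ kineticBox d R ↔ (-R ≤ z.1 ∧ z.1 ≤ 0) ∧ ‖z.2.1‖ ≤ R ∧ ‖z.2.2‖ ≤ R := by
  simp [kineticBox, mem_prod]

lemma mem_innerRegion : z ∈ innerRegion d R ↔ -R < z.1 ∧ ‖z.2.1‖ < R ∧ ‖z.2.2‖ < R := by
  simp [innerRegion, mem_prod]

lemma isCompact_kineticBox (d : ℕ) (R : ℝ) : IsCompact (kineticBox d R) :=
  isCompact_Icc.prod ((isCompact_closedBall 0 R).prod (isCompact_closedBall 0 R))

lemma isOpen_innerRegion (d : ℕ) (R : ℝ) : IsOpen (innerRegion d R) :=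
  isOpen_Ioi.prod (isOpen_ball.prod isOpen_ball)

lemma zero_mem_kineticBox (hR : 0 ≤ R) : (0 : Z d) ∈ kineticBox d R := by
  simp [mem_kineticBox, hR]

lemma kineticBox_mono (h : ρ ≤ R) : kineticBox d ρ ⊆ kineticBox d R :=
  prod_mono (Icc_subset_Icc_left (neg_le_neg h))
    (prod_mono (closedBall_subset_closedBall h) (closedBall_subset_closedBall h))

lemma kineticBox_subset_innerRegion (h : ρ < R) : kineticBox d ρ ⊆ innerRegion d R := fun _ hz =>
  have ⟨⟨ht, _⟩, hx, hv⟩ := mem_kineticBox.1 hz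
  mem_innerRegion.2 ⟨(neg_lt_neg h).trans_le ht, hx.trans_lt h, hv.trans_lt h⟩

lemma kolmogorovOp_nonneg_of_isMaxOn_kineticBox (hU : IsOpen U) (hf : SmoothOn f U)
    (hR : kineticBox d R ⊆ U) (hz : z ∈ kineticBox d R) (hmax : IsMaxOn f (kineticBox d R) z)
    (hin : z ∈ innerRegion d R) : 0 ≤ kolmogorovOp f z := by
  refine kolmogorovOp_nonneg_of_isLocalMaxOn hU hf (hR hz) ?_
  filter_upwards [self_mem_nhdsWithin,
    nhdsWithin_le_nhds ((isOpen_innerRegion d R).mem_nhds hin)] with y hyz hy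
  rw [mem_innerRegion] at hy
  exact hmax (mem_kineticBox.2 ⟨⟨hy.1.le, le_trans hyz (mem_kineticBox.1 hz).1.2⟩,
    hy.2.1.le, hy.2.2.le⟩)

end MaximumPrinciple

section Bernstein

open Set

variable {f g h α β χ : Z d → ℝ} {U : Set (Z d)} {z : Z d} {ρ R M : ℝ}

lemma kolmogorovOp_mul_self (hU : IsOpen U) (hf : SmoothOn f U) (hz : z ∈ U) :
    kolmogorovOp (f * f) z = 2 * (f z * kolmogorovOp f z - ‖velocityGradient f z‖ ^ 2) := by
  rw [kolmogorovOp_mul hU hf hf hz, real_inner_self_eq_norm_sq]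
  ring

-- The first-order term of `L (χ h)` is rewritten through `∇ (χ h)`, so that the result contains
-- no derivative of the unlocalized function `h`.
lemma mul_kolmogorovOp_mul (hU : IsOpen U) (hχ : SmoothOn χ U) (hh : SmoothOn h U) (hz : z ∈ U) :
    χ z * kolmogorovOp (χ * h) z = χ z ^ 2 * kolmogorovOp h z
      + (χ z * kolmogorovOp χ z + 2 * ‖velocityGradient χ z‖ ^ 2) * h z
      - 2 * inner ℝ (velocityGradient χ z) (velocityGradient (χ * h) z) := by
  rw [kolmogorovOp_mul hU hχ hh hz,
    velocityGradient_mul (hχ.differentiableAt hU hz) (hh.differentiableAt hU hz),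
    inner_add_right, inner_smul_right, inner_smul_right, real_inner_self_eq_norm_sq]
  ring

lemma mul_kolmogorovOp_pow_mul (hU : IsOpen U) (hχ : SmoothOn χ U) (hh : SmoothOn h U)
    (hz : z ∈ U) (n : ℕ) :
    χ z * kolmogorovOp (χ ^ (n + 1) * h) z = χ z ^ (n + 2) * kolmogorovOp h z
      + ((n + 1) * (χ z * kolmogorovOp χ z) + (n + 1) * (n + 2) * ‖velocityGradient χ z‖ ^ 2)
        * (χ z ^ n * h z)
      - 2 * (n + 1) * inner ℝ (velocityGradient χ z) (velocityGradient (χ ^ (n + 1) * h) z) := by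
  induction n with
  | zero => simpa using mul_kolmogorovOp_mul hU hχ hh hz
  | succ n ih =>
    have hpow : SmoothOn (χ ^ (n + 1) * h) U := (hχ.pow (n + 1)).mul hh
    have hgrad : inner ℝ (velocityGradient χ z) (velocityGradient (χ ^ (n + 2) * h) z)
        = χ z * inner ℝ (velocityGradient χ z) (velocityGradient (χ ^ (n + 1) * h) z)
          + χ z ^ (n + 1) * h z * ‖velocityGradient χ z‖ ^ 2 := by
      rw [pow_succ', mul_assoc, velocityGradient_mul (hχ.differentiableAt hU hz)
        (hpow.differentiableAt hU hz), inner_add_right, inner_smul_right, inner_smul_right,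
        real_inner_self_eq_norm_sq]
      rfl
    have hstep := mul_kolmogorovOp_mul hU hχ hpow hz
    rw [← mul_assoc, ← pow_succ', hgrad, pow_two, mul_assoc, ih] at hstep
    rw [hstep, hgrad]
    simp only [Pi.mul_apply, Pi.pow_apply]
    push_cast
    ring

/-- A cutoff for the Bernstein argument: it vanishes on the parabolic boundary of the box, and is
so flat that the errors it creates are absorbed in `bernstein_quadratic_le`. -/
structure IsBernsteinCutoff (χ : Z d → ℝ) (R : ℝ) : Prop where
  smooth : ContDiff ℝ (⊤ : ℕ∞) χ
  eq_zero : ∀ z ∈ kineticBox d R, z ∉ innerRegion d R → χ z = 0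
  abs_mul_kolmogorovOp_le : ∀ z ∈ kineticBox d R, |χ z * kolmogorovOp χ z| ≤ 1 / 250
  norm_velocityGradient_sq_le : ∀ z ∈ kineticBox d R, ‖velocityGradient χ z‖ ^ 2 ≤ 1 / 250

lemma exists_pos_smul_isBernsteinCutoff (hχ : ContDiff ℝ (⊤ : ℕ∞) χ)
    (hzero : ∀ z ∈ kineticBox d R, z ∉ innerRegion d R → χ z = 0) :
    ∃ ε > (0 : ℝ), IsBernsteinCutoff (ε • χ) R := by
  have hsmooth : SmoothOn χ univ := hχ.contDiffOn
  have hgrad : ContinuousOn (velocityGradient χ) univ :=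
    (PiLp.continuous_toLp 2 _).comp_continuousOn (continuousOn_pi.2 fun i =>
      (hsmooth.dirDeriv isOpen_univ (unitV i)).continuousOn)
  obtain ⟨A, hA⟩ := (isCompact_kineticBox d R).exists_bound_of_continuousOn
    ((hsmooth.continuousOn.mul (hsmooth.kolmogorovOp isOpen_univ).continuousOn).mono
      (subset_univ _))
  obtain ⟨B, hB⟩ := (isCompact_kineticBox d R).exists_bound_of_continuousOn
    ((hgrad.norm.pow 2).mono (subset_univ _))
  obtain ⟨ε, hε, hεAB⟩ : ∃ ε > 0, ε ^ 2 * max A B ≤ 1 / 250 := by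
    have hlim : Filter.Tendsto (fun ε : ℝ => ε ^ 2 * max A B) (nhdsWithin 0 (Ioi 0)) (nhds 0) :=
      tendsto_nhdsWithin_of_tendsto_nhds (Continuous.tendsto' (by fun_prop) _ _ (by simp))
    have hpos : ∀ᶠ ε : ℝ in nhdsWithin 0 (Ioi 0), 0 < ε := self_mem_nhdsWithin
    exact (hpos.and (hlim.eventually_le_const (by norm_num))).exists
  refine ⟨ε, hε, hχ.const_smul ε, fun z hz hzin => by simp [hzero z hz hzin], fun z hz => ?_,
    fun z hz => ?_⟩
  · rw [kolmogorovOp_smul, Pi.smul_apply, Pi.smul_apply, smul_mul_smul_comm, ← pow_two, smul_eq_mul,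
      abs_mul, abs_sq]
    exact (mul_le_mul_of_nonneg_left ((hA z hz).trans (le_max_left A B)) (sq_nonneg ε)).trans hεAB
  · have hB' : ‖velocityGradient χ z‖ ^ 2 ≤ B := (le_abs_self _).trans (hB z hz)
    rw [velocityGradient_smul, norm_smul, mul_pow, Real.norm_eq_abs, sq_abs]
    exact (mul_le_mul_of_nonneg_left (hB'.trans (le_max_right A B)) (sq_nonneg ε)).trans hεAB

/-- A polynomial which is positive inside the box of size `R` and vanishes on its parabolic
boundary. -/
def boxBump (R : ℝ) : Z d → ℝ :=
  fun z => (z.1 + R) * (R ^ 2 - ‖z.2.1‖ ^ 2) * (R ^ 2 - ‖z.2.2‖ ^ 2)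

lemma contDiff_boxBump (R : ℝ) : ContDiff ℝ (⊤ : ℕ∞) (boxBump (d := d) R) := by
  have hx : ContDiff ℝ (⊤ : ℕ∞) fun z : Z d => ‖z.2.1‖ ^ 2 := contDiff_snd.fst.norm_sq ℝ
  have hv : ContDiff ℝ (⊤ : ℕ∞) fun z : Z d => ‖z.2.2‖ ^ 2 := contDiff_snd.snd.norm_sq ℝ
  exact ((contDiff_fst.add contDiff_const).mul (contDiff_const.sub hx)).mul
    (contDiff_const.sub hv)

lemma boxBump_eq_zero (hz : z ∈ kineticBox d R) (hzin : z ∉ innerRegion d R) :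
    boxBump R z = 0 := by
  obtain ⟨⟨ht, -⟩, hx, hv⟩ := mem_kineticBox.1 hz
  rw [mem_innerRegion, not_and_or, not_and_or, not_lt, not_lt, not_lt] at hzin
  rcases hzin with ht' | hx' | hv'
  · simp [boxBump, le_antisymm ht' ht]
  · simp [boxBump, le_antisymm hx hx']
  · simp [boxBump, le_antisymm hv hv']

lemma boxBump_pos (hz : z ∈ innerRegion d R) : 0 < boxBump R z := by
  obtain ⟨ht, hx, hv⟩ := mem_innerRegion.1 hz
  have hx' : ‖z.2.1‖ ^ 2 < R ^ 2 := pow_lt_pow_left₀ hx (norm_nonneg _) two_ne_zero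
  have hv' : ‖z.2.2‖ ^ 2 < R ^ 2 := pow_lt_pow_left₀ hv (norm_nonneg _) two_ne_zero
  exact mul_pos (mul_pos (by linarith) (sub_pos.2 hx')) (sub_pos.2 hv')

lemma exists_isBernsteinCutoff (hρ : 0 < ρ) (hρR : ρ < R) :
    ∃ χ : Z d → ℝ, IsBernsteinCutoff χ R ∧ ∃ η > 0, ∀ z ∈ kineticBox d ρ, η ≤ χ z := by
  obtain ⟨ε, hε, hcutoff⟩ := exists_pos_smul_isBernsteinCutoff (d := d) (contDiff_boxBump R)
    fun _ => boxBump_eq_zero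
  obtain ⟨w, hw, hmin⟩ := (isCompact_kineticBox d ρ).exists_isMinOn ⟨0, zero_mem_kineticBox hρ.le⟩
    hcutoff.smooth.continuous.continuousOn
  exact ⟨ε • boxBump R, hcutoff, _,
    smul_pos hε (boxBump_pos (kineticBox_subset_innerRegion hρR hw)), hmin⟩

/-- The function `101 g² + 8 α² + (α + β)²` to which the maximum principle is applied, with
`α = χ ∂_{v_i} g` and `β = χ³ ∂_{x_i} g`. Its cross term `2 α β` yields the decay in `∂_{x_i} g`
that the degenerate operator `L` does not provide directly. -/
def bernsteinFun (g α β : Z d → ℝ) : Z d → ℝ :=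
  (101 : ℝ) • (g * g) + (8 : ℝ) • (α * α) + (α + β) * (α + β)

lemma SmoothOn.bernsteinFun (hg : SmoothOn g U) (hα : SmoothOn α U) (hβ : SmoothOn β U) :
    SmoothOn (bernsteinFun g α β) U :=
  SmoothOn.add (((hg.mul hg).const_smul (101 : ℝ)).add ((hα.mul hα).const_smul (8 : ℝ)))
    ((hα.add hβ).mul (hα.add hβ))

lemma kolmogorovOp_bernsteinFun (hU : IsOpen U) (hg : SmoothOn g U) (hα : SmoothOn α U)
    (hβ : SmoothOn β U) (hz : z ∈ U) :
    kolmogorovOp (bernsteinFun g α β) z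
      = 202 * (g z * kolmogorovOp g z - ‖velocityGradient g z‖ ^ 2)
        + 16 * (α z * kolmogorovOp α z - ‖velocityGradient α z‖ ^ 2)
        + 2 * ((α z + β z) * (kolmogorovOp α z + kolmogorovOp β z)
          - ‖velocityGradient α z + velocityGradient β z‖ ^ 2) := by
  have hgg : SmoothOn ((101 : ℝ) • (g * g)) U := (hg.mul hg).const_smul (101 : ℝ)
  have hαα : SmoothOn ((8 : ℝ) • (α * α)) U := (hα.mul hα).const_smul (8 : ℝ)
  have hαβ := hα.add hβ
  rw [bernsteinFun, kolmogorovOp_add hU (hgg.add hαα) (hαβ.mul hαβ) hz,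
    kolmogorovOp_add hU hgg hαα hz, kolmogorovOp_smul, kolmogorovOp_smul, Pi.smul_apply,
    Pi.smul_apply, kolmogorovOp_mul_self hU hg hz, kolmogorovOp_mul_self hU hα hz,
    kolmogorovOp_mul_self hU hαβ hz, kolmogorovOp_add hU hα hβ hz,
    velocityGradient_add (hα.differentiableAt hU hz) (hβ.differentiableAt hU hz)]
  simp only [Pi.add_apply, smul_eq_mul]
  ring

lemma bernstein_quadratic_le {V : Type*} [NormedAddCommGroup V] [InnerProductSpace ℝ V]
    {k S T : V} {m P Q : ℝ} (hm : |m| ≤ 1 / 250) (hk : ‖k‖ ^ 2 ≤ 1 / 250) :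
    16 * (P * (-Q + (m + 2 * ‖k‖ ^ 2) * P - 2 * inner ℝ k S) - ‖S‖ ^ 2)
      + 2 * ((P + Q) * (-Q + (m + 2 * ‖k‖ ^ 2) * P - 2 * inner ℝ k S
        + ((3 * m + 12 * ‖k‖ ^ 2) * Q - 6 * inner ℝ k T)) - ‖S + T‖ ^ 2)
      ≤ 201 * P ^ 2 - Q ^ 2 := by
  have hsq (c : ℝ) (W : V) : 0 ≤ c ^ 2 * ‖k‖ ^ 2 + 2 * (c * inner ℝ k W) + ‖W‖ ^ 2 := by
    have := norm_add_sq_real (c • k) W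
    rw [norm_smul, mul_pow, Real.norm_eq_abs, sq_abs, inner_smul_left] at this
    exact this ▸ sq_nonneg _
  have hST : 0 ≤ 16 * ‖S‖ ^ 2 + 8 * inner ℝ S T + ‖T‖ ^ 2 := by
    have := norm_add_sq_real ((4 : ℝ) • S) T
    rw [norm_smul, inner_smul_left] at this
    norm_num at this
    nlinarith [sq_nonneg ‖(4 : ℝ) • S + T‖]
  obtain ⟨hm₁, hm₂⟩ := abs_le.1 hm
  have hcross : (8 * m + 28 * ‖k‖ ^ 2 - 18) * (P * Q) ≤ Q ^ 2 / 2 + 200 * P ^ 2 := by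
    have hlower : 0 ≤ 20 + (8 * m + 28 * ‖k‖ ^ 2 - 18) := by linarith [sq_nonneg ‖k‖]
    have hupper : 0 ≤ 20 - (8 * m + 28 * ‖k‖ ^ 2 - 18) := by linarith
    linarith [mul_nonneg hlower (sq_nonneg (Q - 20 * P)),
      mul_nonneg hupper (sq_nonneg (Q + 20 * P))]
  have hP : (18 * m + 144 * ‖k‖ ^ 2) * P ^ 2 ≤ P ^ 2 :=
    mul_le_of_le_one_left (sq_nonneg P) (by linarith)
  have hQ : (6 * m + 100 * ‖k‖ ^ 2) * Q ^ 2 ≤ Q ^ 2 / 2 := by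
    rw [div_eq_inv_mul]
    exact mul_le_mul_of_nonneg_right (by linarith) (sq_nonneg Q)
  rw [norm_add_sq_real]
  linarith [hsq (12 * Q) T, hsq (12 * P) T, hsq (2 * Q) S, hsq (2 * P) S, sq_nonneg ‖T‖]

lemma kolmogorovOp_bernsteinFun_le (hg : IsKolmogorovSolution g U) (hχ : SmoothOn χ U)
    (hz : z ∈ U) (hm : |χ z * kolmogorovOp χ z| ≤ 1 / 250)
    (hk : ‖velocityGradient χ z‖ ^ 2 ≤ 1 / 250) (i : Fin d) :
    kolmogorovOp
        (bernsteinFun g (χ * dirDeriv (unitV i) g) (χ ^ 3 * dirDeriv (unitX i) g)) z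
      ≤ -(dirDeriv (unitV i) g z ^ 2 + (χ z ^ 2 * dirDeriv (unitX i) g z) ^ 2) := by
  have hU := hg.isOpen
  have hp : SmoothOn (dirDeriv (unitV i) g) U := hg.smooth.dirDeriv hU _
  have hLp : kolmogorovOp (dirDeriv (unitV i) g) z = -dirDeriv (unitX i) g z :=
    hg.kolmogorovOp_dirDeriv hz _
  have hq : IsKolmogorovSolution (dirDeriv (unitX i) g) U := hg.dirDeriv rfl
  have hLα : χ z * kolmogorovOp (χ * dirDeriv (unitV i) g) z
      = -(χ z ^ 2 * dirDeriv (unitX i) g z)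
        + (χ z * kolmogorovOp χ z + 2 * ‖velocityGradient χ z‖ ^ 2) * dirDeriv (unitV i) g z
        - 2 * inner ℝ (velocityGradient χ z) (velocityGradient (χ * dirDeriv (unitV i) g) z) := by
    rw [mul_kolmogorovOp_mul hU hχ hp hz, hLp, mul_neg]
  have hLβ : χ z * kolmogorovOp (χ ^ 3 * dirDeriv (unitX i) g) z
      = (3 * (χ z * kolmogorovOp χ z) + 12 * ‖velocityGradient χ z‖ ^ 2)
          * (χ z ^ 2 * dirDeriv (unitX i) g z)
        - 6 * inner ℝ (velocityGradient χ z)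
          (velocityGradient (χ ^ 3 * dirDeriv (unitX i) g) z) := by
    rw [mul_kolmogorovOp_pow_mul hU hχ hq.smooth hz 2, hq.eq_zero hz, Pi.zero_apply]
    push_cast
    ring
  have hgrad : dirDeriv (unitV i) g z ^ 2 ≤ ‖velocityGradient g z‖ ^ 2 :=
    sq_le_sq.2 ((PiLp.norm_apply_le (velocityGradient g z) i).trans (le_abs_self _))
  have hquad := bernstein_quadratic_le (k := velocityGradient χ z)
    (S := velocityGradient (χ * dirDeriv (unitV i) g) z)
    (T := velocityGradient (χ ^ 3 * dirDeriv (unitX i) g) z)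
    (P := dirDeriv (unitV i) g z) (Q := χ z ^ 2 * dirDeriv (unitX i) g z) hm hk
  rw [kolmogorovOp_bernsteinFun hU hg.smooth (hχ.mul hp) ((hχ.pow 3).mul hq.smooth) hz,
    hg.eq_zero hz]
  simp only [Pi.mul_apply, Pi.pow_apply, Pi.zero_apply]
  linear_combination hquad + 202 * hgrad + (18 * dirDeriv (unitV i) g z
    + 2 * (χ z ^ 2 * dirDeriv (unitX i) g z)) * hLα
    + 2 * (dirDeriv (unitV i) g z + χ z ^ 2 * dirDeriv (unitX i) g z) * hLβ

lemma bernsteinFun_le (hg : IsKolmogorovSolution g U) (hR : kineticBox d R ⊆ U)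
    (hχ : IsBernsteinCutoff χ R) (hM : ∀ z ∈ kineticBox d R, |g z| ≤ M) (i : Fin d)
    (hz : z ∈ kineticBox d R) :
    bernsteinFun g (χ * dirDeriv (unitV i) g) (χ ^ 3 * dirDeriv (unitX i) g) z ≤ 101 * M ^ 2 := by
  have hU := hg.isOpen
  have hχU : SmoothOn χ U := hχ.smooth.contDiffOn
  have hW : SmoothOn
      (bernsteinFun g (χ * dirDeriv (unitV i) g) (χ ^ 3 * dirDeriv (unitX i) g)) U :=
    hg.smooth.bernsteinFun (hχU.mul (hg.smooth.dirDeriv hU _))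
      ((hχU.pow 3).mul (hg.smooth.dirDeriv hU _))
  obtain ⟨w, hw, hmax⟩ :=
    (isCompact_kineticBox d R).exists_isMaxOn ⟨z, hz⟩ (hW.continuousOn.mono hR)
  have hvanish : χ w * dirDeriv (unitV i) g w = 0 ∧ χ w ^ 3 * dirDeriv (unitX i) g w = 0 := by
    by_cases hin : w ∈ innerRegion d R
    · have hnonneg := kolmogorovOp_nonneg_of_isMaxOn_kineticBox hU hW hR hw hmax hin
      have hle := kolmogorovOp_bernsteinFun_le hg hχU (hR hw) (hχ.abs_mul_kolmogorovOp_le w hw)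
        (hχ.norm_velocityGradient_sq_le w hw) i
      have hsum := (add_eq_zero_iff_of_nonneg (sq_nonneg _) (sq_nonneg _)).1
        (le_antisymm (neg_nonneg.1 (hnonneg.trans hle)) (by positivity))
      rw [sq_eq_zero_iff, sq_eq_zero_iff] at hsum
      exact ⟨by rw [hsum.1, mul_zero], by rw [pow_succ', mul_assoc, hsum.2, mul_zero]⟩
    · simp [hχ.eq_zero w hw hin]
  refine (hmax hz).trans ?_
  have hgM : g w ^ 2 ≤ M ^ 2 := sq_le_sq.2 ((hM w hw).trans (le_abs_self M))
  simp only [bernsteinFun, Pi.add_apply, Pi.mul_apply, Pi.pow_apply, Pi.smul_apply, smul_eq_mul,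
    hvanish.1, hvanish.2]
  linarith

lemma abs_cutoff_mul_dirDeriv_le (hg : IsKolmogorovSolution g U) (hR : kineticBox d R ⊆ U)
    (hχ : IsBernsteinCutoff χ R) (hM : ∀ z ∈ kineticBox d R, |g z| ≤ M) (i : Fin d)
    (hz : z ∈ kineticBox d R) :
    |χ z * dirDeriv (unitV i) g z| ≤ 4 * M ∧ |χ z ^ 3 * dirDeriv (unitX i) g z| ≤ 11 * M := by
  have hM₀ : 0 ≤ M := (abs_nonneg _).trans (hM z hz)
  have hW := bernsteinFun_le hg hR hχ hM i hz
  simp only [bernsteinFun, Pi.add_apply, Pi.mul_apply, Pi.pow_apply, Pi.smul_apply,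
    smul_eq_mul] at hW
  set α := χ z * dirDeriv (unitV i) g z
  set β := χ z ^ 3 * dirDeriv (unitX i) g z
  constructor <;> refine abs_le_of_sq_le_sq ?_ (by positivity)
  · linarith [mul_self_nonneg (g z), mul_self_nonneg (α + β), sq_nonneg M]
  · linarith [mul_self_nonneg (g z), sq_nonneg (9 * α + β), sq_nonneg M]

end Bernstein

section InteriorBounds

variable {S T : (Z d → ℝ) → Z d → ℝ} {g : Z d → ℝ} {U : Set (Z d)} {z : Z d}

/-- The operator `T` satisfies interior estimates on solutions: on a smaller box, `T g` is
controlled by the supremum of `|g|` on a larger one. -/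
def HasInteriorBound (T : (Z d → ℝ) → Z d → ℝ) : Prop :=
  ∀ ⦃ρ R : ℝ⦄, 0 < ρ → ρ < R → ∃ C : ℝ, ∀ ⦃g : Z d → ℝ⦄ ⦃U : Set (Z d)⦄ ⦃M : ℝ⦄,
    IsKolmogorovSolution g U → kineticBox d R ⊆ U → (∀ z ∈ kineticBox d R, |g z| ≤ M) →
      ∀ z ∈ kineticBox d ρ, |T g z| ≤ C * M

/-- The operator `T` maps solutions of the Kolmogorov equation to solutions. -/
def PreservesSolutions (T : (Z d → ℝ) → Z d → ℝ) : Prop :=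
  ∀ ⦃g : Z d → ℝ⦄ ⦃U : Set (Z d)⦄, IsKolmogorovSolution g U → IsKolmogorovSolution (T g) U

lemma hasInteriorBound_id : HasInteriorBound (id : (Z d → ℝ) → Z d → ℝ) := fun _ _ _ hρR =>
  ⟨1, fun _ _ M _ _ hM z hz => (hM z (kineticBox_mono hρR.le hz)).trans_eq (one_mul M).symm⟩

lemma HasInteriorBound.congr (hS : HasInteriorBound S)
    (hST : ∀ ⦃g U⦄, IsKolmogorovSolution g U → Set.EqOn (T g) (S g) U) : HasInteriorBound T := by
  intro ρ R hρ hρR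
  obtain ⟨C, hC⟩ := hS hρ hρR
  refine ⟨C, fun g U M hg hU hM z hz => ?_⟩
  rw [hST hg (hU (kineticBox_mono hρR.le hz))]
  exact hC hg hU hM z hz

lemma HasInteriorBound.add (hS : HasInteriorBound S) (hT : HasInteriorBound T) :
    HasInteriorBound (S + T) := by
  intro ρ R hρ hρR
  obtain ⟨C, hC⟩ := hS hρ hρR
  obtain ⟨D, hD⟩ := hT hρ hρR
  refine ⟨C + D, fun g U M hg hU hM z hz => ?_⟩
  rw [add_mul]
  exact (abs_add_le _ _).trans (add_le_add (hC hg hU hM z hz) (hD hg hU hM z hz))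

lemma HasInteriorBound.sum {ι : Type*} {s : Finset ι} {T : ι → (Z d → ℝ) → Z d → ℝ}
    (hT : ∀ i ∈ s, HasInteriorBound (T i)) : HasInteriorBound (∑ i ∈ s, T i) :=
  Finset.sum_induction T HasInteriorBound (fun _ _ => HasInteriorBound.add)
    (fun _ _ _ _ => ⟨0, by simp⟩) hT

lemma HasInteriorBound.mul (hT : HasInteriorBound T) {w : Z d → ℝ} (hw : Continuous w) :
    HasInteriorBound fun g => w * T g := by
  intro ρ R hρ hρR
  obtain ⟨C, hC⟩ := hT hρ hρR
  obtain ⟨A, hA⟩ := (isCompact_kineticBox d ρ).exists_bound_of_continuousOn hw.continuousOn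
  refine ⟨A * C, fun g U M hg hU hM z hz => ?_⟩
  change |w z * T g z| ≤ A * C * M
  rw [abs_mul, mul_assoc]
  exact mul_le_mul (hA z hz) (hC hg hU hM z hz) (abs_nonneg _) ((norm_nonneg _).trans (hA z hz))

lemma HasInteriorBound.comp (hS : HasInteriorBound S) (hT : HasInteriorBound T)
    (hT' : PreservesSolutions T) : HasInteriorBound (S ∘ T) := by
  intro ρ R hρ hρR
  obtain ⟨σ, hρσ, hσR⟩ := exists_between hρR
  obtain ⟨C, hC⟩ := hS hρ hρσ
  obtain ⟨D, hD⟩ := hT (hρ.trans hρσ) hσR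
  refine ⟨C * D, fun g U M hg hU hM z hz => ?_⟩
  rw [mul_assoc]
  exact hC (hT' hg) ((kineticBox_mono hσR.le).trans hU) (hD hg hU hM) z hz

lemma PreservesSolutions.foldr {ι : Type*} {F : ι → (Z d → ℝ) → Z d → ℝ} {l : List ι}
    (hF : ∀ i ∈ l, PreservesSolutions (F i)) : PreservesSolutions fun g => l.foldr F g := by
  induction l with
  | nil => exact fun _ _ hg => hg
  | cons i l ih =>
    rw [List.forall_mem_cons] at hF
    exact fun _ _ hg => hF.1 (ih hF.2 hg)

lemma HasInteriorBound.foldr {ι : Type*} {F : ι → (Z d → ℝ) → Z d → ℝ} {l : List ι}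
    (hF : ∀ i ∈ l, HasInteriorBound (F i)) (hF' : ∀ i ∈ l, PreservesSolutions (F i)) :
    HasInteriorBound fun g => l.foldr F g := by
  induction l with
  | nil => exact hasInteriorBound_id
  | cons i l ih =>
    rw [List.forall_mem_cons] at hF hF'
    exact hF.1.comp (ih hF.2 hF'.2) (PreservesSolutions.foldr hF'.2)

lemma hasInteriorBound_dirDeriv_unitV (i : Fin d) : HasInteriorBound (dirDeriv (unitV i)) := by
  intro ρ R hρ hρR
  obtain ⟨χ, hχ, η, hη, hχη⟩ := exists_isBernsteinCutoff (d := d) hρ hρR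
  refine ⟨4 / η, fun g U M hg hU hM z hz => ?_⟩
  have hle := (abs_cutoff_mul_dirDeriv_le hg hU hχ hM i (kineticBox_mono hρR.le hz)).1
  rw [abs_mul, abs_of_pos (hη.trans_le (hχη z hz))] at hle
  rw [div_mul_eq_mul_div, le_div_iff₀' hη]
  exact (mul_le_mul_of_nonneg_right (hχη z hz) (abs_nonneg _)).trans hle

lemma hasInteriorBound_dirDeriv_unitX (i : Fin d) : HasInteriorBound (dirDeriv (unitX i)) := by
  intro ρ R hρ hρR
  obtain ⟨χ, hχ, η, hη, hχη⟩ := exists_isBernsteinCutoff (d := d) hρ hρR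
  refine ⟨11 / η ^ 3, fun g U M hg hU hM z hz => ?_⟩
  have hle := (abs_cutoff_mul_dirDeriv_le hg hU hχ hM i (kineticBox_mono hρR.le hz)).2
  rw [abs_mul, abs_of_pos (pow_pos (hη.trans_le (hχη z hz)) 3)] at hle
  rw [div_mul_eq_mul_div, le_div_iff₀' (pow_pos hη 3)]
  exact (mul_le_mul_of_nonneg_right (pow_le_pow_left₀ hη.le (hχη z hz) 3) (abs_nonneg _)).trans hle

lemma hasInteriorBound_galilean (i : Fin d) : HasInteriorBound (galilean i) :=
  (hasInteriorBound_dirDeriv_unitV i).add ((hasInteriorBound_dirDeriv_unitX i).mul continuous_fst)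

lemma preservesSolutions_galilean (i : Fin d) : PreservesSolutions (galilean i) :=
  fun _ _ hg => hg.galilean i

lemma preservesSolutions_dirDeriv {e : Z d} (he : e.2.2 = 0) : PreservesSolutions (dirDeriv e) :=
  fun _ _ hg => hg.dirDeriv he

lemma dirDeriv_unitV_galilean (hU : IsOpen U) (hg : SmoothOn g U) (hz : z ∈ U) (i : Fin d) :
    dirDeriv (unitV i) (galilean i g) z = dirDeriv (unitV i) (dirDeriv (unitV i) g) z
      + z.1 * dirDeriv (unitV i) (dirDeriv (unitX i) g) z := by
  have hv := (hg.dirDeriv hU (unitV i)).differentiableAt hU hz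
  have hx := (hg.dirDeriv hU (unitX i)).differentiableAt hU hz
  rw [galilean, dirDeriv_add hv (differentiableAt_fst.mul hx), dirDeriv_mul differentiableAt_fst hx,
    dirDeriv_fst]
  simp [unitV]

lemma IsKolmogorovSolution.dirDeriv_unitT (hg : IsKolmogorovSolution g U) (hz : z ∈ U) :
    Kinetic.dirDeriv unitT g z = ∑ i, (Kinetic.dirDeriv (unitV i) (Kinetic.galilean i g) z
      + -z.1 * Kinetic.dirDeriv (unitV i) (Kinetic.dirDeriv (unitX i) g) z
      + -z.2.2 i * Kinetic.dirDeriv (unitX i) g z) := by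
  have heq := hg.eq_zero hz
  rw [kolmogorovOp, Pi.sub_apply, transport_eq_sum (hg.smooth.differentiableAt hg.isOpen hz),
    velocityLaplacian, Finset.sum_apply, Pi.zero_apply, sub_eq_zero] at heq
  rw [eq_sub_of_add_eq heq, ← Finset.sum_sub_distrib]
  refine Finset.sum_congr rfl fun i _ => ?_
  rw [dirDeriv_unitV_galilean hg.isOpen hg.smooth hz]
  ring

lemma hasInteriorBound_dirDeriv_unitT : HasInteriorBound (dirDeriv (unitT : Z d)) := by
  have hterm (i : Fin d) : HasInteriorBound ((dirDeriv (unitV i) ∘ galilean i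
      + fun g => (fun z : Z d => -z.1) * (dirDeriv (unitV i) ∘ dirDeriv (unitX i)) g)
      + fun g => (fun z : Z d => -z.2.2 i) * dirDeriv (unitX i) g) :=
    (((hasInteriorBound_dirDeriv_unitV i).comp (hasInteriorBound_galilean i)
      (preservesSolutions_galilean i)).add (((hasInteriorBound_dirDeriv_unitV i).comp
        (hasInteriorBound_dirDeriv_unitX i) (preservesSolutions_dirDeriv rfl)).mul
          (by fun_prop))).add ((hasInteriorBound_dirDeriv_unitX i).mul (by fun_prop))
  refine (HasInteriorBound.sum (s := Finset.univ) fun i _ => hterm i).congr fun g U hg z hz => ?_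
  rw [hg.dirDeriv_unitT hz]
  simp only [Finset.sum_apply, Pi.add_apply, Pi.mul_apply, Function.comp_apply]

lemma iterDirDeriv_map_unitV_eq_foldr_galilean (l : List (Fin d)) (f : Z d → ℝ) (hz : z.1 = 0) :
    iterDirDeriv (l.map unitV) f z = l.foldr galilean f z := by
  induction l generalizing z with
  | nil => rfl
  | cons i l ih =>
    have hline (s : ℝ) : iterDirDeriv (l.map unitV) f (z + s • unitV i)
        = l.foldr galilean f (z + s • unitV i) := ih (by simp [unitV, hz])
    have hderiv : dirDeriv (unitV i) (iterDirDeriv (l.map unitV) f) z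
        = dirDeriv (unitV i) (l.foldr galilean f) z := by
      simp only [dirDeriv, lineDeriv, hline]
    rw [List.foldr_cons, galilean, Pi.add_apply, Pi.mul_apply, hz, zero_mul, add_zero, ← hderiv]
    rfl

/-- The list of directions of the mixed derivative with `n` derivatives in `t`, followed by
derivatives in the coordinates of `x` and `v` listed in `lx` and `lv`. -/
def mixedDirections (n : ℕ) (lx lv : List (Fin d)) : List (Z d) :=
  List.replicate n unitT ++ lx.map unitX ++ lv.map unitV

lemma exists_bound_iterDirDeriv_mixedDirections_zero (n : ℕ) (lx lv : List (Fin d)) {R : ℝ}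
    (hR : 0 < R) : ∃ C : ℝ, ∀ ⦃g : Z d → ℝ⦄ ⦃U : Set (Z d)⦄ ⦃M : ℝ⦄, IsKolmogorovSolution g U →
      kineticBox d R ⊆ U → (∀ z ∈ kineticBox d R, |g z| ≤ M) →
        |iterDirDeriv (mixedDirections n lx lv) g 0| ≤ C * M := by
  have htx : ∀ e ∈ List.replicate n unitT ++ lx.map unitX,
      HasInteriorBound (dirDeriv e) ∧ PreservesSolutions (dirDeriv (e : Z d)) := by
    intro e he
    rcases List.mem_append.1 he with ht | hx
    · obtain rfl := List.eq_of_mem_replicate ht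
      exact ⟨hasInteriorBound_dirDeriv_unitT, preservesSolutions_dirDeriv rfl⟩
    · obtain ⟨i, -, rfl⟩ := List.mem_map.1 hx
      exact ⟨hasInteriorBound_dirDeriv_unitX i, preservesSolutions_dirDeriv rfl⟩
  obtain ⟨C, hC⟩ := (HasInteriorBound.foldr (l := lv) (fun i _ => hasInteriorBound_galilean i)
    fun i _ => preservesSolutions_galilean i).comp
      (HasInteriorBound.foldr (fun e he => (htx e he).1) fun e he => (htx e he).2)
      (PreservesSolutions.foldr fun e he => (htx e he).2) (half_pos hR) (half_lt_self hR)
  refine ⟨C, fun g U M hg hU hM => ?_⟩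
  rw [mixedDirections, iterDirDeriv_perm List.perm_append_comm hg.isOpen hg.smooth
    (hU (zero_mem_kineticBox hR.le)), iterDirDeriv_append,
    iterDirDeriv_map_unitV_eq_foldr_galilean _ _ rfl]
  exact hC hg hU hM 0 (zero_mem_kineticBox (half_pos hR).le)

end InteriorBounds

section PartialDerivatives

variable {g : Z d → ℝ} {U : Set (Z d)} {z : Z d}

lemma pt_eq_dirDeriv (g : Z d → ℝ) : pt g = dirDeriv unitT g := by
  funext z
  have hshift := deriv_comp_const_add (fun s => g (s, z.2.1, z.2.2)) z.1 0
  rw [add_zero] at hshift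
  simp only [pt, ← hshift, dirDeriv, lineDeriv, unitT, Prod.smul_mk, Prod.add_def, smul_eq_mul,
    mul_one, smul_zero, add_zero]

lemma px_eq_dirDeriv (g : Z d → ℝ) (i : Fin d) : px g i = dirDeriv (unitX i) g := by
  funext z
  simp only [px, dirDeriv, lineDeriv, unitX, Prod.smul_mk, Prod.add_def, smul_zero, add_zero]

lemma pv_eq_dirDeriv (g : Z d → ℝ) (i : Fin d) : pv g i = dirDeriv (unitV i) g := by
  funext z
  simp only [pv, dirDeriv, lineDeriv, unitV, Prod.smul_mk, Prod.add_def, smul_zero, add_zero]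

lemma isKolmogorovSolution_of_Yop_eq (hU : IsOpen U) (hg : SmoothOn g U)
    (heq : ∀ z ∈ U, Yop g z = ∑ i, pvv g i i z) : IsKolmogorovSolution g U where
  isOpen := hU
  smooth := hg
  eq_zero z hz := by
    rw [kolmogorovOp, Pi.sub_apply, transport_eq_sum (hg.differentiableAt hU hz),
      velocityLaplacian, Finset.sum_apply, Pi.zero_apply, sub_eq_zero]
    simpa only [Yop, pvv, pt_eq_dirDeriv, px_eq_dirDeriv, pv_eq_dirDeriv] using heq z hz

/-- The coordinates of a multi-index `a` in increasing order, `i` being repeated `a i` times. -/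
def indexList (a : Fin d → ℕ) : List (Fin d) :=
  (List.finRange d).flatMap fun i => List.replicate (a i) i

lemma length_indexList (a : Fin d → ℕ) : (indexList a).length = ∑ i, a i := by
  simp only [indexList, List.length_flatMap, List.length_replicate, Fin.sum_univ_def]

lemma foldr_replicate {α β : Type*} (F : α → β → β) (n : ℕ) (x : α) (y : β) :
    (List.replicate n x).foldr F y = (F x)^[n] y := by
  induction n with
  | zero => rfl
  | succ n ih => rw [List.replicate_succ, List.foldr_cons, ih, Function.iterate_succ_apply']

lemma foldr_comp_ofFn_iterate {α : Type*} (F : Fin d → α → α) (a : Fin d → ℕ) (x : α) :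
    (List.ofFn fun i => (F i)^[a i]).foldr (· ∘ ·) id x = (indexList a).foldr F x := by
  rw [indexList, List.ofFn_eq_map]
  induction List.finRange d with
  | nil => rfl
  | cons i l ih =>
    rw [List.map_cons, List.foldr_cons, Function.comp_apply, ih, List.flatMap_cons,
      List.foldr_append, foldr_replicate]

lemma ptIter_pxMulti_pvMulti_eq_iterDirDeriv (n : ℕ) (a b : Fin d → ℕ) (g : Z d → ℝ) :
    ptIter n (pxMulti a (pvMulti b g))
      = iterDirDeriv (mixedDirections n (indexList a) (indexList b)) g := by
  simp only [ptIter, pxMulti, pvMulti, foldr_comp_ofFn_iterate, pt_eq_dirDeriv, px_eq_dirDeriv,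
    pv_eq_dirDeriv, mixedDirections, iterDirDeriv, List.foldr_append, List.foldr_map,
    foldr_replicate]

end PartialDerivatives

section Dilation

variable {g : Z d → ℝ} {U : Set (Z d)}

/-- The kinetic dilation `(t, x, v) ↦ (r² t, r³ x, r v)`. -/
def dilation (r : ℝ) : Z d →L[ℝ] Z d :=
  (r ^ 2 • ContinuousLinearMap.id ℝ ℝ).prodMap
    ((r ^ 3 • ContinuousLinearMap.id ℝ (E d)).prodMap (r • ContinuousLinearMap.id ℝ (E d)))

lemma dilation_apply (r : ℝ) (z : Z d) :
    dilation r z = (r ^ 2 * z.1, r ^ 3 • z.2.1, r • z.2.2) := rfl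

lemma dilation_unitT (r : ℝ) : dilation r (unitT : Z d) = r ^ 2 • unitT := by
  simp [dilation_apply, unitT]

lemma dilation_unitX (r : ℝ) (i : Fin d) : dilation r (unitX i) = r ^ 3 • unitX i := by
  simp [dilation_apply, unitX]

lemma dilation_unitV (r : ℝ) (i : Fin d) : dilation r (unitV i) = r • unitV i := by
  simp [dilation_apply, unitV]

lemma kolmogorovOp_comp_dilation (r : ℝ) (f : Z d → ℝ) :
    kolmogorovOp (f ∘ dilation r) = r ^ 2 • (kolmogorovOp f ∘ dilation r) := by
  funext z
  have hfield : dilation r ((1, z.2.2, 0) : Z d) = r ^ 2 • (1, (dilation r z).2.2, 0) := by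
    simp [dilation_apply, smul_smul, pow_succ]
  have htransport : dirDeriv (1, z.2.2, 0) (f ∘ dilation r) z
      = r ^ 2 * dirDeriv (1, (dilation r z).2.2, 0) f (dilation r z) := by
    rw [dirDeriv_comp_linearMap, hfield, dirDeriv_smul_left]
    rfl
  have hsecond (i : Fin d) : dirDeriv (unitV i) (dirDeriv (unitV i) (f ∘ dilation r)) z
      = r ^ 2 * dirDeriv (unitV i) (dirDeriv (unitV i) f) (dilation r z) := by
    rw [dirDeriv_comp_linearMap, dirDeriv_comp_linearMap, dilation_unitV, dirDeriv_smul_left,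
      dirDeriv_smul_left, dirDeriv_smul, smul_smul, ← sq]
    rfl
  rw [kolmogorovOp_apply, htransport, Finset.sum_congr rfl fun i _ => hsecond i, ← Finset.mul_sum,
    ← mul_sub, ← kolmogorovOp_apply]
  rfl

lemma IsKolmogorovSolution.comp_dilation (hg : IsKolmogorovSolution g U) (r : ℝ) :
    IsKolmogorovSolution (g ∘ dilation r) (dilation r ⁻¹' U) where
  isOpen := hg.isOpen.preimage (dilation r).continuous
  smooth := hg.smooth.comp_continuousLinearMap (dilation r)
  eq_zero z hz := by
    rw [kolmogorovOp_comp_dilation, Pi.smul_apply, Function.comp_apply, hg.eq_zero hz]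
    exact smul_zero _

lemma mapsTo_dilation_kineticBox {r R : ℝ} (hr : 0 < r) (hR : R < 1) :
    Set.MapsTo (dilation r) (kineticBox d R) (kCyl r (zOrigin d)) := by
  intro z hz
  obtain ⟨⟨hRt, ht⟩, hx, hv⟩ := mem_kineticBox.1 hz
  simp only [kCyl, zOrigin, dilation_apply, Set.mem_ofPred_eq, sub_zero, smul_zero, norm_smul,
    norm_pow, Real.norm_of_nonneg hr.le]
  refine ⟨?_, ?_, ?_, ?_⟩
  · nlinarith [pow_pos hr 2]
  · exact mul_nonpos_of_nonneg_of_nonpos (sq_nonneg r) ht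
  · exact mul_lt_of_lt_one_right (pow_pos hr 3) (hx.trans_lt hR)
  · exact mul_lt_of_lt_one_right hr (hv.trans_lt hR)

lemma iterDirDeriv_mixedDirections_comp_dilation (n : ℕ) (lx lv : List (Fin d)) (r : ℝ)
    (g : Z d → ℝ) :
    iterDirDeriv (mixedDirections n lx lv) (g ∘ dilation r)
      = r ^ (2 * n + 3 * lx.length + lv.length)
        • (iterDirDeriv (mixedDirections n lx lv) g ∘ dilation r) := by
  have hv : ∀ e ∈ lv.map unitV, dilation r e = r • e := by
    simp only [List.forall_mem_map, dilation_unitV, implies_true]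
  have hx : ∀ e ∈ lx.map unitX, dilation r e = r ^ 3 • e := by
    simp only [List.forall_mem_map, dilation_unitX, implies_true]
  have ht : ∀ e ∈ List.replicate n (unitT : Z d), dilation r e = r ^ 2 • e := fun e he => by
    rw [List.eq_of_mem_replicate he, dilation_unitT]
  have hscale := iterDirDeriv_smul_comp_of_eigenvectors (f := g) _ hv 1
  rw [one_smul] at hscale
  rw [mixedDirections, iterDirDeriv_append, iterDirDeriv_append, hscale,
    iterDirDeriv_smul_comp_of_eigenvectors _ hx, iterDirDeriv_smul_comp_of_eigenvectors _ ht,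
    ← iterDirDeriv_append, ← iterDirDeriv_append, List.length_map, List.length_map,
    List.length_replicate]
  congr 1
  ring

end Dilation

section ScaledBound

lemma abs_le_toReal_supAbs {Q : Set (Z d)} {h : Z d → ℝ} {z : Z d} (hQ : supAbs Q h ≠ ⊤)
    (hz : z ∈ Q) : |h z| ≤ (supAbs Q h).toReal :=
  (ENNReal.ofReal_le_iff_le_toReal hQ).1 (le_iSup₂ (f := fun y _ => ENNReal.ofReal |h y|) z hz)

lemma exists_pos_bound_iterDirDeriv_mixedDirections (n : ℕ) (lx lv : List (Fin d)) :
    ∃ C : ℝ, 0 < C ∧ ∀ ⦃r : ℝ⦄ ⦃g : Z d → ℝ⦄ ⦃U : Set (Z d)⦄ ⦃M : ℝ⦄, 0 < r →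
      IsKolmogorovSolution g U → kCyl r (zOrigin d) ⊆ U →
        (∀ z ∈ kCyl r (zOrigin d), |g z| ≤ M) →
          |iterDirDeriv (mixedDirections n lx lv) g (zOrigin d)|
            ≤ C * M / r ^ (2 * n + 3 * lx.length + lv.length) := by
  obtain ⟨C, hC⟩ := exists_bound_iterDirDeriv_mixedDirections_zero n lx lv
    (half_pos (zero_lt_one (α := ℝ)))
  refine ⟨max C 1, zero_lt_one.trans_le (le_max_right C 1), fun r g U M hr hg hU hM => ?_⟩
  have hmaps := mapsTo_dilation_kineticBox (d := d) hr (half_lt_self (zero_lt_one (α := ℝ)))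
  have hbound := hC (hg.comp_dilation r) (fun z hz => hU (hmaps hz)) fun z hz => hM _ (hmaps hz)
  have hM₀ : 0 ≤ M :=
    (abs_nonneg _).trans (hM _ (hmaps (zero_mem_kineticBox (half_pos zero_lt_one).le)))
  rw [iterDirDeriv_mixedDirections_comp_dilation, Pi.smul_apply, Function.comp_apply, map_zero,
    smul_eq_mul, abs_mul, abs_of_pos (pow_pos hr _)] at hbound
  rw [le_div_iff₀' (pow_pos hr _)]
  exact hbound.trans (mul_le_mul_of_nonneg_right (le_max_left C 1) hM₀)

end ScaledBound

end Kinetic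

theorem kolmogorov_derivative_bounds_general (d n : ℕ) (a b : Fin d → ℕ) :
    ∃ C : ℝ, 0 < C ∧
      ∀ (r : ℝ), 0 < r →
        ∀ (g : Z d → ℝ) (U : Set (Z d)), IsOpen U →
          kCyl r (zOrigin d) ⊆ U →
          ContDiffOn ℝ (⊤ : ℕ∞) g U →
          (∀ z ∈ U, Yop g z = ∑ i, pvv g i i z) →
          ENNReal.ofReal |ptIter n (pxMulti a (pvMulti b g)) (zOrigin d)|
            ≤ ENNReal.ofReal C * supAbs (kCyl r (zOrigin d)) g
              / ENNReal.ofReal (r ^ (2 * n + 3 * (∑ i, a i) + ∑ i, b i)) := by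
  obtain ⟨C, hC, hbound⟩ := Kinetic.exists_pos_bound_iterDirDeriv_mixedDirections n
    (Kinetic.indexList a) (Kinetic.indexList b)
  refine ⟨C, hC, fun r hr g U hU hQU hg heq => ?_⟩
  rcases eq_or_ne (supAbs (kCyl r (zOrigin d)) g) ⊤ with htop | hfin
  · rw [htop, ENNReal.mul_top (ENNReal.ofReal_pos.2 hC).ne',
      ENNReal.top_div_of_ne_top ENNReal.ofReal_ne_top]
    exact le_top
  · have hle := hbound hr (Kinetic.isKolmogorovSolution_of_Yop_eq hU hg heq) hQU fun z hz =>
      Kinetic.abs_le_toReal_supAbs hfin hz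
    rw [← Kinetic.ptIter_pxMulti_pvMulti_eq_iterDirDeriv, Kinetic.length_indexList,
      Kinetic.length_indexList] at hle
    refine (ENNReal.ofReal_le_ofReal hle).trans_eq ?_
    rw [ENNReal.ofReal_div_of_pos (pow_pos hr _), ENNReal.ofReal_mul hC.le,
      ENNReal.ofReal_toReal hfin]

/-- **Bounds on arbitrary derivatives at the origin** for solutions of the Kolmogorov
equation `(∂_t + v·∇_x) g = Δ_v g` on a neighbourhood of the closure of `Q_r`:
`|∂_t^n ∂_x^a ∂_v^b g(0)| ≤ C ‖g‖_{L^∞(Q_r)} / r^{2n+3|a|+|b|}` with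
`C = C(d, n, a, b)`. -/
theorem kolmogorov_derivative_bounds
    (d : ℕ) (hd : 1 ≤ d) (n : ℕ) (a b : Fin d → ℕ) :
    ∃ C : ℝ, 0 < C ∧
      ∀ (r : ℝ), 0 < r →
        ∀ (g : Z d → ℝ) (U : Set (Z d)), IsOpen U →
          closure (kCyl r (zOrigin d)) ⊆ U →
          ContDiffOn ℝ (⊤ : ℕ∞) g U →
          (∀ z ∈ U, Yop g z = ∑ i, pvv g i i z) →
          ENNReal.ofReal |ptIter n (pxMulti a (pvMulti b g)) (zOrigin d)|
            ≤ ENNReal.ofReal C * supAbs (kCyl r (zOrigin d)) g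
              / ENNReal.ofReal (r ^ (2 * n + 3 * (∑ i, a i) + ∑ i, b i)) := by
  obtain ⟨C, hC, hbound⟩ := kolmogorov_derivative_bounds_general d n a b
  exact ⟨C, hC, fun r hr g U hU hQU => hbound r hr g U hU (subset_closure.trans hQU)⟩
end
end
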